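/- Let P1 and P2 be n×n skew-symmetric matrix pencils such that orbᶜ(P1) covers orbᶜ(P2). Then r_0(P2) − r_0(P1) equals either 0 or 2; equivalently, nrk(P1) − nrk(P2) equals either 0 or 2. -/

import Mathlib

/-!
Basic framework: a complex `m × n` matrix pencil `A - λ B` is formalized as the
pair `(A, B)` of matrices.  We define strict equivalence, congruence,
skew-symmetry, orbits, direct sums, and the cover relations for the orbit
closure hierarchies (in the Euclidean topology).
-/

open Matrix

noncomputable section

/-- An `m × n` complex matrix pencil `A - λ B`, formalized as the pair `(A, B)`. -/
abbrev Pencil (m n : ℕ) : Type :=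
  Matrix (Fin m) (Fin n) ℂ × Matrix (Fin m) (Fin n) ℂ

namespace Pencil

/-- Strict equivalence of matrix pencils: `Q⁻¹ * A * R = C` and `Q⁻¹ * B * R = D`
for some invertible `Q`, `R`. -/
def StrictEquiv {m n : ℕ} (P Q : Pencil m n) : Prop :=
  ∃ (S : Matrix (Fin m) (Fin m) ℂ) (R : Matrix (Fin n) (Fin n) ℂ),
    IsUnit S ∧ IsUnit R ∧ S⁻¹ * P.1 * R = Q.1 ∧ S⁻¹ * P.2 * R = Q.2

/-- The strict-equivalence orbit of a pencil. -/
def orbE {m n : ℕ} (P : Pencil m n) : Set (Pencil m n) :=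
  {Q | StrictEquiv P Q}

/-- A pencil `A - λ B` is skew-symmetric if `Aᵀ = -A` and `Bᵀ = -B`. -/
def IsSkew {n : ℕ} (P : Pencil n n) : Prop :=
  P.1ᵀ = -P.1 ∧ P.2ᵀ = -P.2

/-- Congruence of (square) matrix pencils: `Sᵀ * A * S = C` and `Sᵀ * B * S = D`
for some invertible `S`. -/
def Congruent {n : ℕ} (P Q : Pencil n n) : Prop :=
  ∃ S : Matrix (Fin n) (Fin n) ℂ,
    IsUnit S ∧ Sᵀ * P.1 * S = Q.1 ∧ Sᵀ * P.2 * S = Q.2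

/-- The congruence orbit of a pencil. -/
def orbC {n : ℕ} (P : Pencil n n) : Set (Pencil n n) :=
  {Q | Congruent P Q}

/-- Direct (block-diagonal) sum of two pencils. -/
def dsum {m n p q : ℕ} (P : Pencil m n) (Q : Pencil p q) : Pencil (m + p) (n + q) :=
  ((fromBlocks P.1 0 0 Q.1).submatrix finSumFinEquiv.symm finSumFinEquiv.symm,
   (fromBlocks P.2 0 0 Q.2).submatrix finSumFinEquiv.symm finSumFinEquiv.symm)

/-- Transport a pencil along equalities of its dimensions. -/
def cast {m n m' n' : ℕ} (hm : m = m') (hn : n = n') (P : Pencil m n) : Pencil m' n' :=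
  (P.1.submatrix (finCongr hm.symm) (finCongr hn.symm),
   P.2.submatrix (finCongr hm.symm) (finCongr hn.symm))

/-- `orbE P1` covers `orbE P2` in the closure hierarchy of strict-equivalence
orbits: `P1` is not strictly equivalent to `P2`, `orbE P2 ⊆ closure (orbE P1)`,
and there is no intermediate orbit strictly between them. -/
def CoversE {m n : ℕ} (P1 P2 : Pencil m n) : Prop :=
  ¬ StrictEquiv P1 P2 ∧ orbE P2 ⊆ closure (orbE P1) ∧
    ¬ ∃ P : Pencil m n, ¬ StrictEquiv P P1 ∧ ¬ StrictEquiv P P2 ∧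
        orbE P ⊆ closure (orbE P1) ∧ orbE P2 ⊆ closure (orbE P)

/-- `orbC P1` covers `orbC P2` in the closure hierarchy of congruence orbits of
skew-symmetric pencils: `P1` is not congruent to `P2`,
`orbC P2 ⊆ closure (orbC P1)`, and there is no congruence orbit of a
skew-symmetric pencil strictly between them. -/
def CoversC {n : ℕ} (P1 P2 : Pencil n n) : Prop :=
  ¬ Congruent P1 P2 ∧ orbC P2 ⊆ closure (orbC P1) ∧
    ¬ ∃ P : Pencil n n, IsSkew P ∧ ¬ Congruent P P1 ∧ ¬ Congruent P P2 ∧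
        orbC P ⊆ closure (orbC P1) ∧ orbC P2 ⊆ closure (orbC P)

end Pencil

/-! Normal rank. -/

/-- The pencil `A - λ B` as a matrix over the field `ℂ(λ)` of rational
functions. -/
def toRatFuncMatrix {m n : ℕ} (P : Pencil m n) : Matrix (Fin m) (Fin n) (RatFunc ℂ) :=
  Matrix.of fun i j => RatFunc.C (P.1 i j) - RatFunc.X * RatFunc.C (P.2 i j)

/-- The normal rank of a pencil: the rank over `ℂ(λ)` of the matrix with
entries `A i j - λ * B i j`. -/
def nrk {m n : ℕ} (P : Pencil m n) : ℕ :=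
  (toRatFuncMatrix P).rank

/-!
Closures of congruence orbits do not change if the matrices `S` in `Sᵀ P S` are allowed to be
singular; with rectangular `S`, inclusion of orbit closures extends to a preorder of degenerations
between pencils of arbitrary sizes. A Möbius transformation of the parameter moves a non-eigenvalue
common to all pencils in question to `∞`, and then a skew-symmetric pencil is determined by a
*skew type*: the multiset of the indices of its singular blocks `M_k`, and the multiset of the
eigenvalues and sizes of its Jordan blocks, each occurring twice.

The ranks of the maps `Y ↦ A Y M - B Y N`, with `N - λ M` a bidiagonal shift pencil, can only drop
under degeneration, which yields inequalities between the counting functions of the two types.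
Conversely, these inequalities are generated by elementary steps, each of which is realised by an
explicit degeneration. The normal rank is `n` minus the number of blocks `M_k`, and a single step
changes that number by `0` or `2`. Hence between pencils whose normal ranks differ by more than
`2` there is always another orbit.
-/

namespace SkewPencil

open Filter Topology

/-! ### Degenerations -/

section Degenerations

variable {m n m' n' p q p' q' ι κ ι' κ' τ : Type*}

/-- A pencil `A - λ B` whose rows and columns are indexed by arbitrary types, encoded like `Pencil`
as the pair `(A, B)`. Direct sums of pencils are then indexed by sum types. -/
abbrev Pen (m n : Type*) : Type _ := Matrix m n ℂ × Matrix m n ℂ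

/-- The pencil `F (A - λ B) G`, for `F` and `G` that need be neither square nor invertible. -/
def Pen.transform [Fintype m] [Fintype n] (F : Matrix p m ℂ) (G : Matrix n q ℂ) (X : Pen m n) :
    Pen p q :=
  (F * X.1 * G, F * X.2 * G)

/-- `Y` is a degeneration of `X` under equivalence: a limit of pencils `F X G`. Allowing singular
`F` and `G` does not enlarge closures of orbits, and makes sense for pencils of different sizes. -/
def DegE [Fintype m] [Fintype n] (X : Pen m n) (Y : Pen p q) : Prop :=
  Y ∈ closure (Set.range fun FG : Matrix p m ℂ × Matrix n q ℂ ↦ X.transform FG.1 FG.2)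

/-- `Q` is a degeneration of `P` under congruence: a limit of pencils `Sᵀ P S`, where `S` is
allowed to be singular as in `DegE`. -/
def DegC [Fintype ι] (P : Pen ι ι) (Q : Pen κ κ) : Prop :=
  Q ∈ closure (Set.range fun S : Matrix ι κ ℂ ↦ P.transform Sᵀ S)

theorem Pen.transform_transform [Fintype m] [Fintype n] [Fintype p] [Fintype q]
    (F : Matrix p m ℂ) (G : Matrix n q ℂ) (F' : Matrix p' p ℂ) (G' : Matrix q q' ℂ) (X : Pen m n) :
    (X.transform F G).transform F' G' = X.transform (F' * F) (G * G') := by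
  simp [Pen.transform, Matrix.mul_assoc]

theorem Pen.transform_one_one [Fintype m] [Fintype n] [DecidableEq m] [DecidableEq n]
    (X : Pen m n) : X.transform (1 : Matrix m m ℂ) (1 : Matrix n n ℂ) = X := by
  simp [Pen.transform]

theorem Pen.continuous_transform [Fintype m] [Fintype n] (F : Matrix p m ℂ) (G : Matrix n q ℂ) :
    Continuous (Pen.transform F G) := by
  unfold Pen.transform; fun_prop

theorem degE_transform [Fintype m] [Fintype n] (X : Pen m n) (F : Matrix p m ℂ)
    (G : Matrix n q ℂ) : DegE X (X.transform F G) :=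
  subset_closure ⟨(F, G), rfl⟩

theorem degC_transform [Fintype ι] (P : Pen ι ι) (S : Matrix ι κ ℂ) :
    DegC P (P.transform Sᵀ S) :=
  subset_closure ⟨S, rfl⟩

theorem DegE.of_tendsto [Fintype m] [Fintype n] {X : Pen m n} {Y : Pen p q} {α : Type*}
    {l : Filter α} [l.NeBot] (F : α → Matrix p m ℂ) (G : α → Matrix n q ℂ)
    (h : Tendsto (fun a ↦ X.transform (F a) (G a)) l (𝓝 Y)) : DegE X Y :=
  mem_closure_of_tendsto h (Eventually.of_forall fun a ↦ ⟨(F a, G a), rfl⟩)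

theorem DegE.refl [Fintype m] [Fintype n] (X : Pen m n) : DegE X X := by
  classical
  simpa only [X.transform_one_one] using degE_transform X (1 : Matrix m m ℂ) (1 : Matrix n n ℂ)

theorem DegC.refl [Fintype ι] (P : Pen ι ι) : DegC P P := by
  classical
  simpa only [transpose_one, P.transform_one_one] using degC_transform P (1 : Matrix ι ι ℂ)

theorem DegE.trans [Fintype m] [Fintype n] [Fintype p] [Fintype q] {X : Pen m n} {Y : Pen p q}
    {Z : Pen p' q'} (hXY : DegE X Y) (hYZ : DegE Y Z) : DegE X Z := by
  refine closure_minimal ?_ isClosed_closure hYZ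
  rintro _ ⟨⟨F, G⟩, rfl⟩
  refine map_mem_closure (Pen.continuous_transform F G) hXY ?_
  rintro _ ⟨⟨F', G'⟩, rfl⟩
  exact ⟨(F * F', G' * G), (Pen.transform_transform ..).symm⟩

theorem DegC.trans [Fintype ι] [Fintype κ] {P : Pen ι ι} {Q : Pen κ κ} {R : Pen τ τ}
    (hPQ : DegC P Q) (hQR : DegC Q R) : DegC P R := by
  refine closure_minimal ?_ isClosed_closure hQR
  rintro _ ⟨S, rfl⟩
  refine map_mem_closure (Pen.continuous_transform Sᵀ S) hPQ ?_
  rintro _ ⟨S', rfl⟩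
  exact ⟨S' * S, by simp only [transpose_mul]; exact (Pen.transform_transform ..).symm⟩

/-- The linear substitution `(A, B) ↦ (aA + bB, cA + dB)` of the pencil parameters. It commutes
with `Pen.transform` and is used to move eigenvalues to `0` or away from `∞`. -/
def Pen.mobius (a b c d : ℂ) (X : Pen m n) : Pen m n := (a • X.1 + b • X.2, c • X.1 + d • X.2)

theorem Pen.continuous_mobius (a b c d : ℂ) :
    Continuous (Pen.mobius a b c d : Pen m n → Pen m n) := by
  unfold Pen.mobius; fun_prop

theorem Pen.transform_mobius [Fintype m] [Fintype n] (a b c d : ℂ) (F : Matrix p m ℂ)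
    (G : Matrix n q ℂ) (X : Pen m n) :
    (X.mobius a b c d).transform F G = (X.transform F G).mobius a b c d := by
  simp [Pen.transform, Pen.mobius, Matrix.mul_add, Matrix.add_mul]

theorem DegE.mobius [Fintype m] [Fintype n] {X : Pen m n} {Y : Pen p q} (h : DegE X Y)
    (a b c d : ℂ) : DegE (X.mobius a b c d) (Y.mobius a b c d) := by
  refine map_mem_closure (Pen.continuous_mobius a b c d) h ?_
  rintro _ ⟨⟨F, G⟩, rfl⟩
  exact ⟨(F, G), Pen.transform_mobius ..⟩

theorem DegC.mobius [Fintype ι] {P : Pen ι ι} {Q : Pen κ κ} (h : DegC P Q) (a b c d : ℂ) :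
    DegC (P.mobius a b c d) (Q.mobius a b c d) := by
  refine map_mem_closure (Pen.continuous_mobius a b c d) h ?_
  rintro _ ⟨S, rfl⟩
  exact ⟨S, Pen.transform_mobius ..⟩

theorem Pen.mobius_mobius (a b c d a' b' c' d' : ℂ) (X : Pen m n) :
    (X.mobius a' b' c' d').mobius a b c d =
      X.mobius (a * a' + b * c') (a * b' + b * d') (c * a' + d * c') (c * b' + d * d') := by
  ext <;> simp [Pen.mobius] <;> ring

theorem Pen.mobius_one_zero_zero_one (X : Pen m n) : X.mobius 1 0 0 1 = X := by
  simp [Pen.mobius]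

/-- The pencil obtained by selecting rows along `f` and columns along `g`. -/
def Pen.submatrix (X : Pen m n) (f : p → m) (g : q → n) : Pen p q :=
  (X.1.submatrix f g, X.2.submatrix f g)

theorem degC_submatrix [Fintype ι] (P : Pen ι ι) (f : κ → ι) : DegC P (P.submatrix f f) := by
  classical
  convert degC_transform P ((1 : Matrix ι ι ℂ).submatrix id f) using 1
  ext i j <;> simp [Pen.transform, Pen.submatrix, Matrix.mul_apply, Matrix.one_apply]

theorem degC_of_isEmpty [Fintype ι] [IsEmpty κ] (P : Pen ι ι) (Q : Pen κ κ) : DegC P Q := by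
  convert degC_transform P (0 : Matrix ι κ ℂ) using 1
  exact Subsingleton.elim _ _

/-- The block-diagonal sum of two pencils. -/
def Pen.directSum (X : Pen m n) (Y : Pen p q) : Pen (m ⊕ p) (n ⊕ q) :=
  (fromBlocks X.1 0 0 Y.1, fromBlocks X.2 0 0 Y.2)

theorem Pen.transform_directSum [Fintype m] [Fintype n] [Fintype p] [Fintype q]
    (X : Pen m n) (Y : Pen p q) (F : Matrix m' m ℂ) (F' : Matrix p' p ℂ) (G : Matrix n n' ℂ)
    (G' : Matrix q q' ℂ) :
    (X.directSum Y).transform (fromBlocks F 0 0 F') (fromBlocks G 0 0 G') =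
      (X.transform F G).directSum (Y.transform F' G') := by
  simp [Pen.transform, Pen.directSum, fromBlocks_multiply]

theorem Pen.continuous_directSum :
    Continuous fun XY : Pen m n × Pen p q ↦ XY.1.directSum XY.2 := by
  unfold Pen.directSum; fun_prop

theorem Pen.mobius_directSum (a b c d : ℂ) (X : Pen m n) (Y : Pen p q) :
    (X.directSum Y).mobius a b c d = (X.mobius a b c d).directSum (Y.mobius a b c d) := by
  simp [Pen.mobius, Pen.directSum, fromBlocks_smul, fromBlocks_add]

theorem DegE.directSum [Fintype m] [Fintype n] [Fintype m'] [Fintype n'] {X : Pen m n}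
    {Y : Pen p q} {X' : Pen m' n'} {Y' : Pen p' q'} (h : DegE X Y) (h' : DegE X' Y') :
    DegE (X.directSum X') (Y.directSum Y') := by
  refine map_mem_closure₂ Pen.continuous_directSum h h' ?_
  rintro _ ⟨⟨F, G⟩, rfl⟩ _ ⟨⟨F', G'⟩, rfl⟩
  exact ⟨(fromBlocks F 0 0 F', fromBlocks G 0 0 G'), Pen.transform_directSum ..⟩

theorem DegC.directSum [Fintype ι] [Fintype ι'] {P : Pen ι ι} {Q : Pen κ κ}
    {P' : Pen ι' ι'} {Q' : Pen κ' κ'} (h : DegC P Q) (h' : DegC P' Q') :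
    DegC (P.directSum P') (Q.directSum Q') := by
  refine map_mem_closure₂ Pen.continuous_directSum h h' ?_
  rintro _ ⟨S, rfl⟩ _ ⟨S', rfl⟩
  refine ⟨fromBlocks S 0 0 S', ?_⟩
  simp only [fromBlocks_transpose, transpose_zero, Pen.transform_directSum]

/-- A block-triangular pencil degenerates to its diagonal part: scaling by `diag(1, ε)` on the left
and by `diag(1, ε⁻¹)` on the right multiplies the off-diagonal block by `ε`. -/
theorem degE_directSum_of_fromBlocks [Fintype m] [Fintype n] [Fintype p] [Fintype q]
    (X : Pen m n) (Y : Pen p q) (Z : Pen p n) :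
    DegE ((fromBlocks X.1 0 Z.1 Y.1, fromBlocks X.2 0 Z.2 Y.2) : Pen (m ⊕ p) (n ⊕ q))
      (X.directSum Y) := by
  classical
  refine DegE.of_tendsto (l := 𝓝[≠] (0 : ℂ))
    (fun ε ↦ fromBlocks 1 0 0 (ε • 1)) (fun ε ↦ fromBlocks 1 0 0 (ε⁻¹ • 1)) ?_
  have hlim : Tendsto (fun ε : ℂ ↦ ((fromBlocks X.1 0 (ε • Z.1) Y.1,
      fromBlocks X.2 0 (ε • Z.2) Y.2) : Pen (m ⊕ p) (n ⊕ q))) (𝓝[≠] 0) (𝓝 (X.directSum Y)) := by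
    refine tendsto_nhdsWithin_of_tendsto_nhds (Continuous.tendsto' (by fun_prop) _ _ ?_)
    simp [Pen.directSum]
  refine hlim.congr' ?_
  filter_upwards [self_mem_nhdsWithin] with ε (hε : ε ≠ 0)
  simp [Pen.transform, fromBlocks_multiply, smul_smul, hε]

theorem degC_directSum_comm [Fintype ι] [Fintype κ] (P : Pen ι ι) (Q : Pen κ κ) :
    DegC (P.directSum Q) (Q.directSum P) := by
  convert degC_submatrix (P.directSum Q) Sum.swap using 1
  ext (i | i) (j | j) <;> rfl

theorem degC_directSum_assoc [Fintype ι] [Fintype κ] [Fintype τ] (P : Pen ι ι) (Q : Pen κ κ)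
    (R : Pen τ τ) : DegC ((P.directSum Q).directSum R) (P.directSum (Q.directSum R)) := by
  convert degC_submatrix ((P.directSum Q).directSum R) (Equiv.sumAssoc ι κ τ).symm using 1
  ext (i | i | i) (j | j | j) <;> rfl

theorem degC_directSum_assoc_symm [Fintype ι] [Fintype κ] [Fintype τ] (P : Pen ι ι)
    (Q : Pen κ κ) (R : Pen τ τ) :
    DegC (P.directSum (Q.directSum R)) ((P.directSum Q).directSum R) := by
  convert degC_submatrix (P.directSum (Q.directSum R)) (Equiv.sumAssoc ι κ τ) using 1
  ext ((i | i) | i) ((j | j) | j) <;> rfl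

theorem degC_directSum_of_isEmpty [Fintype ι] [IsEmpty κ] (P : Pen ι ι) (Q : Pen κ κ) :
    DegC P (P.directSum Q) := by
  convert degC_submatrix P (Sum.elim id isEmptyElim : ι ⊕ κ → ι) using 1
  ext (i | i) (j | j) <;> first | rfl | exact isEmptyElim i | exact isEmptyElim j

/-- The skew-symmetric pencil with off-diagonal blocks `X` and `-Xᵀ`. -/
def Pen.hyperbolic (X : Pen m n) : Pen (m ⊕ n) (m ⊕ n) :=
  (fromBlocks 0 X.1 (-X.1ᵀ) 0, fromBlocks 0 X.2 (-X.2ᵀ) 0)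

/-- The transposed pencil `Aᵀ - λ Bᵀ`. -/
def Pen.transpose (X : Pen m n) : Pen n m := (X.1ᵀ, X.2ᵀ)

theorem Pen.continuous_hyperbolic :
    Continuous (Pen.hyperbolic : Pen m n → Pen (m ⊕ n) (m ⊕ n)) := by
  unfold Pen.hyperbolic; fun_prop

theorem Pen.transform_hyperbolic [Fintype m] [Fintype n] (X : Pen m n) (F : Matrix p m ℂ)
    (G : Matrix n q ℂ) :
    X.hyperbolic.transform (fromBlocks Fᵀ 0 0 G)ᵀ (fromBlocks Fᵀ 0 0 G) =
      (X.transform F G).hyperbolic := by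
  simp [Pen.transform, Pen.hyperbolic, fromBlocks_multiply, fromBlocks_transpose,
    Matrix.mul_assoc]

theorem DegE.hyperbolic [Fintype m] [Fintype n] {X : Pen m n} {Y : Pen p q} (h : DegE X Y) :
    DegC X.hyperbolic Y.hyperbolic := by
  refine map_mem_closure Pen.continuous_hyperbolic h ?_
  rintro _ ⟨⟨F, G⟩, rfl⟩
  exact ⟨_, Pen.transform_hyperbolic ..⟩

theorem degC_hyperbolic_transpose [Fintype m] [Fintype n] (X : Pen m n) :
    DegC X.hyperbolic X.transpose.hyperbolic := by
  classical
  convert degC_transform X.hyperbolic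
    (fromBlocks 0 (-1 : Matrix m m ℂ) (1 : Matrix n n ℂ) 0) using 1
  simp [Pen.transform, Pen.hyperbolic, Pen.transpose, fromBlocks_multiply, fromBlocks_transpose]

theorem degC_hyperbolic_directSum [Fintype m] [Fintype n] [Fintype p] [Fintype q]
    (X : Pen m n) (Y : Pen p q) :
    DegC (X.directSum Y).hyperbolic (X.hyperbolic.directSum Y.hyperbolic) := by
  convert degC_submatrix (X.directSum Y).hyperbolic (Equiv.sumSumSumComm m n p q) using 1
  ext ((i | i) | (i | i)) ((j | j) | (j | j)) <;>
    simp [Pen.directSum, Pen.hyperbolic, Pen.submatrix]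

theorem degC_directSum_hyperbolic [Fintype m] [Fintype n] [Fintype p] [Fintype q]
    (X : Pen m n) (Y : Pen p q) :
    DegC (X.hyperbolic.directSum Y.hyperbolic) (X.directSum Y).hyperbolic := by
  convert degC_submatrix (X.hyperbolic.directSum Y.hyperbolic) (Equiv.sumSumSumComm m p n q)
    using 1
  ext ((i | i) | (i | i)) ((j | j) | (j | j)) <;>
    simp [Pen.directSum, Pen.hyperbolic, Pen.submatrix]

end Degenerations

/-! ### Shift pencils -/

section ShiftPencils

variable {n : Type*}

/-- The rectangular matrix with ones on the `c`-th superdiagonal. -/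
def superdiag (p q c : ℕ) : Matrix (Fin p) (Fin q) ℂ :=
  Matrix.of fun i j ↦ if (j : ℕ) = i + c then 1 else 0

/-- The rectangular matrix with ones on the first subdiagonal. -/
def subdiag (p q : ℕ) : Matrix (Fin p) (Fin q) ℂ :=
  Matrix.of fun i j ↦ if (i : ℕ) = j + 1 then 1 else 0

/-- The rectangular matrix with a single one in its upper left corner. -/
def corner (p q : ℕ) : Matrix (Fin p) (Fin q) ℂ :=
  Matrix.of fun i j ↦ if (i : ℕ) = 0 ∧ (j : ℕ) = 0 then 1 else 0

/-- The `q × p` pencil with ones on the superdiagonal of `A` and on the diagonal of `B`. It is the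
block `L_q` of the Kronecker form when `p = q + 1`, and a nilpotent Jordan block when `p = q`. -/
def shiftPen (q p : ℕ) : Pen (Fin q) (Fin p) := (superdiag q p 1, superdiag q p 0)

theorem superdiag_mul_apply {q p c : ℕ} (M : Matrix (Fin p) n ℂ) (i : Fin q) (j : n) :
    (superdiag q p c * M) i j = if h : (i : ℕ) + c < p then M ⟨i + c, h⟩ j else 0 := by
  simp only [superdiag, Matrix.mul_apply, of_apply, ite_mul, one_mul, zero_mul]
  split_ifs with h
  · simp [← Fin.ext_iff (b := (⟨i + c, h⟩ : Fin p))]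
  · exact Finset.sum_eq_zero fun k _ ↦ if_neg (by omega)

theorem mul_superdiag_apply {p r c : ℕ} (M : Matrix n (Fin p) ℂ) (i : n) (j : Fin r) :
    (M * superdiag p r c) i j =
      if h : c ≤ (j : ℕ) ∧ (j : ℕ) - c < p then M i ⟨j - c, h.2⟩ else 0 := by
  simp only [superdiag, Matrix.mul_apply, of_apply, mul_ite, mul_one, mul_zero]
  split_ifs with h
  · rw [Finset.sum_eq_single ⟨j - c, h.2⟩ (fun k _ hk ↦ if_neg ?_) (by simp)]
    · rw [if_pos (by simp; omega)]
    · rw [Ne, Fin.ext_iff] at hk; simp only at hk; omega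
  · exact Finset.sum_eq_zero fun k _ ↦ if_neg (by omega)

theorem subdiag_mul_apply {q p : ℕ} (M : Matrix (Fin p) n ℂ) (i : Fin q) (j : n) :
    (subdiag q p * M) i j =
      if h : 1 ≤ (i : ℕ) ∧ (i : ℕ) - 1 < p then M ⟨i - 1, h.2⟩ j else 0 := by
  simp only [subdiag, Matrix.mul_apply, of_apply, ite_mul, one_mul, zero_mul]
  split_ifs with h
  · rw [Finset.sum_eq_single ⟨i - 1, h.2⟩ (fun k _ hk ↦ if_neg ?_) (by simp)]
    · rw [if_pos (by simp; omega)]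
    · rw [Ne, Fin.ext_iff] at hk; simp only at hk; omega
  · exact Finset.sum_eq_zero fun k _ ↦ if_neg (by omega)

theorem corner_mul_apply {q p : ℕ} (M : Matrix (Fin p) n ℂ) (i : Fin q) (j : n) :
    (corner q p * M) i j = if h : (i : ℕ) = 0 ∧ 0 < p then M ⟨0, h.2⟩ j else 0 := by
  simp only [corner, Matrix.mul_apply, of_apply, ite_mul, one_mul, zero_mul]
  split_ifs with h
  · rw [Finset.sum_eq_single ⟨0, h.2⟩ (fun k _ hk ↦ if_neg ?_) (by simp)]
    · rw [if_pos (by simp [h.1])]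
    · rw [Ne, Fin.ext_iff] at hk; simp only at hk; omega
  · exact Finset.sum_eq_zero fun k _ ↦ if_neg (by omega)

theorem transform_directSum_shiftPen {q₁ p₁ q₂ p₂ : ℕ} (hq : q₁ ≤ p₁) (hp : 1 ≤ p₁)
    (hqp : p₂ ≤ q₂ + 1) (h₁ : min p₂ q₁ ≤ q₂) (h₂ : min p₂ (q₁ + 1) ≤ p₁) :
    ((shiftPen (q₁ + 1) (p₁ + 1)).directSum (shiftPen q₂ p₂)).transform
        (fromBlocks (superdiag q₁ (q₁ + 1) 1) (-superdiag q₁ q₂ 0)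
          (corner (q₂ + 1) (q₁ + 1)) (subdiag (q₂ + 1) q₂))
        (fromBlocks (subdiag (p₁ + 1) p₁) (superdiag (p₁ + 1) (p₂ + 1) 0)
          0 (superdiag p₂ (p₂ + 1) 1)) =
      (fromBlocks (shiftPen q₁ p₁).1 0 (corner (q₂ + 1) p₁) (shiftPen (q₂ + 1) (p₂ + 1)).1,
        fromBlocks (shiftPen q₁ p₁).2 0 0 (shiftPen (q₂ + 1) (p₂ + 1)).2) := by
  rw [min_le_iff] at h₁ h₂
  simp only [Pen.transform, Matrix.mul_assoc]
  simp only [Pen.directSum, shiftPen, fromBlocks_multiply, Matrix.neg_mul, Matrix.mul_zero,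
    Matrix.zero_mul, add_zero, zero_add, Prod.mk.injEq, fromBlocks_inj]
  refine ⟨⟨?_, ?_, ?_, ?_⟩, ⟨?_, ?_, ?_, ?_⟩⟩
  all_goals
    ext ⟨i, hi⟩ ⟨j, hj⟩
    simp only [Matrix.add_apply, Matrix.neg_apply, superdiag_mul_apply, subdiag_mul_apply,
      corner_mul_apply]
    simp only [superdiag, subdiag, corner, of_apply, Matrix.zero_apply]
    split_ifs <;> first | omega | simp

theorem degE_directSum_shiftPen {q₁ p₁ q₂ p₂ : ℕ} (hq : q₁ ≤ p₁) (hp : 1 ≤ p₁)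
    (hqp : p₂ ≤ q₂ + 1) (h₁ : min p₂ q₁ ≤ q₂) (h₂ : min p₂ (q₁ + 1) ≤ p₁) :
    DegE ((shiftPen (q₁ + 1) (p₁ + 1)).directSum (shiftPen q₂ p₂))
      ((shiftPen q₁ p₁).directSum (shiftPen (q₂ + 1) (p₂ + 1))) := by
  refine DegE.trans ?_ (degE_directSum_of_fromBlocks _ _ (corner (q₂ + 1) p₁, 0))
  rw [← transform_directSum_shiftPen hq hp hqp h₁ h₂]
  exact degE_transform _ _ _

/-- The matrix of `f(X) ↦ f(X + μ)` on polynomials of degree less than `k`, in the basis of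
monomials. -/
def pascal (k : ℕ) (μ : ℂ) : Matrix (Fin k) (Fin k) ℂ :=
  Matrix.of fun i j ↦ (i : ℕ).choose j * μ ^ ((i : ℕ) - j)

theorem isUnit_det_pascal (k : ℕ) (μ : ℂ) : IsUnit (pascal k μ).det := by
  rw [Matrix.det_of_isLowerTriangular]
  · simp [pascal]
  · intro i j (hij : i < j)
    simp [pascal, Nat.choose_eq_zero_of_lt (Fin.lt_def.mp hij)]

theorem superdiag_zero_mul_pascal (k : ℕ) (μ : ℂ) :
    superdiag k (k + 1) 0 * pascal (k + 1) μ = pascal k μ * superdiag k (k + 1) 0 := by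
  ext i j
  rw [superdiag_mul_apply, mul_superdiag_apply, dif_pos (by omega)]
  split_ifs with h
  · rfl
  · have hij : (i : ℕ) < j := by omega
    simp [pascal, Nat.choose_eq_zero_of_lt hij]

theorem superdiag_one_mul_pascal (k : ℕ) (μ : ℂ) :
    superdiag k (k + 1) 1 * pascal (k + 1) μ =
      μ • (pascal k μ * superdiag k (k + 1) 0) + pascal k μ * superdiag k (k + 1) 1 := by
  rw [← superdiag_zero_mul_pascal]
  ext ⟨i, hi⟩ ⟨j, hj⟩
  rw [Matrix.add_apply, Matrix.smul_apply, superdiag_mul_apply, superdiag_mul_apply,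
    mul_superdiag_apply, dif_pos (by omega), dif_pos (by simp; omega)]
  rcases j with _ | j
  · simp [pascal, pow_succ']
  · rw [dif_pos (by simp; omega)]
    simp only [pascal, of_apply, Nat.choose_succ_succ', add_tsub_cancel_right, Nat.succ_sub_succ,
      smul_eq_mul, add_zero, Nat.cast_add]
    rcases lt_or_ge i (j + 1) with h | h
    · simp [Nat.choose_eq_zero_of_lt h]
    · obtain ⟨t, rfl⟩ := Nat.exists_eq_add_of_le h
      rw [show j + 1 + t - j = t + 1 by omega, show j + 1 + t - (j + 1) = t by omega]
      ring

theorem degE_mobius_shiftPen (k : ℕ) (μ : ℂ) :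
    DegE ((shiftPen k (k + 1)).mobius 1 μ 0 1) (shiftPen k (k + 1)) := by
  have hdet := isUnit_det_pascal k (-μ)
  convert degE_transform ((shiftPen k (k + 1)).mobius 1 μ 0 1) (pascal k (-μ))⁻¹
    (pascal (k + 1) (-μ)) using 1
  refine Prod.ext ?_ ?_ <;>
    simp [Pen.transform, Pen.mobius, shiftPen, Matrix.mul_add, Matrix.add_mul, Matrix.mul_assoc,
      superdiag_zero_mul_pascal, superdiag_one_mul_pascal,
      Matrix.nonsing_inv_mul_cancel_left _ _ hdet]

theorem degE_shiftPen_mobius (k : ℕ) (μ : ℂ) :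
    DegE (shiftPen k (k + 1)) ((shiftPen k (k + 1)).mobius 1 μ 0 1) := by
  have h := (degE_mobius_shiftPen k (-μ)).mobius 1 μ 0 1
  rw [Pen.mobius_mobius] at h
  simpa [Pen.mobius_one_zero_zero_one] using h

end ShiftPencils

/-! ### Cyclic pencils -/

section CyclicPencils

variable {ι m : Type*} [Fintype ι] [DecidableEq ι] {a b k l : ℕ} (T : Matrix ι ι ℂ) (v φ : ι → ℂ)

/-- The matrix with columns `v, T v, …, T ^ (k - 1) v`. -/
def krylov (k : ℕ) : Matrix ι (Fin k) ℂ := Matrix.of fun x j ↦ (T ^ (j : ℕ) *ᵥ v) x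

/-- The matrix with rows `φ, φ T, …, φ T ^ (k - 1)`. -/
def cokrylov (k : ℕ) : Matrix (Fin k) ι ℂ := Matrix.of fun i ↦ φ ᵥ* T ^ (i : ℕ)

theorem cokrylov_mul_mul_krylov_apply (c : ℕ) (i : Fin k) (j : Fin l) :
    (cokrylov T φ k * (T ^ c * krylov T v l)) i j = φ ⬝ᵥ T ^ (i + c + j : ℕ) *ᵥ v := by
  rw [pow_add, pow_add, ← mulVec_mulVec, ← mulVec_mulVec, dotProduct_mulVec]
  rfl

theorem cokrylov_mul_krylov_apply (i : Fin k) (j : Fin l) :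
    (cokrylov T φ k * krylov T v l) i j = φ ⬝ᵥ T ^ (i + j : ℕ) *ᵥ v := by
  simpa using cokrylov_mul_mul_krylov_apply T v φ 0 i j

theorem cokrylov_mul_mul_apply (N : Matrix ι m ℂ) (i : Fin k) (hi : (i : ℕ) + 1 < l) (j : m) :
    (cokrylov T φ k * (T * N)) i j = (cokrylov T φ l * N) ⟨i + 1, hi⟩ j := by
  have h : (cokrylov T φ k * T) i = cokrylov T φ l ⟨i + 1, hi⟩ := by
    change (φ ᵥ* T ^ (i : ℕ)) ᵥ* T = φ ᵥ* T ^ ((i : ℕ) + 1)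
    rw [pow_succ, vecMul_vecMul]
  rw [← Matrix.mul_assoc]
  exact congrArg (fun r ↦ r ⬝ᵥ fun x ↦ N x j) h

theorem mul_mul_krylov_apply (R : Matrix m ι ℂ) (i : m) (j : Fin k) (hj : (j : ℕ) + 1 < l) :
    (R * (T * krylov T v k)) i j = (R * krylov T v l) i ⟨j + 1, hj⟩ := by
  have h : (fun x ↦ (T * krylov T v k) x j) = fun x ↦ krylov T v l x ⟨j + 1, hj⟩ := by
    change T *ᵥ (T ^ (j : ℕ) *ᵥ v) = T ^ ((j : ℕ) + 1) *ᵥ v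
    rw [pow_succ', mulVec_mulVec]
  exact congrArg (fun r ↦ R i ⬝ᵥ r) h

variable {T v φ}

/-- The product is a Hankel matrix which vanishes above its antidiagonal. -/
theorem isUnit_det_cokrylov_mul_krylov (h0 : ∀ i < k, φ ⬝ᵥ T ^ i *ᵥ v = 0)
    (h1 : φ ⬝ᵥ T ^ k *ᵥ v = 1) :
    IsUnit (cokrylov T φ (k + 1) * krylov T v (k + 1)).det := by
  set H := cokrylov T φ (k + 1) * krylov T v (k + 1) with hH
  have hrev : IsUnit (H.submatrix Fin.revPerm id).det := by
    rw [Matrix.det_of_isUpperTriangular, Finset.prod_eq_one fun i _ ↦ ?_]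
    · exact isUnit_one
    · rw [submatrix_apply, hH, cokrylov_mul_krylov_apply, Fin.revPerm_apply, Fin.val_rev, ← h1]
      congr 3
      simp only [id]; omega
    · intro i j (hij : j < i)
      rw [submatrix_apply, hH, cokrylov_mul_krylov_apply, Fin.revPerm_apply, Fin.val_rev]
      apply h0
      simp only [id]; omega
  rw [Matrix.det_permute] at hrev
  exact isUnit_of_mul_isUnit_right hrev

/-- The Krylov vectors `v, …, T ^ (a - 1) v` and the functionals `φ, …, φ T ^ (b - 1)` annihilate
each other; completing them by dual families makes the pencil block triangular. -/
theorem degE_of_krylov (h0 : ∀ i < a + b, φ ⬝ᵥ T ^ i *ᵥ v = 0)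
    (h1 : φ ⬝ᵥ T ^ (a + b) *ᵥ v = 1) :
    DegE ((T, 1) : Pen ι ι)
      ((shiftPen b (b + 1)).directSum (shiftPen a (a + 1)).transpose) := by
  set C := krylov T v (a + b + 1)
  set Φ := cokrylov T φ (a + b + 1)
  have hdet : IsUnit (Φ * C).det := isUnit_det_cokrylov_mul_krylov h0 h1
  have hN : Φ * (C * (Φ * C)⁻¹) = 1 := by
    rw [← Matrix.mul_assoc, Matrix.mul_nonsing_inv _ hdet]
  have hR : (Φ * C)⁻¹ * Φ * C = 1 := by
    rw [Matrix.mul_assoc, Matrix.nonsing_inv_mul _ hdet]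
  set N' := (C * (Φ * C)⁻¹).submatrix id (Fin.castLE (by omega) : Fin (b + 1) → _)
  set R' := ((Φ * C)⁻¹ * Φ).submatrix (Fin.castLE (by omega) : Fin (a + 1) → _) id
  have hN' : Φ * N' = superdiag _ (b + 1) 0 := by
    ext i j
    refine (congrFun₂ hN i _).trans ?_
    simp [one_apply, superdiag, Fin.ext_iff, eq_comm]
  have hR' : R' * C = (superdiag _ (a + 1) 0)ᵀ := by
    ext i j
    refine (congrFun₂ hR _ j).trans ?_
    simp [one_apply, superdiag, Fin.ext_iff]
  refine (degE_transform _ (fromRows (cokrylov T φ b) R') (fromCols N' (krylov T v a))).trans ?_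
  convert degE_directSum_of_fromBlocks (shiftPen b (b + 1)) (shiftPen a (a + 1)).transpose
    (R' * (T * N'), R' * N') using 2
  · simp only [Pen.transform]
    rw [Matrix.mul_assoc, mul_fromCols, fromRows_mul_fromCols]
    congr 1 <;> ext i j
    · rw [cokrylov_mul_mul_apply T φ N' i (l := a + b + 1) (by omega) j, hN']
      rfl
    · have h := cokrylov_mul_mul_krylov_apply T v φ 1 i j
      rw [pow_one, h0 _ (by omega)] at h
      exact h
    · rw [mul_mul_krylov_apply T v R' i j (l := a + b + 1) (by omega), hR']
      rfl
  · simp only [Pen.transform, Matrix.mul_one, fromRows_mul_fromCols]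
    congr 1 <;> ext i j
    · exact congrFun₂ hN' (i.castLE (by omega)) j
    · rw [cokrylov_mul_krylov_apply]
      exact h0 _ (by omega)
    · exact congrFun₂ hR' i (j.castLE (by omega))

end CyclicPencils

/-! ### Canonical pencils -/

section CanonicalPencils

/-- The blocks of the canonical form of a skew-symmetric pencil `A - λ B` for which the rank of `B`
is the normal rank: `M k` has size `2 k + 1`, and `H μ e` has size `2 e` and a pair of Jordan blocks
of size `e` with eigenvalue `μ`. An infinite eigenvalue cannot occur. -/
inductive CanonBlock : Type
  | M (k : ℕ) : CanonBlock
  | H (μ : ℂ) (e : ℕ) : CanonBlock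

namespace CanonBlock

/-- The number of rows of the upper right part of a block. -/
def row : CanonBlock → ℕ
  | M k => k
  | H _ e => e

/-- The number of columns of the upper right part of a block. -/
def col : CanonBlock → ℕ
  | M k => k + 1
  | H _ e => e

/-- The eigenvalue of a block; blocks `M k` have none and get the value `0`. -/
def eigenvalue : CanonBlock → ℂ
  | M _ => 0
  | H μ _ => μ

/-- The upper right part of a block. -/
def pen (b : CanonBlock) : Pen (Fin b.row) (Fin b.col) :=
  (shiftPen b.row b.col).mobius 1 b.eigenvalue 0 1

end CanonBlock

/-- The index type of the direct sum of a list of canonical blocks. -/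
def CanonIdx : List CanonBlock → Type
  | [] => Empty
  | b :: l => (Fin b.row ⊕ Fin b.col) ⊕ CanonIdx l

instance CanonIdx.fintype : ∀ l, Fintype (CanonIdx l)
  | [] => inferInstanceAs (Fintype Empty)
  | _ :: l => @instFintypeSum _ _ inferInstance (CanonIdx.fintype l)

/-- The direct sum of a list of canonical blocks. -/
def canon : ∀ l : List CanonBlock, Pen (CanonIdx l) (CanonIdx l)
  | [] => 0
  | b :: l => b.pen.hyperbolic.directSum (canon l)

theorem CanonBlock.pen_M (k : ℕ) : (CanonBlock.M k).pen = shiftPen k (k + 1) :=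
  Pen.mobius_one_zero_zero_one _

theorem degC_canon_of_perm {l l' : List CanonBlock} (h : l.Perm l') :
    DegC (canon l) (canon l') := by
  induction h with
  | nil => exact DegC.refl _
  | cons x _ ih => exact (DegC.refl _).directSum ih
  | swap x y l =>
    exact (degC_directSum_assoc_symm _ _ _).trans
      (((degC_directSum_comm _ _).directSum (DegC.refl _)).trans (degC_directSum_assoc _ _ _))
  | trans _ _ ih ih' => exact ih.trans ih'

theorem DegC.canon_append {t t' : List CanonBlock} (h : DegC (canon t) (canon t'))
    (l : List CanonBlock) : DegC (canon (l ++ t)) (canon (l ++ t')) := by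
  induction l with
  | nil => exact h
  | cons b l ih => exact (DegC.refl _).directSum ih

theorem degC_canon_pair {x y x' y' : CanonBlock}
    (h : DegE (x.pen.directSum y.pen) (x'.pen.directSum y'.pen)) :
    DegC (canon [x, y]) (canon [x', y']) :=
  (degC_directSum_assoc_symm _ _ _).trans <|
    (((degC_directSum_hyperbolic _ _).trans <|
      h.hyperbolic.trans (degC_hyperbolic_directSum _ _)).directSum (DegC.refl _)).trans
    (degC_directSum_assoc _ _ _)

theorem degC_canon_M_M {a c : ℕ} (h : a + 1 ≤ c) :
    DegC (canon [.M (a + 1), .M c]) (canon [.M a, .M (c + 1)]) := by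
  apply degC_canon_pair
  simp only [CanonBlock.pen_M]
  exact degE_directSum_shiftPen (by omega) (by omega) (by omega) (by omega) (by omega)

theorem degC_canon_M_H (a e : ℕ) (μ : ℂ) :
    DegC (canon [.M (a + 1), .H μ e]) (canon [.M a, .H μ (e + 1)]) := by
  apply degC_canon_pair
  simp only [CanonBlock.pen_M]
  have h : DegE ((shiftPen (a + 1) (a + 2)).directSum (shiftPen e e))
      ((shiftPen a (a + 1)).directSum (shiftPen (e + 1) (e + 1))) :=
    degE_directSum_shiftPen (by omega) (by omega) (by omega) (by omega) (by omega)
  have hμ := h.mobius 1 μ 0 1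
  simp only [Pen.mobius_directSum] at hμ
  exact ((degE_shiftPen_mobius _ μ).directSum (DegE.refl _)).trans
    (hμ.trans ((degE_mobius_shiftPen _ μ).directSum (DegE.refl _)))

theorem degC_canon_H_H {e f : ℕ} (μ : ℂ) (h : e + 1 ≤ f) :
    DegC (canon [.H μ (f + 1), .H μ e]) (canon [.H μ f, .H μ (e + 1)]) := by
  apply degC_canon_pair
  have h : DegE ((shiftPen (f + 1) (f + 1)).directSum (shiftPen e e))
      ((shiftPen f f).directSum (shiftPen (e + 1) (e + 1))) :=
    degE_directSum_shiftPen (by omega) (by omega) (by omega) (by omega) (by omega)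
  have hμ := h.mobius 1 μ 0 1
  simp only [Pen.mobius_directSum] at hμ
  exact hμ

theorem degC_canon_H_zero_nil (μ : ℂ) : DegC (canon [.H μ 0]) (canon []) :=
  have : IsEmpty (CanonIdx []) := inferInstanceAs (IsEmpty Empty)
  degC_of_isEmpty _ _

theorem degC_canon_nil_H_zero (μ : ℂ) : DegC (canon []) (canon [.H μ 0]) :=
  have : IsEmpty (CanonIdx [.H μ 0]) := inferInstanceAs (IsEmpty ((Fin 0 ⊕ Fin 0) ⊕ Empty))
  degC_of_isEmpty _ _

end CanonicalPencils

/-! ### Sums of Jordan blocks with distinct eigenvalues -/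

section JordanSums

open Polynomial

/-- The index type of the direct sum of Jordan blocks with given eigenvalues and sizes. -/
def JordanIdx : List (ℂ × ℕ) → Type
  | [] => Empty
  | x :: l => Fin x.2 ⊕ JordanIdx l

instance JordanIdx.fintype : ∀ l, Fintype (JordanIdx l)
  | [] => inferInstanceAs (Fintype Empty)
  | x :: l => @instFintypeSum (Fin x.2) _ inferInstance (JordanIdx.fintype l)

instance JordanIdx.decidableEq : ∀ l, DecidableEq (JordanIdx l)
  | [] => inferInstanceAs (DecidableEq Empty)
  | x :: l => @instDecidableEqSum (Fin x.2) _ inferInstance (JordanIdx.decidableEq l)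

/-- The direct sum of the pencils `J - λ I` for Jordan blocks `J` with given eigenvalues and
sizes. -/
def jordanPen : ∀ l : List (ℂ × ℕ), Pen (JordanIdx l) (JordanIdx l)
  | [] => 0
  | x :: l => ((shiftPen x.2 x.2).mobius 1 x.1 0 1).directSum (jordanPen l)

/-- The Taylor coefficients of order less than `e` at `μ`, for all `(μ, e)` in a list. -/
def jet : ∀ l : List (ℂ × ℕ), ℂ[X] →ₗ[ℂ] (JordanIdx l → ℂ)
  | [] => 0
  | x :: l => LinearMap.pi (Sum.rec
      (fun i ↦ Polynomial.lcoeff ℂ (x.2 - 1 - i) ∘ₗ Polynomial.taylor x.1)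
      (fun i ↦ LinearMap.proj i ∘ₗ jet l))

theorem degC_canon_jordanPen (l : List (ℂ × ℕ)) :
    DegC (canon (l.map fun x ↦ .H x.1 x.2)) (jordanPen l).hyperbolic := by
  induction l with
  | nil =>
    have : IsEmpty (JordanIdx [] ⊕ JordanIdx []) := inferInstanceAs (IsEmpty (Empty ⊕ Empty))
    exact degC_of_isEmpty _ _
  | cons x l ih => exact ((DegC.refl _).directSum ih).trans (degC_directSum_hyperbolic _ _)

theorem shiftPen_self_snd (e : ℕ) : (shiftPen e e).2 = 1 := by
  ext i j
  simp [shiftPen, superdiag, one_apply, Fin.ext_iff, eq_comm]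

theorem jordanPen_snd (l : List (ℂ × ℕ)) : (jordanPen l).2 = 1 := by
  induction l with
  | nil => ext i; exact i.elim
  | cons x l ih =>
    refine Eq.trans ?_ fromBlocks_one
    exact congrArg₂ (fromBlocks · 0 0 ·) (by simp [Pen.mobius, shiftPen_self_snd]) ih

theorem shiftPen_mobius_fst_mulVec_taylor (μ : ℂ) (e : ℕ) (f : ℂ[X]) :
    ((shiftPen e e).mobius 1 μ 0 1).1 *ᵥ (fun j : Fin e ↦ (taylor μ f).coeff (e - 1 - j)) =
      fun j : Fin e ↦ (taylor μ (X * f)).coeff (e - 1 - j) := by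
  funext i
  have hshift : ((shiftPen e e).1 *ᵥ fun j : Fin e ↦ (taylor μ f).coeff (e - 1 - j)) i =
      if (i : ℕ) + 1 < e then (taylor μ f).coeff (e - 1 - (i + 1)) else 0 :=
    superdiag_mul_apply (.of fun (a : Fin e) (_ : Unit) ↦ (taylor μ f).coeff (e - 1 - a)) i ()
  simp only [Pen.mobius, shiftPen_self_snd, add_mulVec, smul_mulVec, one_mulVec, one_smul,
    Pi.add_apply, Pi.smul_apply, smul_eq_mul, hshift, taylor_mul, taylor_X, add_mul, coeff_add,
    coeff_C_mul]
  split_ifs with h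
  · rw [show e - 1 - (i : ℕ) = e - 1 - (i + 1) + 1 by omega, coeff_X_mul]
  · rw [show e - 1 - (i : ℕ) = 0 by omega]
    simp

theorem jordanPen_fst_mulVec_jet (l : List (ℂ × ℕ)) (f : ℂ[X]) :
    (jordanPen l).1 *ᵥ jet l f = jet l (X * f) := by
  induction l with
  | nil => ext i; exact i.elim
  | cons x l ih =>
    refine (fromBlocks_mulVec _ _ _ _ _).trans ?_
    simp only [zero_mulVec, zero_add, add_zero]
    funext i
    rcases i with i | i
    · exact congrFun (shiftPen_mobius_fst_mulVec_taylor x.1 x.2 f) i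
    · exact congrFun ih i

theorem jordanPen_fst_pow_mulVec_jet_one (l : List (ℂ × ℕ)) (i : ℕ) :
    (jordanPen l).1 ^ i *ᵥ jet l 1 = jet l (X ^ i) := by
  induction i with
  | zero => simp
  | succ i ih => rw [pow_succ', ← mulVec_mulVec, ih, jordanPen_fst_mulVec_jet, pow_succ']

theorem pow_dvd_of_jet_eq_zero {l : List (ℂ × ℕ)} {f : ℂ[X]} (h : jet l f = 0) :
    ∀ x ∈ l, (X - C x.1) ^ x.2 ∣ f := by
  induction l with
  | nil => simp
  | cons x l ih =>
    rw [List.forall_mem_cons]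
    refine ⟨?_, ih (funext fun i ↦ congrFun h (.inr i))⟩
    have hdvd : X ^ x.2 ∣ taylor x.1 f := by
      rw [X_pow_dvd_iff]
      intro d hd
      have : (taylor x.1 f).coeff (x.2 - 1 - (x.2 - 1 - d)) = 0 :=
        congrFun h (Sum.inl ⟨x.2 - 1 - d, by omega⟩)
      rwa [show x.2 - 1 - (x.2 - 1 - d) = d by omega] at this
    have hdvd' := map_dvd (taylorAlgHom (-x.1)) hdvd
    rw [taylorAlgHom_apply, taylorAlgHom_apply, taylor_taylor, taylor_X_pow] at hdvd'
    simpa [sub_eq_add_neg] using hdvd'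

theorem degree_prod_X_sub_C_pow (l : List (ℂ × ℕ)) :
    (l.map fun x : ℂ × ℕ ↦ ((X - C x.1) ^ x.2 : ℂ[X])).prod.degree = (l.map Prod.snd).sum := by
  induction l with
  | nil => simp
  | cons x l ih => simp [degree_mul, ih]

theorem prod_X_sub_C_pow_dvd {l : List (ℂ × ℕ)} (hl : (l.map Prod.fst).Nodup) {f : ℂ[X]}
    (hf : ∀ x ∈ l, (X - C x.1) ^ x.2 ∣ f) : (l.map fun x ↦ (X - C x.1) ^ x.2).prod ∣ f := by
  induction l with
  | nil => simp
  | cons x l ih =>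
    rw [List.map_cons, List.nodup_cons] at hl
    rw [List.forall_mem_cons] at hf
    rw [List.map_cons, List.prod_cons]
    refine IsCoprime.mul_dvd ?_ hf.1 (ih hl.2 hf.2)
    refine List.prod_induction _ (fun _ _ ↦ IsCoprime.mul_right) isCoprime_one_right ?_
    simp only [List.mem_map]
    rintro _ ⟨y, hy, rfl⟩
    refine IsCoprime.pow (pairwise_coprime_X_sub_C Function.injective_id fun hxy ↦ ?_)
    exact hl.1 (List.mem_map.2 ⟨y, hy, hxy.symm⟩)

theorem eq_zero_of_jet_eq_zero {l : List (ℂ × ℕ)} (hl : (l.map Prod.fst).Nodup) {f : ℂ[X]}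
    (hf : f.degree < (l.map Prod.snd).sum) (h : jet l f = 0) : f = 0 := by
  refine eq_zero_of_dvd_of_degree_lt (prod_X_sub_C_pow_dvd hl (pow_dvd_of_jet_eq_zero h)) ?_
  rwa [degree_prod_X_sub_C_pow]

/-- Hermite interpolation: the leading coefficient is a linear function of the jets. -/
theorem exists_dotProduct_jet_eq_coeff {l : List (ℂ × ℕ)} (hl : (l.map Prod.fst).Nodup) {k : ℕ}
    (hk : (l.map Prod.snd).sum = k + 1) :
    ∃ φ : JordanIdx l → ℂ, ∀ f : ℂ[X], f.degree < (k + 1 : ℕ) → φ ⬝ᵥ jet l f = f.coeff k := by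
  obtain ⟨G, hG⟩ := (jet l ∘ₗ (degreeLT ℂ (k + 1)).subtype).exists_leftInverse_of_injective <| by
    rw [LinearMap.ker_eq_bot']
    rintro ⟨f, hf⟩ hjet
    rw [mem_degreeLT, ← hk] at hf
    simpa using eq_zero_of_jet_eq_zero hl hf hjet
  refine ⟨(dotProductEquiv ℂ _).symm (lcoeff ℂ k ∘ₗ (degreeLT ℂ (k + 1)).subtype ∘ₗ G), ?_⟩
  intro f hf
  have hGf := LinearMap.congr_fun hG ⟨f, mem_degreeLT.2 hf⟩
  rw [← dotProductEquiv_apply_apply, LinearEquiv.apply_symm_apply]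
  exact congrArg (fun g : degreeLT ℂ (k + 1) ↦ (g : ℂ[X]).coeff k) hGf

theorem degE_jordanPen {l : List (ℂ × ℕ)} (hl : (l.map Prod.fst).Nodup) {a b : ℕ}
    (hs : (l.map Prod.snd).sum = a + b + 1) :
    DegE (jordanPen l) ((shiftPen b (b + 1)).directSum (shiftPen a (a + 1)).transpose) := by
  obtain ⟨φ, hφ⟩ := exists_dotProduct_jet_eq_coeff hl hs
  have hcoeff : ∀ i ≤ a + b,
      φ ⬝ᵥ (jordanPen l).1 ^ i *ᵥ jet l 1 = (X ^ i : ℂ[X]).coeff (a + b) := by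
    intro i hi
    rw [jordanPen_fst_pow_mulVec_jet_one, hφ]
    rw [degree_X_pow]
    exact_mod_cast Nat.lt_succ_of_le hi
  have h := degE_of_krylov (T := (jordanPen l).1) (v := jet l 1) (φ := φ) (a := a) (b := b)
    (fun i hi ↦ by rw [hcoeff i hi.le, coeff_X_pow, if_neg hi.ne'])
    (by rw [hcoeff _ le_rfl, coeff_X_pow, if_pos rfl])
  rwa [← jordanPen_snd l] at h

theorem degC_canon_H_M_M {l : List (ℂ × ℕ)} (hl : (l.map Prod.fst).Nodup) {a b : ℕ}
    (hs : (l.map Prod.snd).sum = a + b + 1) :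
    DegC (canon (l.map fun x ↦ .H x.1 x.2)) (canon [.M b, .M a]) := by
  have hunit : DegC (shiftPen a (a + 1)).hyperbolic (canon [.M a]) := by
    have : IsEmpty (CanonIdx []) := inferInstanceAs (IsEmpty Empty)
    rw [← CanonBlock.pen_M]
    exact degC_directSum_of_isEmpty _ _
  have hsplit : DegC (canon (l.map fun x ↦ .H x.1 x.2)) ((shiftPen b (b + 1)).hyperbolic.directSum
      (shiftPen a (a + 1)).transpose.hyperbolic) :=
    (degC_canon_jordanPen l).trans
      ((degE_jordanPen hl hs).hyperbolic.trans (degC_hyperbolic_directSum _ _))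
  refine hsplit.trans ?_
  change DegC _ ((CanonBlock.M b).pen.hyperbolic.directSum (canon [.M a]))
  rw [CanonBlock.pen_M]
  exact (DegC.refl _).directSum ((degC_hyperbolic_transpose _).trans hunit)

end JordanSums

/-! ### Skew types and their order -/

section SkewTypes

variable {α : Type*}

/-- The data of a canonical form: the indices `k` of the blocks `M k`, and the eigenvalues and sizes
of the blocks `H μ e`. Blocks of size `e = 0` are allowed, which makes the steps below uniform. -/
structure SkewType (α : Type*) where
  /-- The indices of the blocks `M k`. -/
  ind : Multiset ℕ
  /-- The eigenvalues and sizes of the blocks `H μ e`. -/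
  jor : Multiset (α × ℕ)

/-- The sum of the sizes in a multiset of Jordan blocks. -/
def jordanSize (E : Multiset (α × ℕ)) : ℕ := (E.map Prod.snd).sum

/-- The order of a skew-symmetric matrix pencil of the given type. -/
def SkewType.size (T : SkewType α) : ℕ := 2 * T.ind.sum + T.ind.card + 2 * jordanSize T.jor

/-- The type without the blocks of size zero. -/
def SkewType.reduced (T : SkewType α) : SkewType α := ⟨T.ind, T.jor.filter fun x ↦ 0 < x.2⟩

/-- The elementary degenerations between skew types: moving a box between two blocks, and merging
Jordan blocks with distinct eigenvalues into a pair of `M`-blocks. -/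
inductive Step : SkewType α → SkewType α → Prop
  | index_index (K : Multiset ℕ) (E : Multiset (α × ℕ)) {a c : ℕ} (h : a + 1 ≤ c) :
      Step ⟨(a + 1) ::ₘ c ::ₘ K, E⟩ ⟨a ::ₘ (c + 1) ::ₘ K, E⟩
  | index_jordan (K : Multiset ℕ) (E : Multiset (α × ℕ)) (a e : ℕ) (μ : α) :
      Step ⟨(a + 1) ::ₘ K, (μ, e) ::ₘ E⟩ ⟨a ::ₘ K, (μ, e + 1) ::ₘ E⟩
  | jordan_jordan (K : Multiset ℕ) (E : Multiset (α × ℕ)) {e f : ℕ} (μ : α) (h : e + 1 ≤ f) :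
      Step ⟨K, (μ, f + 1) ::ₘ (μ, e) ::ₘ E⟩ ⟨K, (μ, f) ::ₘ (μ, e + 1) ::ₘ E⟩
  | merge (K : Multiset ℕ) (E : Multiset (α × ℕ)) {a b : ℕ} (S : Finset α) (m : α → ℕ)
      (h : ∑ μ ∈ S, m μ = a + b + 1) :
      Step ⟨K, S.val.map (fun μ ↦ (μ, m μ)) + E⟩ ⟨b ::ₘ a ::ₘ K, E⟩

theorem jordanSize_cons (x : α × ℕ) (E : Multiset (α × ℕ)) :
    jordanSize (x ::ₘ E) = x.2 + jordanSize E := by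
  simp [jordanSize]

theorem jordanSize_map_add (S : Finset α) (m : α → ℕ) (E : Multiset (α × ℕ)) :
    jordanSize (S.val.map (fun μ ↦ (μ, m μ)) + E) = ∑ μ ∈ S, m μ + jordanSize E := by
  simp [jordanSize]

theorem snd_le_jordanSize {E : Multiset (α × ℕ)} {x : α × ℕ} (h : x ∈ E) : x.2 ≤ jordanSize E :=
  Multiset.le_sum_of_mem (Multiset.mem_map_of_mem _ h)

theorem sum_snd_sq_le (E : Multiset (α × ℕ)) : (E.map fun x ↦ x.2 ^ 2).sum ≤ jordanSize E ^ 2 := by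
  induction E using Multiset.induction with
  | empty => simp [jordanSize]
  | cons x E ih =>
    rw [jordanSize_cons, Multiset.map_cons, Multiset.sum_cons]
    nlinarith [Nat.zero_le (x.2 * jordanSize E)]

theorem Step.size_eq {T T' : SkewType α} (h : Step T T') : T.size = T'.size := by
  cases h <;>
    simp only [SkewType.size, Multiset.sum_cons, Multiset.card_cons, jordanSize_cons,
      jordanSize_map_add] <;> omega

theorem Step.card_ind {T T' : SkewType α} (h : Step T T') :
    T.ind.card = T'.ind.card ∨ T.ind.card + 2 = T'.ind.card := by
  cases h <;> simp

/-- The sum of squares of the indices, plus the deviation of the sum of squares of the sizes of the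
Jordan blocks from its maximum. It decreases when boxes are moved inside `ind` or inside `jor`. -/
def SkewType.spread (T : SkewType α) : ℕ :=
  (T.ind.map fun k ↦ k ^ 2).sum + (jordanSize T.jor ^ 2 - (T.jor.map fun x ↦ x.2 ^ 2).sum)

theorem Step.lex {T T' : SkewType α} (h : Step T T') :
    Prod.Lex (· < ·) (Prod.Lex (· < ·) (· < ·))
      (T.ind.card, jordanSize T.jor, T.spread) (T'.ind.card, jordanSize T'.jor, T'.spread) := by
  cases h with
  | @index_index K E a c hac =>
    simp only [Prod.lex_def, SkewType.spread, Multiset.card_cons, Multiset.map_cons,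
      Multiset.sum_cons]
    exact .inr ⟨trivial, .inr ⟨trivial, by nlinarith⟩⟩
  | index_jordan K E a e μ => simp [Prod.lex_def, jordanSize_cons]
  | @jordan_jordan K E e f μ hef =>
    have hsum : jordanSize ((μ, f + 1) ::ₘ (μ, e) ::ₘ E) =
        jordanSize ((μ, f) ::ₘ (μ, e + 1) ::ₘ E) := by
      simp only [jordanSize_cons]; ring
    have h1 := sum_snd_sq_le ((μ, f + 1) ::ₘ (μ, e) ::ₘ E)
    have hlt : (((μ, f) ::ₘ (μ, e + 1) ::ₘ E).map fun x ↦ x.2 ^ 2).sum <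
        (((μ, f + 1) ::ₘ (μ, e) ::ₘ E).map fun x ↦ x.2 ^ 2).sum := by
      simp only [Multiset.map_cons, Multiset.sum_cons]
      nlinarith
    simp only [Prod.lex_def, SkewType.spread]
    rw [hsum] at h1 ⊢
    exact .inr ⟨trivial, .inr ⟨rfl, by omega⟩⟩
  | merge K E S m hm => simp [Prod.lex_def]

theorem wellFounded_step : WellFounded (Step (α := α)) :=
  Subrelation.wf Step.lex <| InvImage.wf _ <| WellFounded.prod_lex wellFounded_lt <|
    WellFounded.prod_lex wellFounded_lt wellFounded_lt

theorem size_eq_of_reflTransGen_step {T T' : SkewType α} (h : Relation.ReflTransGen Step T T') :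
    T.size = T'.size := by
  induction h with
  | refl => rfl
  | tail _ h ih => exact ih.trans h.size_eq

theorem exists_reflTransGen_step_card_add_two {T T' : SkewType α}
    (h : Relation.ReflTransGen Step T T') (hlt : T.ind.card < T'.ind.card) :
    ∃ T₀, Relation.ReflTransGen Step T T₀ ∧ Relation.ReflTransGen Step T₀ T' ∧
      T₀.ind.card + 2 = T'.ind.card := by
  induction h with
  | refl => exact absurd hlt (lt_irrefl _)
  | @tail T₁ T' h₁ h ih =>
    obtain heq | heq := h.card_ind
    · obtain ⟨T₀, h₀, h₀', hcard⟩ := ih (heq ▸ hlt)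
      exact ⟨T₀, h₀, h₀'.tail h, hcard.trans heq⟩
    · exact ⟨T₁, h₁, .single h, heq⟩

end SkewTypes

/-! ### Degenerations along steps -/

section StepDegenerations

/-- The canonical blocks of a pencil of the given type. -/
def SkewType.blocks (T : SkewType ℂ) : Multiset CanonBlock :=
  T.ind.map CanonBlock.M + T.jor.map fun x ↦ CanonBlock.H x.1 x.2

/-- The canonical pencil of the given type, for some order of its blocks. -/
def SkewType.pen (T : SkewType ℂ) : Pen (CanonIdx T.blocks.toList) (CanonIdx T.blocks.toList) :=
  canon T.blocks.toList

variable {T T' : SkewType ℂ}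

theorem degC_pen_of_canon {l l' : List CanonBlock} (h : DegC (canon l) (canon l'))
    (u : Multiset CanonBlock) (hT : T.blocks = ↑l + u) (hT' : T'.blocks = ↑l' + u) :
    DegC T.pen T'.pen := by
  have hp : T.blocks.toList.Perm (u.toList ++ l) := by
    simp [← Multiset.coe_eq_coe, ← Multiset.coe_add, hT, add_comm]
  have hp' : (u.toList ++ l').Perm T'.blocks.toList := by
    simp [← Multiset.coe_eq_coe, ← Multiset.coe_add, hT', add_comm]
  exact (degC_canon_of_perm hp).trans ((h.canon_append _).trans (degC_canon_of_perm hp'))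

theorem Step.degC (h : Step T T') : DegC T.pen T'.pen := by
  cases h with
  | @index_index K E a c hac =>
    apply degC_pen_of_canon (degC_canon_M_M hac) (SkewType.blocks ⟨K, E⟩) <;>
      simp [SkewType.blocks, ← Multiset.cons_coe]
  | index_jordan K E a e μ =>
    apply degC_pen_of_canon (degC_canon_M_H a e μ) (SkewType.blocks ⟨K, E⟩) <;>
      simp [SkewType.blocks, ← Multiset.cons_coe, Multiset.cons_swap (CanonBlock.H _ _)]
  | @jordan_jordan K E e f μ hef =>
    apply degC_pen_of_canon (degC_canon_H_H μ hef) (SkewType.blocks ⟨K, E⟩) <;>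
      simp [SkewType.blocks, ← Multiset.cons_coe]
  | @merge K E a b S m hm =>
    have hS : ((S.toList.map fun μ ↦ (μ, m μ)).map Prod.fst).Nodup := by
      simpa [Function.comp_def] using S.nodup_toList
    have hsum : ((S.toList.map fun μ ↦ (μ, m μ)).map Prod.snd).sum = a + b + 1 := by
      simp [← hm, Function.comp_def]
    apply degC_pen_of_canon (degC_canon_H_M_M hS hsum) (SkewType.blocks ⟨K, E⟩)
    · simp only [SkewType.blocks, Multiset.map_add, Multiset.map_map, Function.comp_def,
        List.map_map, ← Multiset.map_coe, Finset.coe_toList]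
      abel
    · simp [SkewType.blocks, ← Multiset.cons_coe]

theorem degC_pen_of_reflTransGen_step (h : Relation.ReflTransGen Step T T') :
    DegC T.pen T'.pen := by
  induction h with
  | refl => exact DegC.refl _
  | tail _ h ih => exact ih.trans h.degC

theorem degC_pen_filter_pos (K : Multiset ℕ) (E G : Multiset (ℂ × ℕ)) :
    DegC (SkewType.pen ⟨K, E + G⟩) (SkewType.pen ⟨K, E.filter (fun x ↦ 0 < x.2) + G⟩) ∧
      DegC (SkewType.pen ⟨K, E.filter (fun x ↦ 0 < x.2) + G⟩) (SkewType.pen ⟨K, E + G⟩) := by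
  induction E using Multiset.induction generalizing G with
  | empty => exact ⟨DegC.refl _, DegC.refl _⟩
  | cons x E ih =>
    obtain ⟨ν, e⟩ := x
    obtain rfl | he := Nat.eq_zero_or_pos e
    · rw [Multiset.filter_cons_of_neg _ (by simp), Multiset.cons_add]
      have hcons : SkewType.blocks ⟨K, (ν, 0) ::ₘ (E + G)⟩ =
          ↑[CanonBlock.H ν 0] + SkewType.blocks ⟨K, E + G⟩ := by simp [SkewType.blocks]
      have hnil : SkewType.blocks ⟨K, E + G⟩ =
          ↑([] : List CanonBlock) + SkewType.blocks ⟨K, E + G⟩ := by simp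
      exact ⟨(degC_pen_of_canon (degC_canon_H_zero_nil ν) _ hcons hnil).trans (ih G).1,
        (ih G).2.trans (degC_pen_of_canon (degC_canon_nil_H_zero ν) _ hnil hcons)⟩
    · rw [Multiset.filter_cons_of_pos _ (by simpa using he), Multiset.cons_add, Multiset.cons_add,
        ← Multiset.add_cons, ← Multiset.add_cons]
      exact ih _

theorem degC_pen_of_reduced_eq (h : T.reduced = T'.reduced) : DegC T.pen T'.pen := by
  obtain ⟨K, E⟩ := T
  obtain ⟨K', E'⟩ := T'
  simp only [SkewType.reduced, SkewType.mk.injEq] at h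
  obtain ⟨rfl, hE⟩ := h
  have hT := (degC_pen_filter_pos K E 0).1
  have hT' := (degC_pen_filter_pos K E' 0).2
  rw [add_zero, add_zero] at hT hT'
  rw [hE] at hT
  exact hT.trans hT'

end StepDegenerations

/-! ### Counting functions of skew types -/

section Counting

variable {α : Type*} [DecidableEq α]

/-- The invariant of the indices of `M`-blocks which records the sizes of the kernels of the chain
maps of a pencil. -/
def indexSum (K : Multiset ℕ) (s : ℕ) : ℕ := (K.map (s - ·)).sum

/-- The number of indices which are at most `s`. -/
def indexCount (K : Multiset ℕ) (s : ℕ) : ℕ := K.countP (· ≤ s)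

/-- The number of boxes in the first `s` columns of the Young diagram of the Jordan blocks with
eigenvalue `ν`. -/
def jordanSum (E : Multiset (α × ℕ)) (ν : α) (s : ℕ) : ℕ :=
  (E.map fun x ↦ if x.1 = ν then min s x.2 else 0).sum

/-- The number of Jordan blocks with eigenvalue `ν` of size greater than `s`. -/
def jordanCount (E : Multiset (α × ℕ)) (ν : α) (s : ℕ) : ℕ := E.countP fun x ↦ x.1 = ν ∧ s < x.2

/-- The sum of the sizes of the Jordan blocks with eigenvalue `ν`. -/
def jordanTotal (E : Multiset (α × ℕ)) (ν : α) : ℕ :=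
  (E.map fun x ↦ if x.1 = ν then x.2 else 0).sum

variable (K K₁ K₂ : Multiset ℕ) (E E₁ E₂ : Multiset (α × ℕ)) (ν : α) (s : ℕ)

theorem indexSum_zero : indexSum K 0 = 0 := by simp [indexSum]

theorem indexSum_cons (k : ℕ) : indexSum (k ::ₘ K) s = (s - k) + indexSum K s := by simp [indexSum]

theorem indexSum_succ : indexSum K (s + 1) = indexSum K s + indexCount K s := by
  induction K using Multiset.induction with
  | empty => simp [indexSum, indexCount]
  | cons k K ih =>
    rw [indexSum_cons, indexSum_cons, ih, indexCount, indexCount, Multiset.countP_cons]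
    split_ifs <;> omega

theorem indexCount_le_card : indexCount K s ≤ K.card := Multiset.countP_le_card _ _

theorem indexCount_zero : indexCount K 0 = K.count 0 := by
  simp [indexCount, Multiset.count, eq_comm]

theorem indexCount_succ : indexCount K (s + 1) = indexCount K s + K.count (s + 1) := by
  induction K using Multiset.induction with
  | empty => simp [indexCount]
  | cons k K ih =>
    simp only [indexCount, Multiset.countP_cons, Multiset.count_cons] at ih ⊢
    split_ifs <;> omega

theorem card_mul_le_indexSum_add_sum : K.card * s ≤ indexSum K s + K.sum := by
  induction K using Multiset.induction with
  | empty => simp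
  | cons k K ih => rw [indexSum_cons, Multiset.card_cons, Multiset.sum_cons, add_mul]; omega

variable {K K₁ K₂ s} in
theorem indexCount_eq_card (h : ∀ k ∈ K, k ≤ s) : indexCount K s = K.card :=
  Multiset.countP_eq_card.2 h

variable {K s} in
theorem indexSum_add_sum (h : ∀ k ∈ K, k ≤ s) : indexSum K s + K.sum = K.card * s := by
  induction K using Multiset.induction with
  | empty => simp [indexSum]
  | cons k K ih =>
    rw [indexSum_cons, Multiset.card_cons, Multiset.sum_cons, add_mul,
      ← ih fun x hx ↦ h x (Multiset.mem_cons_of_mem hx)]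
    have := h k (Multiset.mem_cons_self _ _)
    omega

variable {K₁ K₂} in
theorem eq_of_indexSum_eq (h : ∀ s, indexSum K₁ s = indexSum K₂ s) : K₁ = K₂ := by
  have hcount (s : ℕ) : indexCount K₁ s = indexCount K₂ s := by
    have := h (s + 1)
    rw [indexSum_succ, indexSum_succ, h s] at this
    omega
  refine Multiset.ext.2 fun s ↦ ?_
  rcases s with _ | s
  · rw [← indexCount_zero, ← indexCount_zero, hcount]
  · have := hcount (s + 1)
    rw [indexCount_succ, indexCount_succ, hcount s] at this
    omega

variable {K₁ K₂ s} in
/-- Where the defect `indexSum K₂ - indexSum K₁ ≥ 0` vanishes its slope cannot be negative just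
before, so any positive slope just after is due to indices of `K₂` at this point. -/
theorem indexCount_sub_le_count (h : ∀ t, indexSum K₁ t ≤ indexSum K₂ t)
    (hs : indexSum K₂ s = indexSum K₁ s) (hlt : indexCount K₁ s < indexCount K₂ s) :
    indexCount K₂ s - indexCount K₁ s ≤ K₂.count s := by
  rcases s with _ | s
  · rw [← indexCount_zero]; omega
  · have := h s
    rw [indexSum_succ, indexSum_succ] at hs
    rw [indexCount_succ, indexCount_succ] at hlt ⊢
    omega

variable {K₁ K₂ s} in
theorem mem_of_indexSum_lt_succ (h : ∀ t, indexSum K₁ t ≤ indexSum K₂ t)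
    (hs : indexSum K₂ s = indexSum K₁ s) (hlt : indexSum K₁ (s + 1) < indexSum K₂ (s + 1)) :
    s ∈ K₂ := by
  rw [indexSum_succ, indexSum_succ] at hlt
  have := indexCount_sub_le_count h hs (by omega)
  exact Multiset.count_pos.1 (by omega)

variable {K₁ K₂ s} in
theorem mem_of_indexSum_lt_pred (h : ∀ t, indexSum K₁ t ≤ indexSum K₂ t)
    (hs : indexSum K₂ (s + 1) = indexSum K₁ (s + 1)) (hlt : indexSum K₁ s < indexSum K₂ s) :
    s + 1 ∈ K₂ := by
  have hnext := h (s + 1 + 1)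
  rw [indexSum_succ, indexSum_succ K₂, indexCount_succ, indexCount_succ] at hnext
  rw [indexSum_succ, indexSum_succ] at hs hnext
  exact Multiset.count_pos.1 (by omega)

theorem jordanSum_zero : jordanSum E ν 0 = 0 := by simp [jordanSum]

theorem jordanSum_cons (x : α × ℕ) :
    jordanSum (x ::ₘ E) ν s = (if x.1 = ν then min s x.2 else 0) + jordanSum E ν s := by
  simp [jordanSum]

theorem jordanSum_map_add (S : Finset α) (m : α → ℕ) :
    jordanSum (S.val.map (fun μ ↦ (μ, m μ)) + E) ν s =
      (if ν ∈ S then min s (m ν) else 0) + jordanSum E ν s := by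
  simp [jordanSum]

theorem jordanSum_succ : jordanSum E ν (s + 1) = jordanSum E ν s + jordanCount E ν s := by
  induction E using Multiset.induction with
  | empty => simp [jordanSum, jordanCount]
  | cons x E ih =>
    simp only [jordanSum_cons, jordanCount, Multiset.countP_cons] at ih ⊢
    by_cases h : x.1 = ν <;> simp only [h, true_and, false_and, if_false] <;>
      (try split_ifs) <;> omega

variable {s} in
theorem jordanCount_eq_add_countP {t : ℕ} (h : s ≤ t) :
    jordanCount E ν s = jordanCount E ν t + E.countP fun x ↦ x.1 = ν ∧ s < x.2 ∧ x.2 ≤ t := by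
  induction E using Multiset.induction with
  | empty => simp [jordanCount]
  | cons x E ih =>
    simp only [jordanCount, Multiset.countP_cons] at ih ⊢
    by_cases hx : x.1 = ν <;> simp only [hx, true_and, false_and, if_false] <;>
      (try split_ifs) <;> omega

theorem jordanCount_antitone : Antitone (jordanCount E ν) := fun _ _ h ↦
  (jordanCount_eq_add_countP E ν h).symm ▸ Nat.le_add_right _ _

theorem jordanCount_eq_add_count :
    jordanCount E ν s = jordanCount E ν (s + 1) + E.count (ν, s + 1) := by
  rw [jordanCount_eq_add_countP E ν s.le_succ, Multiset.count]
  congr 1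
  refine Multiset.countP_congr rfl fun x _ ↦ ?_
  rw [Prod.ext_iff]
  exact propext ⟨fun h ↦ ⟨h.1.symm, le_antisymm h.2.1 h.2.2⟩,
    fun h ↦ ⟨h.1.symm, Nat.succ_le_of_lt (h.2 ▸ s.lt_succ_self), h.2.ge⟩⟩

theorem jordanSum_le_jordanTotal : jordanSum E ν s ≤ jordanTotal E ν :=
  Multiset.sum_map_le_sum_map _ _ fun _ _ ↦ by split_ifs <;> simp

variable {E ν s} in
theorem jordanSum_eq_jordanTotal (h : ∀ x ∈ E, x.1 = ν → x.2 ≤ s) :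
    jordanSum E ν s = jordanTotal E ν := by
  refine congrArg Multiset.sum (Multiset.map_congr rfl fun x hx ↦ ?_)
  split_ifs with hν
  · exact min_eq_right (h x hx hν)
  · rfl

theorem jordanTotal_le_jordanSize : jordanTotal E ν ≤ jordanSize E :=
  Multiset.sum_map_le_sum_map _ _ fun _ _ ↦ by split_ifs <;> simp

theorem jordanSum_le_jordanSize : jordanSum E ν s ≤ jordanSize E :=
  (jordanSum_le_jordanTotal E ν s).trans (jordanTotal_le_jordanSize E ν)

variable {E} in
theorem sum_jordanTotal {S : Finset α} (h : ∀ x ∈ E, x.1 ∈ S) :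
    ∑ ν ∈ S, jordanTotal E ν = jordanSize E := by
  induction E using Multiset.induction with
  | empty => simp [jordanTotal, jordanSize]
  | cons x E ih =>
    have hcons (ν : α) :
        jordanTotal (x ::ₘ E) ν = (if x.1 = ν then x.2 else 0) + jordanTotal E ν := by
      simp [jordanTotal]
    simp only [hcons, Finset.sum_add_distrib, jordanSize_cons,
      ih fun y hy ↦ h y (Multiset.mem_cons_of_mem hy)]
    simp [h x (Multiset.mem_cons_self _ _)]

theorem exists_finset_jordanTotal : ∃ S : Finset α, ν ∈ S ∧ (∀ μ ∉ S, jordanTotal E₁ μ = 0) ∧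
    ∑ μ ∈ S, jordanTotal E₁ μ = jordanSize E₁ ∧ ∑ μ ∈ S, jordanTotal E₂ μ = jordanSize E₂ := by
  have hmem {x : α × ℕ} (hx : x ∈ E₁ ∨ x ∈ E₂) :
      x.1 ∈ insert ν ((E₁ + E₂).map Prod.fst).toFinset := by
    simpa [← exists_or] using .inr ⟨x.2, hx⟩
  refine ⟨_, Finset.mem_insert_self ν _, fun μ hμ ↦ ?_,
    sum_jordanTotal fun x hx ↦ hmem (.inl hx), sum_jordanTotal fun x hx ↦ hmem (.inr hx)⟩
  refine Multiset.sum_eq_zero fun y hy ↦ ?_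
  obtain ⟨x, hx, rfl⟩ := Multiset.mem_map.1 hy
  exact if_neg fun heq : x.1 = μ ↦ hμ (heq ▸ hmem (.inl hx))

variable {E₁ E₂} in
theorem filter_pos_eq_of_jordanSum_eq (h : ∀ ν s, jordanSum E₁ ν s = jordanSum E₂ ν s) :
    E₁.filter (fun x ↦ 0 < x.2) = E₂.filter fun x ↦ 0 < x.2 := by
  have hcount (ν : α) (s : ℕ) : jordanCount E₁ ν s = jordanCount E₂ ν s := by
    have := h ν (s + 1)
    rw [jordanSum_succ, jordanSum_succ, h ν s] at this
    omega
  refine Multiset.ext.2 fun ⟨ν, e⟩ ↦ ?_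
  rw [Multiset.count_filter, Multiset.count_filter]
  rcases e with _ | e
  · simp
  · have := hcount ν e
    rw [jordanCount_eq_add_count E₁, jordanCount_eq_add_count E₂, hcount ν (e + 1)] at this
    simpa using this

end Counting

/-! ### Domination of skew types is generated by steps -/

section Dominates

variable {α : Type*} [DecidableEq α]

/-- The inequalities between the invariants of skew types `T₁` and `T₂` of the same size which hold
if pencils of type `T₁` degenerate to pencils of type `T₂`, where `T₂` has `2 * d` more
`M`-blocks. -/
structure Dominates (d : ℕ) (T₁ T₂ : SkewType α) : Prop where
  card_ind : T₂.ind.card = T₁.ind.card + 2 * d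
  size_eq : T₁.size = T₂.size
  indexSum_le (s : ℕ) : indexSum T₁.ind s ≤ indexSum T₂.ind s
  jordanSum_le (ν : α) (s : ℕ) : jordanSum T₁.jor ν s ≤ d * s + jordanSum T₂.jor ν s

/-- `T₂` can be reached by a step from a type which is still dominated by `T₁`. -/
def HasStep (T₁ T₂ : SkewType α) : Prop := ∃ d T, Dominates d T₁ T ∧ Step T T₂

variable {d : ℕ} {T₁ T₂ : SkewType α}

namespace Dominates

theorem sum_ind_add_jordanSize (h : Dominates d T₁ T₂) :
    T₁.ind.sum + jordanSize T₁.jor = T₂.ind.sum + jordanSize T₂.jor + d := by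
  have hsize := h.size_eq
  have hcard := h.card_ind
  simp only [SkewType.size] at hsize
  omega

variable {K : Multiset ℕ} {E : Multiset (α × ℕ)}

theorem hasStep_index_index {a b : ℕ} (h : Dominates d T₁ ⟨a ::ₘ b ::ₘ K, E⟩) (hab : a + 2 ≤ b)
    (hlt : ∀ s, a < s → s < b → indexSum T₁.ind s < indexSum (a ::ₘ b ::ₘ K) s) :
    HasStep T₁ ⟨a ::ₘ b ::ₘ K, E⟩ := by
  obtain ⟨c, rfl⟩ := Nat.exists_eq_add_of_le' (Nat.one_le_of_lt hab)
  have hstep := Step.index_index K E (show a + 1 ≤ c by omega)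
  refine ⟨d, _, ⟨by simpa using h.card_ind, h.size_eq.trans hstep.size_eq.symm, fun s ↦ ?_,
    h.jordanSum_le⟩, hstep⟩
  have hle := h.indexSum_le s
  have hlt := hlt s
  simp only [indexSum_cons] at hle hlt ⊢
  omega

theorem hasStep_index_jordan {a e : ℕ} {μ : α} (h : Dominates d T₁ ⟨a ::ₘ K, (μ, e + 1) ::ₘ E⟩)
    (hind : ∀ s, a < s → indexSum T₁.ind s < indexSum (a ::ₘ K) s)
    (hjor : ∀ s, e < s → jordanSum T₁.jor μ s < d * s + jordanSum ((μ, e + 1) ::ₘ E) μ s) :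
    HasStep T₁ ⟨a ::ₘ K, (μ, e + 1) ::ₘ E⟩ := by
  have hstep := Step.index_jordan K E a e μ
  refine ⟨d, _, ⟨by simpa using h.card_ind, h.size_eq.trans hstep.size_eq.symm, fun s ↦ ?_,
    fun ν s ↦ ?_⟩, hstep⟩
  · have hle := h.indexSum_le s
    have hlt := hind s
    simp only [indexSum_cons] at hle hlt ⊢
    omega
  · have hle := h.jordanSum_le ν s
    have hlt := hjor s
    simp only [jordanSum_cons] at hle hlt ⊢
    split_ifs at hle ⊢ with hν
    · subst hν
      simp only [if_true] at hlt
      omega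
    · exact hle

theorem hasStep_jordan_jordan {e f : ℕ} {μ : α}
    (h : Dominates d T₁ ⟨K, (μ, f) ::ₘ (μ, e + 1) ::ₘ E⟩) (hef : e + 1 ≤ f)
    (hlt : ∀ s, e < s → s ≤ f →
      jordanSum T₁.jor μ s < d * s + jordanSum ((μ, f) ::ₘ (μ, e + 1) ::ₘ E) μ s) :
    HasStep T₁ ⟨K, (μ, f) ::ₘ (μ, e + 1) ::ₘ E⟩ := by
  have hstep := Step.jordan_jordan K E μ hef
  refine ⟨d, ⟨K, (μ, f + 1) ::ₘ (μ, e) ::ₘ E⟩,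
    ⟨h.card_ind, h.size_eq.trans hstep.size_eq.symm, h.indexSum_le, fun ν s ↦ ?_⟩, hstep⟩
  have hle := h.jordanSum_le ν s
  have hlt := hlt s
  simp only [jordanSum_cons] at hle hlt ⊢
  split_ifs at hle ⊢ with hν
  · subst hν
    simp only [if_true] at hlt
    omega
  · exact hle

theorem hasStep_merge {a b : ℕ} (h : Dominates (d + 1) T₁ ⟨b ::ₘ a ::ₘ K, E⟩) (S : Finset α)
    (m : α → ℕ) (hm : ∑ μ ∈ S, m μ = a + b + 1) (hS : ∀ μ ∉ S, m μ = 0)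
    (hind : ∀ s, indexSum T₁.ind s ≤ indexSum K s)
    (hjor : ∀ ν s, m ν < s →
      jordanSum T₁.jor ν s + (s - m ν) ≤ (d + 1) * s + jordanSum E ν s) :
    HasStep T₁ ⟨b ::ₘ a ::ₘ K, E⟩ := by
  have hstep := Step.merge K E S m hm
  refine ⟨d, _, ⟨?_, h.size_eq.trans hstep.size_eq.symm, hind, fun ν s ↦ ?_⟩, hstep⟩
  · have hcard := h.card_ind
    simp only [Multiset.card_cons] at hcard ⊢
    omega
  · have hle := h.jordanSum_le ν s
    have hlt := hjor ν s
    have hν := hS ν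
    rw [add_mul] at hle hlt
    rw [jordanSum_map_add]
    dsimp only at hle
    split_ifs with hνS
    · omega
    · rw [hν hνS] at hlt
      omega

end Dominates

theorem exists_excursion_or_forall_le (f : ℕ → ℕ) (h0 : f 0 = 0) :
    (∃ i j, i + 2 ≤ j ∧ f i = 0 ∧ f j = 0 ∧ ∀ s, i < s → s < j → 0 < f s) ∨
      ∀ s t, t ≤ s → f s = 0 → f t = 0 := by
  by_contra! h
  obtain ⟨hexc, s, t, hts, hs, ht⟩ := h
  have hex : ∃ j, t ≤ j ∧ f j = 0 := ⟨s, hts, hs⟩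
  have hi : f (Nat.findGreatest (f · = 0) t) = 0 :=
    Nat.findGreatest_spec (P := (f · = 0)) (Nat.zero_le t) h0
  have hit : Nat.findGreatest (f · = 0) t < t :=
    (Nat.findGreatest_le t).lt_of_ne fun heq ↦ ht (heq ▸ hi)
  obtain ⟨htj, hj⟩ := Nat.find_spec hex
  have htj' : t < Nat.find hex := htj.lt_of_ne fun heq ↦ ht (heq ▸ hj)
  obtain ⟨u, hiu, huj, hu⟩ := hexc _ (Nat.find hex) (by omega) hi hj
  rcases le_total u t with hut | hut
  · exact Nat.findGreatest_is_greatest hiu hut (by omega)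
  · exact Nat.find_min hex huj ⟨hut, by omega⟩

theorem exists_eq_cons_cons {β : Type*} {E : Multiset β} (p : β → Prop) [DecidablePred p]
    (h : 2 ≤ E.countP p) : ∃ x y F, E = x ::ₘ y ::ₘ F ∧ p x ∧ p y := by
  obtain ⟨x, hx, hpx⟩ := Multiset.countP_pos.1 (Nat.zero_lt_of_lt h)
  obtain ⟨F, rfl⟩ := Multiset.exists_cons_of_mem hx
  rw [Multiset.countP_cons_of_pos _ hpx] at h
  obtain ⟨y, hy, hpy⟩ := Multiset.countP_pos.1 (Nat.lt_of_succ_le (Nat.le_of_succ_le_succ h))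
  obtain ⟨G, rfl⟩ := Multiset.exists_cons_of_mem hy
  exact ⟨x, y, G, rfl, hpx, hpy⟩

namespace Dominates

theorem hasStep_of_indexSum_excursion (h : Dominates d T₁ T₂) {i j : ℕ} (hij : i + 2 ≤ j)
    (hi : indexSum T₂.ind i = indexSum T₁.ind i) (hj : indexSum T₂.ind j = indexSum T₁.ind j)
    (hlt : ∀ s, i < s → s < j → indexSum T₁.ind s < indexSum T₂.ind s) : HasStep T₁ T₂ := by
  obtain ⟨K₂, E₂⟩ := T₂
  obtain ⟨j, rfl⟩ := Nat.exists_eq_add_of_le' (Nat.one_le_of_lt hij)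
  have hmem_i : i ∈ K₂ :=
    mem_of_indexSum_lt_succ h.indexSum_le hi (hlt _ (by omega) (by omega))
  have hmem_j : j + 1 ∈ K₂ :=
    mem_of_indexSum_lt_pred h.indexSum_le hj (hlt _ (by omega) (by omega))
  obtain ⟨K, rfl⟩ := Multiset.exists_cons_of_mem hmem_i
  obtain ⟨K, rfl⟩ :=
    Multiset.exists_cons_of_mem ((Multiset.mem_cons.1 hmem_j).resolve_left (by omega))
  exact h.hasStep_index_index hij hlt

theorem hasStep_of_jordanSum_excursion (h : Dominates d T₁ T₂) {ν : α} {i j : ℕ} (hij : i + 2 ≤ j)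
    (hi : d * i + jordanSum T₂.jor ν i = jordanSum T₁.jor ν i)
    (hj : d * j + jordanSum T₂.jor ν j = jordanSum T₁.jor ν j)
    (hlt : ∀ s, i < s → s < j → jordanSum T₁.jor ν s < d * s + jordanSum T₂.jor ν s) :
    HasStep T₁ T₂ := by
  obtain ⟨K₂, E₂⟩ := T₂
  obtain ⟨j, rfl⟩ := Nat.exists_eq_add_of_le' (Nat.one_le_of_lt hij)
  have htwo : 2 ≤ E₂.countP fun x ↦ x.1 = ν ∧ i < x.2 ∧ x.2 ≤ j := by
    have hslope_i := hlt (i + 1) (by omega) (by omega)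
    have hslope_j := hlt j (by omega) (by omega)
    rw [jordanSum_succ, jordanSum_succ, mul_add] at hslope_i hj
    have hanti := jordanCount_antitone T₁.jor ν (show i ≤ j by omega)
    have hcount := jordanCount_eq_add_countP E₂ ν (show i ≤ j by omega)
    dsimp only at *
    omega
  obtain ⟨⟨μ, e⟩, ⟨μ', f⟩, F, rfl, ⟨rfl, he⟩, hμ, hf⟩ := exists_eq_cons_cons _ htwo
  dsimp only at hμ he hf
  subst hμ
  rcases le_total f e with hfe | hef
  · obtain ⟨f, rfl⟩ := Nat.exists_eq_add_of_le' (Nat.one_le_of_lt hf.1)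
    exact h.hasStep_jordan_jordan hfe fun s _ _ ↦ hlt s (by omega) (by omega)
  · obtain ⟨e, rfl⟩ := Nat.exists_eq_add_of_le' (Nat.one_le_of_lt he.1)
    rw [Multiset.cons_swap] at h hlt ⊢
    exact h.hasStep_jordan_jordan hef fun s _ _ ↦ hlt s (by omega) (by omega)

theorem indexSum_add_two_mul_le (h : Dominates d T₁ T₂) (hd : 1 ≤ d) {b s : ℕ}
    (hb : ∀ k ∈ T₂.ind, k ≤ b) (hs : b ≤ s) :
    indexSum T₁.ind s + 2 * (s - b) + indexSum T₂.ind b ≤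
      indexSum T₂.ind s + indexSum T₁.ind b := by
  have hcard := h.card_ind
  induction s, hs using Nat.le_induction with
  | base => omega
  | succ s hs ih =>
    have hcount₂ := indexCount_eq_card fun k hk ↦ (hb k hk).trans hs
    have hcount₁ := indexCount_le_card T₁.ind s
    rw [indexSum_succ, indexSum_succ]
    omega

theorem jordanSize_add_indexSum_le (h : Dominates d T₁ T₂) {b : ℕ} (hb : ∀ k ∈ T₂.ind, k ≤ b) :
    jordanSize T₁.jor + indexSum T₂.ind b ≤
      jordanSize T₂.jor + d * (2 * b + 1) + indexSum T₁.ind b := by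
  have hsum := h.sum_ind_add_jordanSize
  have heq := indexSum_add_sum hb
  have hle := card_mul_le_indexSum_add_sum T₁.ind b
  rw [h.card_ind, add_mul] at heq
  linarith

variable (h : Dominates d T₁ T₂) (hstep : ¬HasStep T₁ T₂)
include h hstep

theorem indexSum_eq_of_le {s t : ℕ} (hts : t ≤ s)
    (hs : indexSum T₂.ind s = indexSum T₁.ind s) : indexSum T₂.ind t = indexSum T₁.ind t := by
  have hle := h.indexSum_le
  obtain ⟨i, j, hij, hi, hj, hpos⟩ | hzero :=
    exists_excursion_or_forall_le (fun s ↦ indexSum T₂.ind s - indexSum T₁.ind s)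
      (by simp only [indexSum_zero, tsub_zero])
  · refine absurd (h.hasStep_of_indexSum_excursion hij ?_ ?_ fun s his hsj ↦ ?_) hstep
    · exact ((hle i).antisymm (tsub_eq_zero_iff_le.1 hi)).symm
    · exact ((hle j).antisymm (tsub_eq_zero_iff_le.1 hj)).symm
    · exact tsub_pos_iff_lt.1 (hpos s his hsj)
  · exact ((hle t).antisymm (tsub_eq_zero_iff_le.1 (hzero s t hts (by omega)))).symm

theorem jordanSum_eq_of_le {ν : α} {s t : ℕ} (hts : t ≤ s)
    (hs : d * s + jordanSum T₂.jor ν s = jordanSum T₁.jor ν s) :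
    d * t + jordanSum T₂.jor ν t = jordanSum T₁.jor ν t := by
  have hle := h.jordanSum_le ν
  obtain ⟨i, j, hij, hi, hj, hpos⟩ | hzero :=
    exists_excursion_or_forall_le (fun s ↦ d * s + jordanSum T₂.jor ν s - jordanSum T₁.jor ν s)
      (by simp only [jordanSum_zero, mul_zero, tsub_zero, add_zero])
  · refine absurd (h.hasStep_of_jordanSum_excursion (ν := ν) hij ?_ ?_ fun s his hsj ↦ ?_) hstep
    · exact ((hle i).antisymm (tsub_eq_zero_iff_le.1 hi)).symm
    · exact ((hle j).antisymm (tsub_eq_zero_iff_le.1 hj)).symm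
    · exact tsub_pos_iff_lt.1 (hpos s his hsj)
  · exact ((hle t).antisymm (tsub_eq_zero_iff_le.1 (hzero s t hts (by omega)))).symm

theorem exists_last_indexSum_eq (hne : T₁.ind ≠ T₂.ind) :
    ∃ a ∈ T₂.ind, indexSum T₂.ind a = indexSum T₁.ind a ∧
      ∀ s, a < s → indexSum T₁.ind s < indexSum T₂.ind s := by
  have hex : ∃ s, indexSum T₁.ind s ≠ indexSum T₂.ind s := by
    contrapose! hne
    exact eq_of_indexSum_eq hne
  obtain ⟨a, ha⟩ : ∃ a, Nat.find hex = a + 1 := Nat.exists_eq_succ_of_ne_zero fun h0 ↦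
    Nat.find_spec hex (by rw [h0, indexSum_zero, indexSum_zero])
  have heq : indexSum T₂.ind a = indexSum T₁.ind a :=
    (not_not.1 (Nat.find_min hex (ha ▸ a.lt_succ_self))).symm
  have hlt (s : ℕ) (hs : a < s) : indexSum T₁.ind s < indexSum T₂.ind s :=
    (h.indexSum_le s).lt_of_ne fun hs' ↦
      Nat.find_spec hex (h.indexSum_eq_of_le hstep (ha ▸ hs) hs'.symm).symm
  exact ⟨a, mem_of_indexSum_lt_succ h.indexSum_le heq (hlt _ a.lt_succ_self), heq, hlt⟩

theorem reduced_eq_of_ind_eq (hind : T₁.ind = T₂.ind) : T₁.reduced = T₂.reduced := by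
  have hd : d = 0 := by have := h.card_ind; rw [hind] at this; omega
  have hsize := h.sum_ind_add_jordanSize
  rw [hind] at hsize
  subst hd
  have hlarge {b : ℕ} (hb : jordanSize T₁.jor + jordanSize T₂.jor ≤ b) (ν : α) :
      jordanSum T₁.jor ν b = jordanTotal T₁.jor ν ∧ jordanSum T₂.jor ν b = jordanTotal T₂.jor ν :=
    ⟨jordanSum_eq_jordanTotal fun x hx _ ↦ (snd_le_jordanSize hx).trans (by omega),
      jordanSum_eq_jordanTotal fun x hx _ ↦ (snd_le_jordanSize hx).trans (by omega)⟩
  have hle (ν : α) : jordanTotal T₁.jor ν ≤ jordanTotal T₂.jor ν := by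
    rw [← (hlarge le_rfl ν).1, ← (hlarge le_rfl ν).2]
    simpa using h.jordanSum_le ν (jordanSize T₁.jor + jordanSize T₂.jor)
  have heq (ν : α) : jordanTotal T₁.jor ν = jordanTotal T₂.jor ν := by
    obtain ⟨S, hν, -, hS₁, hS₂⟩ := exists_finset_jordanTotal T₁.jor T₂.jor ν
    exact (Finset.sum_eq_sum_iff_of_le fun ν _ ↦ hle ν).1 (by omega) ν hν
  have hsum (ν : α) (s : ℕ) : jordanSum T₁.jor ν s = jordanSum T₂.jor ν s := by
    have hzero := h.jordanSum_eq_of_le hstep (ν := ν)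
      (Nat.le_add_left s (jordanSize T₁.jor + jordanSize T₂.jor))
    rw [(hlarge (Nat.le_add_right _ s) ν).1, (hlarge (Nat.le_add_right _ s) ν).2, heq, zero_mul,
      zero_mul, zero_add, zero_add] at hzero
    exact (hzero rfl).symm
  rw [SkewType.reduced, SkewType.reduced, hind, filter_pos_eq_of_jordanSum_eq hsum]

section LastZero

variable {a : ℕ} (ha : a ∈ T₂.ind) (hlt : ∀ s, a < s → indexSum T₁.ind s < indexSum T₂.ind s)
include ha hlt

theorem jordanSum_eq_of_mem {x : α × ℕ} (hx : x ∈ T₂.jor) :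
    d * x.2 + jordanSum T₂.jor x.1 x.2 = jordanSum T₁.jor x.1 x.2 := by
  obtain ⟨μ, _ | e⟩ := x
  · simp [jordanSum_zero]
  by_contra hne
  obtain ⟨K₂, E₂⟩ := T₂
  obtain ⟨K, rfl⟩ := Multiset.exists_cons_of_mem ha
  obtain ⟨E, rfl⟩ := Multiset.exists_cons_of_mem hx
  exact hstep (h.hasStep_index_jordan hlt fun s hs ↦
    (h.jordanSum_le μ s).lt_of_ne fun heq ↦ hne (h.jordanSum_eq_of_le hstep hs heq.symm))

theorem le_add_one_of_mem {b : ℕ} (hb : b ∈ T₂.ind) : b ≤ a + 1 := by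
  by_contra! hab
  obtain ⟨K₂, E₂⟩ := T₂
  obtain ⟨K, rfl⟩ := Multiset.exists_cons_of_mem ha
  obtain ⟨K, rfl⟩ := Multiset.exists_cons_of_mem ((Multiset.mem_cons.1 hb).resolve_left (by omega))
  exact hstep (h.hasStep_index_index hab fun s hs _ ↦ hlt s hs)

/-- Beyond its last zero `i`, the `ν`-defect has slope at least one if `1 ≤ d`, as all
`ν`-blocks of `T₂` have size at most `i`. -/
theorem exists_last_jordanSum_eq (ν : α) :
    ∃ i, d * i + jordanTotal T₂.jor ν ≤ jordanTotal T₁.jor ν ∧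
      (1 ≤ d → ∀ s, i ≤ s → jordanSum T₁.jor ν s + (s - i) ≤ d * s + jordanSum T₂.jor ν s) := by
  let p (s : ℕ) : Prop := d * s + jordanSum T₂.jor ν s = jordanSum T₁.jor ν s
  let N := jordanSize T₁.jor + jordanSize T₂.jor
  have hi : p (Nat.findGreatest p N) :=
    Nat.findGreatest_spec (Nat.zero_le N) (by simp [p, jordanSum_zero])
  have hgreatest {s : ℕ} (hs : s ≤ N) (hps : p s) : s ≤ Nat.findGreatest p N :=
    Nat.le_findGreatest hs hps
  generalize Nat.findGreatest p N = i at hi hgreatest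
  have htotal (s : ℕ) (hs : i ≤ s) : jordanSum T₂.jor ν s = jordanTotal T₂.jor ν := by
    refine jordanSum_eq_jordanTotal fun x hx hxν ↦ (hgreatest ?_ ?_).trans hs
    · exact (snd_le_jordanSize hx).trans (Nat.le_add_left _ _)
    · have hzero := h.jordanSum_eq_of_mem hstep ha hlt hx
      rwa [hxν] at hzero
  refine ⟨i, ?_, fun hd s hs ↦ ?_⟩
  · rw [← htotal i le_rfl, hi]
    exact jordanSum_le_jordanTotal _ _ _
  have hcount : jordanCount T₁.jor ν i + 1 ≤ d := by
    have hne : ¬p (i + 1) := fun hp ↦ by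
      have hbound := jordanSum_le_jordanSize T₁.jor ν (i + 1)
      have := Nat.le_mul_of_pos_left (i + 1) hd
      have := hgreatest (by simp only [p] at hp; omega) hp
      omega
    have hle := (h.jordanSum_le ν (i + 1)).lt_of_ne (Ne.symm hne)
    simp only [p] at hi
    rw [htotal i le_rfl] at hi
    rw [htotal _ (by omega), jordanSum_succ, mul_add] at hle
    omega
  induction s, hs using Nat.le_induction with
  | base => simpa using hi.ge
  | succ s hs ih =>
    have hanti := jordanCount_antitone T₁.jor ν hs
    rw [htotal s hs] at ih
    rw [htotal _ (by omega), jordanSum_succ, mul_add]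
    omega

theorem one_le : 1 ≤ d := by
  by_contra! hd
  obtain rfl : d = 0 := by omega
  have htotal (ν : α) : jordanTotal T₂.jor ν ≤ jordanTotal T₁.jor ν := by
    obtain ⟨i, hi, -⟩ := h.exists_last_jordanSum_eq hstep ha hlt ν
    simpa using hi
  have hsize : jordanSize T₂.jor ≤ jordanSize T₁.jor := by
    rcases isEmpty_or_nonempty α with hα | ⟨⟨ν⟩⟩
    · rw [Multiset.eq_zero_of_forall_notMem (s := T₂.jor) fun x ↦ (hα.false x.1).elim]
      exact Nat.zero_le _
    · obtain ⟨S, -, -, hS₁, hS₂⟩ := exists_finset_jordanTotal T₁.jor T₂.jor ν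
      exact hS₁ ▸ hS₂ ▸ Finset.sum_le_sum fun ν _ ↦ htotal ν
  have hcard := h.card_ind
  have hsum := h.sum_ind_add_jordanSize
  have hpos := hlt (a + 1) a.lt_succ_self
  have hle := card_mul_le_indexSum_add_sum T₁.ind (a + 1)
  have heq := indexSum_add_sum fun k hk ↦ h.le_add_one_of_mem hstep ha hlt (b := k) hk
  rw [hcard, mul_zero, add_zero] at heq
  omega

theorem hasStep_of_two_mem [Nonempty α] {b : ℕ} {K : Multiset ℕ} (hb : T₂.ind = b ::ₘ a ::ₘ K)
    (hind : ∀ s, indexSum T₁.ind s ≤ indexSum K s)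
    (hsize : jordanSize T₁.jor < jordanSize T₂.jor + d * (a + b + 2)) : HasStep T₁ T₂ := by
  have hd := h.one_le hstep ha hlt
  obtain ⟨ν₀⟩ := ‹Nonempty α›
  choose i hi hi' using h.exists_last_jordanSum_eq hstep ha hlt
  obtain ⟨S, hν₀, hS, hS₁, hS₂⟩ := exists_finset_jordanTotal T₁.jor T₂.jor ν₀
  have hsum : d * ∑ ν ∈ S, i ν + jordanSize T₂.jor ≤ jordanSize T₁.jor := by
    rw [← hS₁, ← hS₂, Finset.mul_sum, ← Finset.sum_add_distrib]
    exact Finset.sum_le_sum fun ν _ ↦ hi ν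
  have hle : ∑ ν ∈ S, i ν ≤ a + b + 1 := by
    by_contra! hgt
    have := Nat.mul_le_mul_left d (show a + b + 2 ≤ ∑ ν ∈ S, i ν from hgt)
    omega
  have hi0 (ν : α) (hν : ν ∉ S) : i ν = 0 := by
    have := hi ν
    rw [hS ν hν] at this
    exact (Nat.mul_eq_zero.1 (show d * i ν = 0 by omega)).resolve_left (by omega)
  obtain ⟨d, rfl⟩ := Nat.exists_eq_add_of_le' hd
  obtain ⟨K₂, E₂⟩ := T₂
  obtain rfl : K₂ = _ := hb
  -- The eigenvalue `ν₀` absorbs the boxes which are not needed for the bounds `i`.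
  refine h.hasStep_merge S
    (fun ν ↦ i ν + if ν = ν₀ then a + b + 1 - ∑ ν ∈ S, i ν else 0) ?_ (fun ν hν ↦ ?_) hind
    fun ν s hs ↦ ?_
  · rw [Finset.sum_add_distrib, Finset.sum_ite_eq', if_pos hν₀]
    omega
  · simp [hi0 ν hν, show ν ≠ ν₀ from fun heq ↦ hν (heq ▸ hν₀)]
  · have := hi' ν hd s (by omega)
    dsimp only at this
    omega

theorem exists_ind_eq_cons_cons (heq : indexSum T₂.ind a = indexSum T₁.ind a) :
    ∃ b K, T₂.ind = b ::ₘ a ::ₘ K ∧ a ≤ b ∧ (∀ k ∈ T₂.ind, k ≤ b) ∧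
      indexSum T₁.ind b + (b - a) ≤ indexSum T₂.ind b := by
  have hle (k : ℕ) (hk : k ∈ T₂.ind) : k ≤ a + 1 := h.le_add_one_of_mem hstep ha hlt hk
  obtain ⟨K, hK⟩ := Multiset.exists_cons_of_mem ha
  by_cases hmem : a + 1 ∈ T₂.ind
  · obtain ⟨K, rfl⟩ :=
      Multiset.exists_cons_of_mem ((Multiset.mem_cons.1 (hK ▸ hmem)).resolve_left (by omega))
    have := hlt (a + 1) a.lt_succ_self
    exact ⟨a + 1, K, hK.trans (Multiset.cons_swap _ _ _), a.le_succ, hle, by omega⟩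
  · have hle' (k : ℕ) (hk : k ∈ T₂.ind) : k ≤ a :=
      Nat.le_of_lt_succ ((hle k hk).lt_of_ne fun hka ↦ hmem (hka ▸ hk))
    have htwo : 2 ≤ T₂.ind.count a := by
      have hd := h.one_le hstep ha hlt
      have hcard := h.card_ind
      have hcount₂ := indexCount_eq_card hle'
      have hcount₁ := indexCount_le_card T₁.ind a
      have := indexCount_sub_le_count h.indexSum_le heq (by omega)
      omega
    rw [hK, Multiset.count_cons_self] at htwo
    obtain ⟨K, rfl⟩ := Multiset.exists_cons_of_mem (Multiset.count_pos.1 (Nat.le_of_lt_succ htwo))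
    exact ⟨a, K, hK, le_rfl, hle', by omega⟩

end LastZero

omit hstep

theorem reduced_eq_or_hasStep [Nonempty α] : T₁.reduced = T₂.reduced ∨ HasStep T₁ T₂ := by
  by_contra! hcon
  obtain ⟨hne, hstep⟩ := hcon
  obtain ⟨a, ha, heq, hlt⟩ :=
    h.exists_last_indexSum_eq hstep (mt (h.reduced_eq_of_ind_eq hstep) hne)
  obtain ⟨b, K, hK, hab, hle, hb⟩ := h.exists_ind_eq_cons_cons hstep ha hlt heq
  have hba : b ≤ a + 1 :=
    h.le_add_one_of_mem hstep ha hlt (hK ▸ Multiset.mem_cons_self _ _)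
  refine hstep (h.hasStep_of_two_mem hstep ha hlt hK (fun s ↦ ?_) ?_)
  · have hsum : indexSum T₂.ind s = (s - b) + ((s - a) + indexSum K s) := by
      rw [hK, indexSum_cons, indexSum_cons]
    rcases le_total s b with hs | hs
    · rcases le_or_gt s a with hsa | hsa
      · have := h.indexSum_le s
        omega
      · have := hlt s hsa
        omega
    · have := h.indexSum_add_two_mul_le (h.one_le hstep ha hlt) hle hs
      omega
  · have := h.jordanSize_add_indexSum_le hle
    have := h.one_le hstep ha hlt
    obtain rfl | rfl : b = a ∨ b = a + 1 := by omega
    · rw [show d * (b + b + 2) = d * (2 * b + 1) + d by ring]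
      omega
    · rw [show d * (a + (a + 1) + 2) = d * (2 * (a + 1) + 1) by ring]
      omega

end Dominates

theorem Dominates.exists_reflTransGen_step [Nonempty α] (h : Dominates d T₁ T₂) :
    ∃ T, T₁.reduced = T.reduced ∧ Relation.ReflTransGen Step T T₂ := by
  induction T₂ using wellFounded_step.induction generalizing d with
  | _ T₂ ih =>
    obtain heq | ⟨d', T, hT, hstep⟩ := h.reduced_eq_or_hasStep
    · exact ⟨T₂, heq, .refl⟩
    · obtain ⟨T₀, heq, h₀⟩ := ih T hstep hT
      exact ⟨T₀, heq, h₀.tail hstep⟩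

end Dominates

/-! ### Spaces of chains -/

section Chains

variable {m n p q ι κ : Type*}

/-- The linear map `Y ↦ A Y D - B Y C` attached to `X = A - λ B`, where `C - λ D` is
`shiftPen s t`. Its kernel consists of the chains `y₀, …, yₛ₋₁` with `A y₀ = 0`, `A yᵢ₊₁ = B yᵢ`
and, for `t = s + 1`, also `B yₛ₋₁ = 0`. -/
def Pen.chainMap [Fintype n] (s t : ℕ) (X : Pen m n) :
    Matrix n (Fin s) ℂ →ₗ[ℂ] Matrix m (Fin t) ℂ where
  toFun Y := X.1 * Y * (shiftPen s t).2 - X.2 * Y * (shiftPen s t).1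
  map_add' Y Z := by simp only [Matrix.mul_add, Matrix.add_mul]; abel
  map_smul' c Y := by simp [smul_sub]

/-- The dimension of the space of chains `LinearMap.ker (X.chainMap s t)`. -/
def Pen.chainDim [Fintype n] (s t : ℕ) (X : Pen m n) : ℕ :=
  Module.finrank ℂ (LinearMap.ker (X.chainMap s t))

theorem Pen.chainMap_apply [Fintype n] (s t : ℕ) (X : Pen m n) (Y : Matrix n (Fin s) ℂ) :
    X.chainMap s t Y = X.1 * Y * (shiftPen s t).2 - X.2 * Y * (shiftPen s t).1 :=
  rfl

/-- The rank of `X.chainMap s t`. -/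
def Pen.chainRank [Fintype n] (s t : ℕ) (X : Pen m n) : ℕ :=
  Module.finrank ℂ (LinearMap.range (X.chainMap s t))

theorem Pen.chainRank_add_chainDim [Fintype n] (s t : ℕ) (X : Pen m n) :
    X.chainRank s t + X.chainDim s t = Fintype.card n * s := by
  rw [Pen.chainRank, Pen.chainDim, LinearMap.finrank_range_add_finrank_ker, Module.finrank_matrix]
  simp

theorem Pen.chainRank_transform_le [Fintype m] [Fintype n] [Fintype q] (s t : ℕ)
    (F : Matrix p m ℂ) (G : Matrix n q ℂ) (X : Pen m n) :
    (X.transform F G).chainRank s t ≤ X.chainRank s t := by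
  have hcomp : (X.transform F G).chainMap s t =
      mulLeftLinearMap (Fin t) ℂ F ∘ₗ X.chainMap s t ∘ₗ mulLeftLinearMap (Fin s) ℂ G := by
    ext1 Y
    simp [Pen.chainMap_apply, Pen.transform, Matrix.mul_sub, Matrix.mul_assoc]
  rw [Pen.chainRank, hcomp, LinearMap.range_comp]
  exact (Submodule.finrank_map_le _ _).trans
    (Submodule.finrank_mono (LinearMap.range_comp_le_range _ _))

section

attribute [local instance] Matrix.normedAddCommGroup Matrix.normedSpace

theorem Pen.isOpen_setOf_le_chainRank [Finite m] [Fintype n] (s t r : ℕ) :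
    IsOpen {X : Pen m n | r ≤ X.chainRank s t} := by
  have := Fintype.ofFinite m
  have hset : {X : Pen m n | r ≤ X.chainRank s t} =
      {X | (r : Cardinal) ≤ (X.chainMap s t).rank} := by
    ext X
    rw [Set.mem_ofPred_eq, Set.mem_ofPred_eq, LinearMap.rank, ← Module.finrank_eq_rank, Nat.cast_le,
      Pen.chainRank]
  rw [hset]
  simp only [LinearMap.le_rank_iff_exists_linearIndependent_finset, Set.ofPred_exists,
    ← exists_prop]
  refine isOpen_biUnion fun u _ ↦ ?_
  have hcont : Continuous fun (X : Pen m n) (Y : (u : Set (Matrix n (Fin s) ℂ))) ↦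
      X.chainMap s t Y := by
    refine continuous_pi fun Y ↦ ?_
    simp only [Pen.chainMap_apply]
    fun_prop
  exact isOpen_setOfPred_linearIndependent.preimage hcont

end

theorem DegE.chainRank_le [Fintype m] [Fintype n] [Finite p] [Fintype q]
    {X : Pen m n} {Y : Pen p q} (h : DegE X Y) (s t : ℕ) : Y.chainRank s t ≤ X.chainRank s t := by
  obtain ⟨_, hrank, ⟨⟨F, G⟩, rfl⟩⟩ :=
    mem_closure_iff.1 h _ (Pen.isOpen_setOf_le_chainRank s t (Y.chainRank s t))
      (le_refl (Y.chainRank s t))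
  exact le_trans hrank (Pen.chainRank_transform_le s t F G X)

theorem DegE.chainDim_le [Fintype m] [Fintype n] [Finite p] [Fintype q] {X : Pen m n}
    {Y : Pen p q} (h : DegE X Y) (hcard : Fintype.card n = Fintype.card q) (s t : ℕ) :
    X.chainDim s t ≤ Y.chainDim s t := by
  have hX := X.chainRank_add_chainDim s t
  have hY := Y.chainRank_add_chainDim s t
  have hle := h.chainRank_le s t
  rw [hcard] at hX
  omega

theorem DegC.degE [Fintype ι] {P : Pen ι ι} {Q : Pen κ κ} (h : DegC P Q) : DegE P Q :=
  closure_mono (by rintro _ ⟨S, rfl⟩; exact ⟨(Sᵀ, S), rfl⟩) h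

theorem finrank_ker_eq_add_of_fromRows {s : ℕ} {V W : Type*} [AddCommGroup V] [Module ℂ V]
    [AddCommGroup W] [Module ℂ W] [Finite n] [Finite q] {U : Type*} [AddCommGroup U] [Module ℂ U]
    (f : Matrix n (Fin s) ℂ →ₗ[ℂ] V) (g : Matrix q (Fin s) ℂ →ₗ[ℂ] W)
    (h : Matrix (n ⊕ q) (Fin s) ℂ →ₗ[ℂ] U)
    (hfg : ∀ Y Z, h (fromRows Y Z) = 0 ↔ f Y = 0 ∧ g Z = 0) :
    Module.finrank ℂ (LinearMap.ker h) =
      Module.finrank ℂ (LinearMap.ker f) + Module.finrank ℂ (LinearMap.ker g) := by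
  rw [← Module.finrank_prod]
  have hker (Z : Matrix (n ⊕ q) (Fin s) ℂ) (hZ : h Z = 0) : f Z.toRows₁ = 0 ∧ g Z.toRows₂ = 0 :=
    (hfg _ _).1 (by rwa [fromRows_toRows])
  exact LinearEquiv.finrank_eq
    { toFun Z := (⟨Z.1.toRows₁, (hker Z.1 Z.2).1⟩, ⟨Z.1.toRows₂, (hker Z.1 Z.2).2⟩)
      invFun W := ⟨fromRows W.1.1 W.2.1, (hfg _ _).2 ⟨W.1.2, W.2.2⟩⟩
      map_add' _ _ := rfl
      map_smul' _ _ := rfl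
      left_inv Z := Subtype.ext (fromRows_toRows _)
      right_inv _ := rfl }

theorem Pen.chainDim_directSum [Fintype n] [Fintype q] (s t : ℕ) (X : Pen m n) (Y : Pen p q) :
    (X.directSum Y).chainDim s t = X.chainDim s t + Y.chainDim s t := by
  refine finrank_ker_eq_add_of_fromRows _ _ _ fun Z W ↦ ?_
  have hsplit : (X.directSum Y).chainMap s t (fromRows Z W) =
      fromRows (X.chainMap s t Z) (Y.chainMap s t W) := by
    ext (i | i) j <;>
      simp [Pen.chainMap_apply, Pen.directSum, fromBlocks_mul_fromRows, fromRows_mul]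
  rw [hsplit, ← fromRows_zero, fromRows_inj.eq_iff]

theorem Pen.chainDim_hyperbolic [Fintype m] [Fintype n] (s t : ℕ) (X : Pen m n) :
    X.hyperbolic.chainDim s t = X.transpose.chainDim s t + X.chainDim s t := by
  refine finrank_ker_eq_add_of_fromRows _ _ _ fun Z W ↦ ?_
  have hsplit : X.hyperbolic.chainMap s t (fromRows Z W) =
      fromRows (X.chainMap s t W) (-X.transpose.chainMap s t Z) := by
    ext (i | i) j <;>
      simp [Pen.chainMap_apply, Pen.hyperbolic, Pen.transpose, fromBlocks_mul_fromRows,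
        fromRows_mul, neg_add_eq_sub]
  rw [hsplit, ← fromRows_zero, fromRows_inj.eq_iff, neg_eq_zero, and_comm]

end Chains

section CanonicalChains

variable {m n : Type*}

/-- The `r`-th column of a matrix with columns indexed by `Fin s`, or `0` if `s ≤ r`. -/
def colOrZero {s : ℕ} (Y : Matrix n (Fin s) ℂ) (r : ℕ) : n → ℂ :=
  fun i ↦ if h : r < s then Y i ⟨r, h⟩ else 0

theorem colOrZero_mul [Fintype n] {s : ℕ} (A : Matrix m n ℂ) (Y : Matrix n (Fin s) ℂ) (r : ℕ) :
    colOrZero (A * Y) r = A *ᵥ colOrZero Y r := by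
  ext i
  simp only [colOrZero, mulVec, dotProduct, Matrix.mul_apply]
  split_ifs <;> simp

theorem colOrZero_of_le {s r : ℕ} (Y : Matrix n (Fin s) ℂ) (h : s ≤ r) : colOrZero Y r = 0 := by
  ext i
  exact dif_neg h.not_gt

theorem eq_zero_of_colOrZero {s : ℕ} {Y : Matrix n (Fin s) ℂ}
    (h : ∀ r < s, colOrZero Y r = 0) : Y = 0 := by
  ext i r
  simpa [colOrZero] using congrFun (h r r.2) i

theorem chainMap_eq_zero_iff [Fintype n] {s t : ℕ} {X : Pen m n} {Y : Matrix n (Fin s) ℂ} :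
    X.chainMap s t Y = 0 ↔ (0 < t → X.1 *ᵥ colOrZero Y 0 = 0) ∧
      ∀ r, r + 1 < t → X.1 *ᵥ colOrZero Y (r + 1) = X.2 *ᵥ colOrZero Y r := by
  have hentry (i : m) (r : Fin t) : X.chainMap s t Y i r = (X.1 *ᵥ colOrZero Y r) i -
      if 1 ≤ (r : ℕ) then (X.2 *ᵥ colOrZero Y (r - 1)) i else 0 := by
    simp only [Pen.chainMap_apply, Matrix.sub_apply, shiftPen, mul_superdiag_apply,
      ← colOrZero_mul, colOrZero, Nat.sub_zero, zero_le, true_and]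
    split_ifs <;> first | rfl | omega
  constructor
  · intro h
    refine ⟨fun ht ↦ ?_, fun r hr ↦ ?_⟩
    · ext i
      simpa [hentry] using congrFun (congrFun h i) ⟨0, ht⟩
    · ext i
      simpa [hentry, sub_eq_zero] using congrFun (congrFun h i) ⟨r + 1, hr⟩
  · rintro ⟨h₀, h⟩
    ext i ⟨r, hr⟩
    rw [hentry]
    rcases r with _ | r
    · simp [h₀ hr]
    · simp [h r hr]

theorem chainDim_eq_zero_of_fst_injective [Fintype n] {s t : ℕ} (hst : s ≤ t) {X : Pen m n}
    (hX : ∀ y, X.1 *ᵥ y = 0 → y = 0) : X.chainDim s t = 0 := by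
  refine Submodule.finrank_eq_zero.2 ((Submodule.eq_bot_iff _).2 fun Y hY ↦ ?_)
  obtain ⟨h₀, h⟩ := chainMap_eq_zero_iff.1 hY
  refine eq_zero_of_colOrZero fun r ↦ ?_
  induction r with
  | zero => exact fun hr ↦ hX _ (h₀ (by omega))
  | succ r ih => exact fun hr ↦ hX _ (by rw [h r (by omega), ih (by omega), mulVec_zero])

theorem chainDim_eq_zero_of_snd_injective [Fintype n] {s t : ℕ} (hst : s < t) {X : Pen m n}
    (hX : ∀ y, X.2 *ᵥ y = 0 → y = 0) : X.chainDim s t = 0 := by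
  refine Submodule.finrank_eq_zero.2 ((Submodule.eq_bot_iff _).2 fun Y hY ↦ ?_)
  refine eq_zero_of_colOrZero fun r hr ↦ ?_
  induction hr.le using Nat.decreasingInduction with
  | self => exact colOrZero_of_le Y le_rfl
  | of_succ r hr ih =>
    refine hX _ ?_
    rw [← (chainMap_eq_zero_iff.1 hY).2 r (by omega)]
    rcases (Nat.succ_le_of_lt hr).eq_or_lt with heq | hlt
    · rw [colOrZero_of_le Y heq.ge, mulVec_zero]
    · rw [ih hlt, mulVec_zero]

theorem pow_mulVec_colOrZero [Fintype n] [DecidableEq n] {s : ℕ} {A : Matrix n n ℂ}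
    {Y : Matrix n (Fin s) ℂ} (hY : Pen.chainMap s s ((A, 1) : Pen n n) Y = 0) {r j : ℕ}
    (h : r + j < s) : A ^ j *ᵥ colOrZero Y (r + j) = colOrZero Y r := by
  induction j with
  | zero => simp
  | succ j ih =>
    have hstep := (chainMap_eq_zero_iff.1 hY).2 (r + j) h
    rw [one_mulVec] at hstep
    rw [pow_succ, ← mulVec_mulVec, ← add_assoc, hstep, ih (by omega)]

/-- The chain of length `s + 1` whose last member is `v`, for the pencil `A - λ`. -/
def powChain [Fintype n] [DecidableEq n] (A : Matrix n n ℂ) (s : ℕ) (v : n → ℂ) :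
    Matrix n (Fin (s + 1)) ℂ :=
  .of fun x r ↦ (A ^ (s - (r : ℕ)) *ᵥ v) x

theorem colOrZero_powChain [Fintype n] [DecidableEq n] (A : Matrix n n ℂ) {s r : ℕ} (v : n → ℂ)
    (hr : r ≤ s) : colOrZero (powChain A s v) r = A ^ (s - r) *ᵥ v := by
  ext i
  exact dif_pos (by omega)

theorem chainMap_powChain_eq_zero [Fintype n] [DecidableEq n] {A : Matrix n n ℂ} {s : ℕ}
    {v : n → ℂ} (hv : A ^ (s + 1) *ᵥ v = 0) :
    Pen.chainMap (s + 1) (s + 1) ((A, 1) : Pen n n) (powChain A s v) = 0 := by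
  rw [chainMap_eq_zero_iff]
  refine ⟨fun _ ↦ ?_, fun r hr ↦ ?_⟩
  · rw [colOrZero_powChain A v (by omega), mulVec_mulVec, ← pow_succ', Nat.sub_zero, hv]
  · rw [colOrZero_powChain A v (by omega), colOrZero_powChain A v (by omega), mulVec_mulVec,
      ← pow_succ', one_mulVec, show s - (r + 1) + 1 = s - r by omega]

theorem chainDim_succ_eq_finrank_ker [Fintype n] [DecidableEq n] (s : ℕ) (A : Matrix n n ℂ) :
    Pen.chainDim (s + 1) (s + 1) ((A, 1) : Pen n n) =
      Module.finrank ℂ (LinearMap.ker (A ^ (s + 1)).mulVecLin) := by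
  have hlast (Y : Matrix n (Fin (s + 1)) ℂ) : colOrZero Y s = Y.col (Fin.last s) := by
    ext i
    exact dif_pos s.lt_succ_self
  refine LinearEquiv.finrank_eq
    { toFun Y := ⟨Y.1.col (Fin.last s), ?_⟩
      invFun v := ⟨powChain A s v.1, chainMap_powChain_eq_zero v.2⟩
      map_add' _ _ := rfl
      map_smul' _ _ := rfl
      left_inv Y := Subtype.ext (sub_eq_zero.1 (eq_zero_of_colOrZero fun r hr ↦ ?_))
      right_inv v := Subtype.ext ?_ }
  · have hpow := pow_mulVec_colOrZero Y.2 (r := 0) (j := s) (by omega)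
    rw [zero_add, hlast] at hpow
    rw [LinearMap.mem_ker, mulVecLin_apply, pow_succ', ← mulVec_mulVec, hpow]
    exact (chainMap_eq_zero_iff.1 Y.2).1 s.succ_pos
  · have hpow := pow_mulVec_colOrZero Y.2 (r := r) (j := s - r) (by omega)
    rw [Nat.add_sub_of_le (by omega), hlast] at hpow
    have hsub (Z W : Matrix n (Fin (s + 1)) ℂ) :
        colOrZero (Z - W) r = colOrZero Z r - colOrZero W r := by
      ext i
      simp [colOrZero, hr]
    rw [hsub, colOrZero_powChain A _ (by omega), sub_eq_zero]
    exact hpow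
  · exact (hlast _).symm.trans
      (by rw [colOrZero_powChain A _ le_rfl, Nat.sub_self, pow_zero, one_mulVec])

theorem chainDim_add_rank_pow [Fintype n] [DecidableEq n] (s : ℕ) (A : Matrix n n ℂ) :
    Pen.chainDim s s ((A, 1) : Pen n n) + (A ^ s).rank = Fintype.card n := by
  rcases s with _ | s
  · have hdim := Pen.chainRank_add_chainDim 0 0 ((A, 1) : Pen n n)
    rw [pow_zero, rank_one]
    omega
  · rw [chainDim_succ_eq_finrank_ker, Matrix.rank, add_comm,
      LinearMap.finrank_range_add_finrank_ker, Module.finrank_fintype_fun_eq_card]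

theorem superdiag_one_pow (e s : ℕ) : superdiag e e 1 ^ s = superdiag e e s := by
  induction s with
  | zero =>
    ext i j
    simp [superdiag, one_apply, Fin.ext_iff, eq_comm]
  | succ s ih =>
    ext i j
    rw [pow_succ', ih, superdiag_mul_apply]
    simp only [superdiag, of_apply]
    split_ifs <;> first | rfl | omega

theorem rank_superdiag (e s : ℕ) : (superdiag e e s).rank = e - s := by
  refine le_antisymm ?_ ?_
  · have hfactor : superdiag e e s = superdiag e (e - s) 0 * superdiag (e - s) e s := by
      ext i j
      rw [superdiag_mul_apply]
      simp only [superdiag, of_apply]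
      split_ifs <;> first | rfl | omega
    rw [hfactor]
    exact (rank_mul_le_left _ _).trans (rank_le_width _)
  · have hone : (superdiag e e s).submatrix (Fin.castLE (Nat.sub_le e s))
        (fun i : Fin (e - s) ↦ ⟨i + s, by omega⟩) = 1 := by
      ext i j
      simp [superdiag, one_apply, Fin.ext_iff, eq_comm]
    calc e - s = (1 : Matrix (Fin (e - s)) (Fin (e - s)) ℂ).rank := by simp
      _ ≤ (superdiag e e s).rank := hone ▸ rank_submatrix_le _ _ _

theorem rank_jordanBlock_pow (e s : ℕ) (c : ℂ) :
    ((superdiag e e 1 + c • 1) ^ s).rank = if c = 0 then e - s else e := by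
  split_ifs with hc
  · rw [hc, zero_smul, add_zero, superdiag_one_pow, rank_superdiag]
  · have hdet : (superdiag e e 1 + c • (1 : Matrix (Fin e) (Fin e) ℂ)).det = c ^ e := by
      rw [det_of_isUpperTriangular]
      · simp [superdiag]
      · intro i j (hij : (j : ℕ) < i)
        simp [superdiag, one_apply, Fin.ext_iff, show (j : ℕ) ≠ i + 1 by omega, hij.ne']
    rw [rank_of_isUnit _ (((isUnit_iff_isUnit_det _).2 ?_).pow s), Fintype.card_fin]
    exact hdet ▸ (isUnit_iff_ne_zero.2 hc).pow e

theorem mobius_shiftPen_self (e : ℕ) (c : ℂ) :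
    (shiftPen e e).mobius 1 c 0 1 = (superdiag e e 1 + c • 1, 1) := by
  have hsnd : superdiag e e 0 = 1 := shiftPen_self_snd e
  simp [Pen.mobius, shiftPen, hsnd]

theorem chainDim_hyperbolic_mobius_shiftPen (e s : ℕ) (c : ℂ) :
    ((shiftPen e e).mobius 1 c 0 1).hyperbolic.chainDim s s =
      if c = 0 then 2 * min s e else 0 := by
  have h := chainDim_add_rank_pow s (superdiag e e 1 + c • 1)
  have ht := chainDim_add_rank_pow s (superdiag e e 1 + c • 1)ᵀ
  rw [← transpose_pow, rank_transpose] at ht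
  rw [rank_jordanBlock_pow, Fintype.card_fin] at h ht
  rw [Pen.chainDim_hyperbolic, mobius_shiftPen_self]
  simp only [Pen.transpose, transpose_one]
  split_ifs at h ht ⊢ <;> omega

theorem shiftPen_fst_mulVec (k : ℕ) (y : Fin (k + 1) → ℂ) (i : Fin k) :
    ((shiftPen k (k + 1)).1 *ᵥ y) i = y i.succ :=
  (superdiag_mul_apply (.of fun j (_ : Unit) ↦ y j) i ()).trans (dif_pos (by omega))

theorem shiftPen_snd_mulVec (k : ℕ) (y : Fin (k + 1) → ℂ) (i : Fin k) :
    ((shiftPen k (k + 1)).2 *ᵥ y) i = y i.castSucc :=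
  (superdiag_mul_apply (.of fun j (_ : Unit) ↦ y j) i ()).trans (dif_pos (by omega))

theorem chainMap_shiftPen_eq_zero_iff {k s t : ℕ} {Y : Matrix (Fin (k + 1)) (Fin s) ℂ} :
    (shiftPen k (k + 1)).chainMap s t Y = 0 ↔
      (0 < t → ∀ i : Fin k, colOrZero Y 0 i.succ = 0) ∧
      ∀ r, r + 1 < t → ∀ i : Fin k, colOrZero Y (r + 1) i.succ = colOrZero Y r i.castSucc := by
  simp only [chainMap_eq_zero_iff, funext_iff, shiftPen_fst_mulVec, shiftPen_snd_mulVec,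
    Pi.zero_apply]

/-- The upper triangular Toeplitz matrix whose first row is `g`, padded with zeros. -/
def toeplitz (p s d : ℕ) : (Fin d → ℂ) →ₗ[ℂ] Matrix (Fin p) (Fin s) ℂ where
  toFun g := .of fun i r ↦ if h : (i : ℕ) ≤ r ∧ (r : ℕ) - i < d then g ⟨r - i, h.2⟩ else 0
  map_add' g g' := by ext i r; simp only [of_apply, Matrix.add_apply]; split_ifs <;> simp
  map_smul' c g := by ext i r; simp

theorem toeplitz_injective {p s d : ℕ} (hp : 0 < p) (hd : d ≤ s) :
    Function.Injective (toeplitz p s d) := by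
  intro g g' h
  ext l
  simpa [toeplitz] using congrFun (congrFun h ⟨0, hp⟩) ⟨l, by omega⟩

theorem chainMap_toeplitz_eq_zero {k s t d : ℕ}
    (hd : ∀ l < d, s < t → l + k < s) (g : Fin d → ℂ) :
    (shiftPen k (k + 1)).chainMap s t (toeplitz (k + 1) s d g) = 0 := by
  refine chainMap_shiftPen_eq_zero_iff.2 ⟨fun _ i ↦ ?_, fun r hr i ↦ ?_⟩
  · simp [colOrZero, toeplitz]
  · simp only [colOrZero, toeplitz, LinearMap.coe_mk, AddHom.coe_mk, of_apply, Fin.val_succ,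
      Fin.val_castSucc, Nat.add_sub_add_right, add_le_add_iff_right]
    by_cases hir : (i : ℕ) ≤ r ∧ r - i < d
    · have := hd (r - i) hir.2
      rw [dif_pos (by omega), dif_pos hir, dif_pos (by omega), dif_pos hir]
    · split_ifs <;> rfl

theorem colOrZero_of_chainMap_eq_zero {k s t : ℕ} {Y : Matrix (Fin (k + 1)) (Fin s) ℂ}
    (hY : (shiftPen k (k + 1)).chainMap s t Y = 0) (i : Fin (k + 1)) {r : ℕ} (hr : r < t) :
    colOrZero Y r i = if (i : ℕ) ≤ r then colOrZero Y (r - i) 0 else 0 := by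
  obtain ⟨h₀, h⟩ := chainMap_shiftPen_eq_zero_iff.1 hY
  induction i using Fin.induction generalizing r with
  | zero => simp
  | succ i ih =>
    rcases r with _ | r
    · simp [h₀ hr]
    · rw [h r hr, ih (by omega)]
      simp

theorem toeplitz_first_row_of_chainMap_eq_zero {k s t d : ℕ} (hst : s ≤ t)
    (hd : ∀ l < s, d ≤ l → s < t ∧ s ≤ l + k) {Y : Matrix (Fin (k + 1)) (Fin s) ℂ}
    (hY : (shiftPen k (k + 1)).chainMap s t Y = 0) :
    toeplitz (k + 1) s d (fun l ↦ colOrZero Y l 0) = Y := by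
  have hvanish (l : ℕ) (hls : l < s) (hdl : d ≤ l) : colOrZero Y l 0 = 0 := by
    obtain ⟨hst', hlk⟩ := hd l hls hdl
    have h := colOrZero_of_chainMap_eq_zero hY ⟨s - l, by omega⟩ hst'
    rw [colOrZero_of_le Y le_rfl, if_pos (Nat.sub_le _ _)] at h
    simpa [Nat.sub_sub_self hls.le] using h.symm
  ext i r
  have hentry : colOrZero Y r i = Y i r := dif_pos r.2
  rw [← hentry, colOrZero_of_chainMap_eq_zero hY i (by omega)]
  simp only [toeplitz, LinearMap.coe_mk, AddHom.coe_mk, of_apply]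
  by_cases hir : (i : ℕ) ≤ r
  · rw [if_pos hir]
    split_ifs with hrd
    · rfl
    · exact (hvanish _ (by omega) (by omega)).symm
  · rw [if_neg hir, dif_neg (by omega)]

/-- The chains of `shiftPen k (k + 1)` are the Toeplitz matrices whose first row is supported in
`{0, …, d - 1}`. -/
theorem chainDim_shiftPen {k s t d : ℕ} (hst : s ≤ t)
    (hd : ∀ l, l < d ↔ l < s ∧ (s < t → l + k < s)) : (shiftPen k (k + 1)).chainDim s t = d := by
  have hds : d ≤ s := le_of_not_gt fun h ↦ lt_irrefl s ((hd s).1 h).1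
  have hker : LinearMap.ker ((shiftPen k (k + 1)).chainMap s t) =
      LinearMap.range (toeplitz (k + 1) s d) := by
    ext Y
    refine ⟨fun hY ↦ ⟨_, toeplitz_first_row_of_chainMap_eq_zero hst (fun l hl hdl ↦ ?_) hY⟩, ?_⟩
    · have := hd l
      grind
    · rintro ⟨g, rfl⟩
      exact chainMap_toeplitz_eq_zero (fun l hl ↦ ((hd l).1 hl).2) g
  rw [Pen.chainDim, hker, LinearMap.finrank_range_of_inj (toeplitz_injective k.succ_pos hds),
    Module.finrank_fin_fun]

theorem chainDim_transpose_shiftPen {k s t : ℕ} (hst : s ≤ t) :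
    (shiftPen k (k + 1)).transpose.chainDim s t = 0 := by
  refine chainDim_eq_zero_of_fst_injective hst fun y hy ↦ funext fun i ↦ ?_
  simpa [Pen.transpose, shiftPen, superdiag, mulVec, dotProduct, ← Fin.ext_iff]
    using congrFun hy i.succ

theorem chainDim_hyperbolic_shiftPen {k s t d : ℕ} (hst : s ≤ t)
    (hd : ∀ l, l < d ↔ l < s ∧ (s < t → l + k < s)) :
    (shiftPen k (k + 1)).hyperbolic.chainDim s t = d := by
  rw [Pen.chainDim_hyperbolic, chainDim_transpose_shiftPen hst, chainDim_shiftPen hst hd, zero_add]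

theorem Pen.mobius_hyperbolic (a b c d : ℂ) (X : Pen m n) :
    X.hyperbolic.mobius a b c d = (X.mobius a b c d).hyperbolic := by
  refine Prod.ext ?_ ?_ <;> ext (i | i) (j | j) <;> simp [Pen.mobius, Pen.hyperbolic] <;> ring

/-- The dimension of the space of chains of length `s` of a canonical block with `B yₛ₋₁ = 0`. -/
def CanonBlock.nullChains (s : ℕ) : CanonBlock → ℕ
  | M k => s - k
  | H _ _ => 0

/-- The dimension of the space of chains of length `s` of a canonical block for the shifted pencil
`(A - ν B) - λ B`. -/
def CanonBlock.eigenChains (ν : ℂ) (s : ℕ) : CanonBlock → ℕ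
  | M _ => s
  | H μ e => if μ = ν then 2 * min s e else 0

theorem chainDim_hyperbolic_pen (b : CanonBlock) (s : ℕ) :
    b.pen.hyperbolic.chainDim s (s + 1) = b.nullChains s := by
  rcases b with k | ⟨μ, e⟩
  · rw [CanonBlock.pen_M]
    refine chainDim_hyperbolic_shiftPen s.le_succ fun l ↦ ?_
    rw [CanonBlock.nullChains]
    omega
  · rw [Pen.chainDim_hyperbolic]
    change ((shiftPen e e).mobius 1 μ 0 1).transpose.chainDim s (s + 1) +
      ((shiftPen e e).mobius 1 μ 0 1).chainDim s (s + 1) = 0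
    rw [mobius_shiftPen_self, chainDim_eq_zero_of_snd_injective s.lt_succ_self,
      chainDim_eq_zero_of_snd_injective s.lt_succ_self]
    · simp
    · simp [Pen.transpose]

theorem chainDim_hyperbolic_pen_mobius (b : CanonBlock) (ν : ℂ) (s : ℕ) :
    (b.pen.hyperbolic.mobius 1 (-ν) 0 1).chainDim s s = b.eigenChains ν s := by
  rw [Pen.mobius_hyperbolic]
  rcases b with k | ⟨μ, e⟩
  · rw [CanonBlock.pen_M]
    have hle := (degE_shiftPen_mobius k (-ν)).hyperbolic.degE.chainDim_le rfl s s
    have hge := (degE_mobius_shiftPen k (-ν)).hyperbolic.degE.chainDim_le rfl s s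
    rw [chainDim_hyperbolic_shiftPen le_rfl (d := s) (by simp)] at hle hge
    exact le_antisymm hge hle
  · have hmobius : (CanonBlock.H μ e).pen.mobius 1 (-ν) 0 1 =
        (shiftPen e e).mobius 1 (μ - ν) 0 1 := by
      refine (Pen.mobius_mobius ..).trans ?_
      congr 1 <;> simp [CanonBlock.eigenvalue, sub_eq_add_neg]
    rw [hmobius]
    refine (chainDim_hyperbolic_mobius_shiftPen e s (μ - ν)).trans ?_
    simp only [sub_eq_zero, CanonBlock.eigenChains]

theorem chainDim_canon (l : List CanonBlock) (s : ℕ) :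
    (canon l).chainDim s (s + 1) = (l.map (CanonBlock.nullChains s)).sum := by
  induction l with
  | nil => exact chainDim_eq_zero_of_fst_injective (by omega) fun y _ ↦ funext fun i ↦ i.elim
  | cons b l ih =>
    refine (Pen.chainDim_directSum s (s + 1) b.pen.hyperbolic (canon l)).trans ?_
    rw [chainDim_hyperbolic_pen, ih, List.map_cons, List.sum_cons]

theorem chainDim_canon_mobius (l : List CanonBlock) (ν : ℂ) (s : ℕ) :
    ((canon l).mobius 1 (-ν) 0 1).chainDim s s = (l.map (CanonBlock.eigenChains ν s)).sum := by
  induction l with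
  | nil => exact chainDim_eq_zero_of_fst_injective le_rfl fun y _ ↦ funext fun i ↦ i.elim
  | cons b l ih =>
    refine (congrArg (Pen.chainDim s s)
      (Pen.mobius_directSum 1 (-ν) 0 1 b.pen.hyperbolic (canon l))).trans ?_
    rw [Pen.chainDim_directSum, chainDim_hyperbolic_pen_mobius, ih, List.map_cons, List.sum_cons]

variable {T₁ T₂ : SkewType ℂ}

theorem sum_map_blocks_toList (T : SkewType ℂ) (f : CanonBlock → ℕ) :
    (T.blocks.toList.map f).sum =
      (T.ind.map fun k ↦ f (.M k)).sum + (T.jor.map fun x ↦ f (.H x.1 x.2)).sum := by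
  rw [← Multiset.sum_coe, ← Multiset.map_coe, Multiset.coe_toList]
  simp [SkewType.blocks]

theorem chainDim_pen (T : SkewType ℂ) (s : ℕ) : T.pen.chainDim s (s + 1) = indexSum T.ind s := by
  rw [SkewType.pen, chainDim_canon, sum_map_blocks_toList]
  simp [CanonBlock.nullChains, indexSum]

theorem chainDim_pen_mobius (T : SkewType ℂ) (ν : ℂ) (s : ℕ) :
    (T.pen.mobius 1 (-ν) 0 1).chainDim s s = T.ind.card * s + 2 * jordanSum T.jor ν s := by
  rw [SkewType.pen, chainDim_canon_mobius, sum_map_blocks_toList]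
  simp [CanonBlock.eigenChains, jordanSum, ← Multiset.sum_map_mul_left]

theorem card_canonIdx (l : List CanonBlock) :
    Fintype.card (CanonIdx l) = (l.map fun b ↦ b.row + b.col).sum := by
  induction l with
  | nil => exact Fintype.card_eq_zero (α := Empty)
  | cons b l ih =>
    refine (Fintype.card_sum (α := Fin b.row ⊕ Fin b.col) (β := CanonIdx l)).trans ?_
    simp [ih]

theorem SkewType.card_canonIdx_blocks (T : SkewType ℂ) :
    Fintype.card (CanonIdx T.blocks.toList) = T.size := by
  rw [card_canonIdx, sum_map_blocks_toList]
  simp only [CanonBlock.row, CanonBlock.col, SkewType.size, jordanSize, Multiset.sum_map_add,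
    Multiset.map_id', Multiset.map_const', Multiset.sum_replicate, smul_eq_mul, mul_one]
  omega

theorem indexSum_le_of_degC (h : DegC T₁.pen T₂.pen) (hsize : T₁.size = T₂.size) (s : ℕ) :
    indexSum T₁.ind s ≤ indexSum T₂.ind s := by
  rw [← chainDim_pen, ← chainDim_pen]
  refine h.degE.chainDim_le ?_ s (s + 1)
  rwa [T₁.card_canonIdx_blocks, T₂.card_canonIdx_blocks]

theorem jordanSum_le_of_degC (h : DegC T₁.pen T₂.pen) (hsize : T₁.size = T₂.size) (ν : ℂ) (s : ℕ) :
    T₁.ind.card * s + 2 * jordanSum T₁.jor ν s ≤ T₂.ind.card * s + 2 * jordanSum T₂.jor ν s := by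
  rw [← chainDim_pen_mobius, ← chainDim_pen_mobius]
  refine (h.degE.mobius 1 (-ν) 0 1).chainDim_le ?_ s s
  rwa [T₁.card_canonIdx_blocks, T₂.card_canonIdx_blocks]

theorem card_ind_le_of_degC (h : DegC T₁.pen T₂.pen) (hsize : T₁.size = T₂.size) :
    T₁.ind.card ≤ T₂.ind.card := by
  by_contra! hlt
  have hle := jordanSum_le_of_degC h hsize 0 (2 * jordanSize T₂.jor + 1)
  have hbound := jordanSum_le_jordanSize T₂.jor 0 (2 * jordanSize T₂.jor + 1)
  nlinarith [Nat.mul_le_mul_right (2 * jordanSize T₂.jor + 1) (Nat.succ_le_of_lt hlt)]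

theorem exists_dominates_of_degC (h : DegC T₁.pen T₂.pen) (hsize : T₁.size = T₂.size) :
    ∃ d, Dominates d T₁ T₂ := by
  have hcard := card_ind_le_of_degC h hsize
  obtain ⟨d, hd⟩ : ∃ d, T₂.ind.card = T₁.ind.card + 2 * d := by
    simp only [SkewType.size] at hsize
    exact ⟨(T₂.ind.card - T₁.ind.card) / 2, by omega⟩
  refine ⟨d, hd, hsize, indexSum_le_of_degC h hsize, fun ν s ↦ ?_⟩
  have hle := jordanSum_le_of_degC h hsize ν s
  rw [hd] at hle
  linarith

theorem exists_degC_between (h : DegC T₁.pen T₂.pen) (hsize : T₁.size = T₂.size)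
    (hlt : T₁.ind.card < T₂.ind.card) :
    ∃ T : SkewType ℂ, T.size = T₂.size ∧ T.ind.card + 2 = T₂.ind.card ∧
      DegC T₁.pen T.pen ∧ DegC T.pen T₂.pen := by
  obtain ⟨d, hd⟩ := exists_dominates_of_degC h hsize
  obtain ⟨T, hred, hsteps⟩ := hd.exists_reflTransGen_step
  have hind : T₁.ind = T.ind := (congrArg SkewType.ind hred :)
  obtain ⟨T₀, hT₀, hT₂, hcard⟩ := exists_reflTransGen_step_card_add_two hsteps (hind ▸ hlt)
  exact ⟨T₀, size_eq_of_reflTransGen_step hT₂, hcard,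
    (degC_pen_of_reduced_eq hred).trans (degC_pen_of_reflTransGen_step hT₀),
    degC_pen_of_reflTransGen_step hT₂⟩

end CanonicalChains

/-! ### Chain decompositions of pairs of alternating forms -/

section AlternatingForms

variable {K V : Type*} [Field K] [AddCommGroup V] [Module K V] {ι : Type*} [Fintype ι]
  [DecidableEq ι] {A B F : V →ₗ[K] V →ₗ[K] K}

theorem surjective_of_isAlt [FiniteDimensional K V] (hB : B.IsAlt) (hB0 : ∀ x, B x = 0 → x = 0) :
    Function.Surjective B := by
  have hinj : Function.Injective B := LinearMap.ker_eq_bot.1 (LinearMap.ker_eq_bot'.2 hB0)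
  intro f
  obtain ⟨x, rfl⟩ := LinearMap.flip_surjective_iff₁.2 hinj f
  exact ⟨-x, LinearMap.ext fun y ↦ by simp [hB.neg x y]⟩

theorem exists_mem_eq_of_dualCoannihilator [FiniteDimensional K V] (A : V →ₗ[K] V →ₗ[K] K)
    (Z : Submodule K V) (f : V →ₗ[K] K) (hf : ∀ x, (∀ z ∈ Z, A z x = 0) → f x = 0) :
    ∃ w ∈ Z, A w = f := by
  have h : f ∈ (Z.map A).dualCoannihilator.dualAnnihilator := by
    rw [Submodule.mem_dualAnnihilator]
    intro x hx
    rw [Submodule.mem_dualCoannihilator] at hx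
    exact hf x fun z hz ↦ hx _ (Submodule.mem_map_of_mem hz)
  rw [Subspace.dualCoannihilator_dualAnnihilator_eq] at h
  exact Submodule.mem_map.1 h

omit [Fintype ι] in
theorem exists_biorthogonal [Finite ι] {f : ι → Module.Dual K V} (hf : LinearIndependent K f) :
    ∃ y : ι → V, ∀ s t, f s (y t) = if t = s then 1 else 0 := by
  have := Fintype.ofFinite ι
  have hinj : Function.Injective (Fintype.linearCombination K f) :=
    hf.fintypeLinearCombination_injective
  choose y hy using fun t ↦ LinearMap.flip_surjective_iff₁.2 hinj (LinearMap.proj t)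
  refine ⟨y, fun s t ↦ ?_⟩
  simpa [Pi.single_apply] using LinearMap.congr_fun (hy t) (Pi.single s 1)

theorem exists_isotropic_add [NeZero (2 : K)] (hF : F.IsAlt) (y w : ι → V)
    (hyw : ∀ t s, F (y t) (w s) = if t = s then 1 else 0) (hww : ∀ t s, F (w t) (w s) = 0) :
    ∃ c : ι → ι → K, ∀ t s, F (y t + ∑ r, c t r • w r) (y s + ∑ r, c s r • w r) = 0 := by
  refine ⟨fun t s ↦ F (y t) (y s) / 2, fun t s ↦ ?_⟩
  have hwy (t s) : F (w t) (y s) = if s = t then -1 else 0 := by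
    rw [← hF.neg, hyw]
    split_ifs <;> simp
  simp only [map_add, map_sum, LinearMap.add_apply, LinearMap.sum_apply, map_smul,
    LinearMap.smul_apply, hww, hyw, hwy, smul_eq_mul, mul_ite, mul_zero, Finset.sum_ite_eq,
    Finset.mem_univ, if_true, Finset.sum_const_zero, add_zero]
  rw [← hF.neg (y t) (y s)]
  field_simp [two_ne_zero (α := K)]
  ring

variable {c : ℕ} {k : ι → ℕ} {u v : ι → ℕ → V} {R : Submodule K V}

/-- The vectors `u t i` (`i < k t`) and `v t j` (`j ≤ k t`) pair under `F` like the two halves of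
a sum of singular blocks of sizes `k t × (k t + 1)`, with the ones on the `c`-th superdiagonal, and
are orthogonal to `R`. The values of `u` and `v` beyond these ranges are irrelevant. -/
structure ChainPairing (F : V →ₗ[K] V →ₗ[K] K) (c : ℕ) (k : ι → ℕ) (u v : ι → ℕ → V)
    (R : Submodule K V) : Prop where
  u_v : ∀ t s i j, i < k t → j ≤ k s → F (u t i) (v s j) = if t = s ∧ j = i + c then 1 else 0
  u_u : ∀ t s i j, i < k t → j < k s → F (u t i) (u s j) = 0
  v_v : ∀ t s i j, i ≤ k t → j ≤ k s → F (v t i) (v s j) = 0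
  mem_u : ∀ r ∈ R, ∀ t i, i < k t → F r (u t i) = 0
  mem_v : ∀ r ∈ R, ∀ t i, i ≤ k t → F r (v t i) = 0

omit [Fintype ι] in
theorem ChainPairing.v_u (P : ChainPairing F c k u v R) (hF : F.IsAlt) {t s : ι} {i j : ℕ}
    (hi : i ≤ k t) (hj : j < k s) :
    F (v t i) (u s j) = if s = t ∧ i = j + c then -1 else 0 := by
  rw [← hF.neg, P.u_v s t j i hj hi]
  split_ifs <;> simp

/-- The chains `u t`, `v t` realise singular blocks of the pair `(A, B)` for which the `v t (k t)`
span the kernel of `B`, and `R` is a complementary part on which `B` is nondegenerate. -/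
structure ChainDecomposition (A B : V →ₗ[K] V →ₗ[K] K) (k : ι → ℕ) (u v : ι → ℕ → V)
    (R : Submodule K V) : Prop where
  fst : ChainPairing A 1 k u v R
  snd : ChainPairing B 0 k u v R
  nondegenerate : ∀ r ∈ R, (∀ s ∈ R, B r s = 0) → r = 0
  linearIndependent_top : LinearIndependent K fun t ↦ v t (k t)
  eq_top : ∀ W : Submodule K V, (∀ t i, i < k t → u t i ∈ W) → (∀ t i, i ≤ k t → v t i ∈ W) →
    R ≤ W → W = ⊤
  finrank_eq : Module.finrank K V = ∑ t, (2 * k t + 1) + Module.finrank K R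

/-- The vector which represents a functional on the chains through a form pairing `u t i` with
`v t i`. -/
def chainRepr (k : ι → ℕ) (u v : ι → ℕ → V) : Module.Dual K V →ₗ[K] V :=
  ∑ t, ∑ i ∈ Finset.range (k t), ((Module.Dual.eval K V (v t i)).smulRight (u t i) -
    (Module.Dual.eval K V (u t i)).smulRight (v t i))

omit [DecidableEq ι] in
theorem chainRepr_apply (f : Module.Dual K V) : chainRepr k u v f =
    ∑ t, ∑ i ∈ Finset.range (k t), (f (v t i) • u t i - f (u t i) • v t i) := by
  simp [chainRepr, LinearMap.sum_apply]

theorem sum_sum_range_ite {M : Type*} [AddCommMonoid M] (s : ι) (j : ℕ) (g : ι → ℕ → M) :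
    ∑ t, ∑ i ∈ Finset.range (k t), (if t = s ∧ i = j then g t i else 0) =
      if j < k s then g s j else 0 := by
  simp [ite_and, Finset.sum_ite_irrel]

omit [DecidableEq ι] in
theorem sum_sum_range_congr {M : Type*} [AddCommMonoid M] {f g : ι → ℕ → M}
    (h : ∀ t i, i < k t → f t i = g t i) :
    ∑ t, ∑ i ∈ Finset.range (k t), f t i = ∑ t, ∑ i ∈ Finset.range (k t), g t i :=
  Finset.sum_congr rfl fun t _ ↦ Finset.sum_congr rfl fun i hi ↦ h t i (Finset.mem_range.1 hi)

namespace ChainPairing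

variable (P : ChainPairing B 0 k u v R)

include P in
theorem apply_chainRepr_v (f : Module.Dual K V) {s : ι} {j : ℕ} (hj : j < k s) :
    B (chainRepr k u v f) (v s j) = f (v s j) := by
  trans ∑ t, ∑ i ∈ Finset.range (k t), if t = s ∧ i = j then f (v t i) else 0
  · simp only [chainRepr_apply, map_sum, LinearMap.sum_apply]
    refine sum_sum_range_congr fun t i hi ↦ ?_
    simp [P.u_v t s i j hi hj.le, P.v_v t s i j hi.le hj.le, eq_comm (a := j)]
  · rw [sum_sum_range_ite, if_pos hj]

include P in
theorem apply_chainRepr_u (hB : B.IsAlt) (f : Module.Dual K V) {s : ι} {j : ℕ} (hj : j < k s) :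
    B (chainRepr k u v f) (u s j) = f (u s j) := by
  trans ∑ t, ∑ i ∈ Finset.range (k t), if t = s ∧ i = j then f (u t i) else 0
  · simp only [chainRepr_apply, map_sum, LinearMap.sum_apply]
    refine sum_sum_range_congr fun t i hi ↦ ?_
    simp only [map_sub, map_smul, LinearMap.sub_apply, LinearMap.smul_apply, smul_eq_mul,
      P.v_u hB hi.le hj, P.u_u t s i j hi hj, eq_comm (a := s), add_zero]
    split_ifs <;> simp
  · rw [sum_sum_range_ite, if_pos hj]

include P in
theorem apply_chainRepr_of_mem (hB : B.IsAlt) (f : Module.Dual K V) {r : V} (hr : r ∈ R) :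
    B (chainRepr k u v f) r = 0 := by
  rw [← hB.neg, neg_eq_zero, chainRepr_apply]
  simp only [map_sum]
  refine Finset.sum_eq_zero fun t _ ↦ Finset.sum_eq_zero fun i hi ↦ ?_
  have hi := Finset.mem_range.1 hi
  simp [P.mem_u r hr t i hi, P.mem_v r hr t i hi.le]

include P in
theorem chainRepr_u {s : ι} {i : ℕ} (hi : i < k s) : chainRepr k u v (B (u s i)) = u s i := by
  trans ∑ t, ∑ j ∈ Finset.range (k t), if t = s ∧ j = i then u t j else 0
  · rw [chainRepr_apply]
    refine sum_sum_range_congr fun t j hj ↦ ?_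
    simp [P.u_v s t i j hi hj.le, P.u_u s t i j hi hj, eq_comm (a := s)]
  · rw [sum_sum_range_ite, if_pos hi]

include P in
theorem chainRepr_v (hB : B.IsAlt) {s : ι} {i : ℕ} (hi : i < k s) :
    chainRepr k u v (B (v s i)) = v s i := by
  trans ∑ t, ∑ j ∈ Finset.range (k t), if t = s ∧ j = i then v t j else 0
  · rw [chainRepr_apply]
    refine sum_sum_range_congr fun t j hj ↦ ?_
    simp only [P.v_v s t i j hi.le hj.le, P.v_u hB hi.le hj, eq_comm (a := i), add_zero]
    split_ifs <;> simp
  · rw [sum_sum_range_ite, if_pos hi]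

include P in
theorem chainRepr_of_mem {r : V} (hr : r ∈ R) : chainRepr k u v (B r) = 0 := by
  rw [chainRepr_apply]
  refine Finset.sum_eq_zero fun t _ ↦ Finset.sum_eq_zero fun i hi ↦ ?_
  have hi := Finset.mem_range.1 hi
  simp [P.mem_u r hr t i hi, P.mem_v r hr t i hi.le]

end ChainPairing

namespace ChainDecomposition

variable (D : ChainDecomposition A B k u v R)

include D in
theorem snd_top (hB : B.IsAlt) (t : ι) : B (v t (k t)) = 0 := by
  rw [← LinearMap.ker_eq_top]
  refine D.eq_top _ (fun s i hi ↦ ?_) (fun s i hi ↦ D.snd.v_v t s _ i le_rfl hi) fun r hr ↦ ?_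
  · rw [LinearMap.mem_ker, D.snd.v_u hB le_rfl hi, if_neg]
    rintro ⟨rfl, h⟩
    omega
  · rw [LinearMap.mem_ker, ← hB.neg, D.snd.mem_v r hr t _ le_rfl, neg_zero]

include D in
theorem sub_chainRepr_mem (hB : B.IsAlt) (x : V) :
    x - chainRepr k u v (B x) ∈ Submodule.span K (Set.range fun t ↦ v t (k t)) ⊔ R := by
  set T := Submodule.span K (Set.range fun t ↦ v t (k t))
  suffices h : (T ⊔ R).comap (LinearMap.id - (chainRepr k u v).comp B) = ⊤ from
    Submodule.eq_top_iff'.1 h x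
  refine D.eq_top _ (fun s i hi ↦ ?_) (fun s i hi ↦ ?_) fun r hr ↦ ?_ <;>
    simp only [Submodule.mem_comap, LinearMap.sub_apply, LinearMap.id_apply, LinearMap.comp_apply]
  · rw [D.snd.chainRepr_u hi, sub_self]
    exact Submodule.zero_mem _
  · rcases hi.lt_or_eq with hi | rfl
    · rw [D.snd.chainRepr_v hB hi, sub_self]
      exact Submodule.zero_mem _
    · rw [D.snd_top hB, map_zero, sub_zero]
      exact Submodule.mem_sup_left (Submodule.subset_span ⟨s, rfl⟩)
  · rw [D.snd.chainRepr_of_mem hr, sub_zero]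
    exact Submodule.mem_sup_right hr

include D in
theorem exists_eq_sum_top (hB : B.IsAlt) {x : V} (hx : B x = 0) :
    ∃ a : ι → K, x = ∑ t, a t • v t (k t) := by
  have hmem := D.sub_chainRepr_mem hB x
  rw [hx, map_zero, sub_zero] at hmem
  obtain ⟨y, hy, r, hr, rfl⟩ := Submodule.mem_sup.1 hmem
  obtain ⟨a, rfl⟩ := (Submodule.mem_span_range_iff_exists_fun K).1 hy
  have htop : B (∑ t, a t • v t (k t)) = 0 := by simp [D.snd_top hB]
  have hr0 : r = 0 := D.nondegenerate r hr fun s _ ↦ by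
    rw [map_add, htop, zero_add] at hx
    rw [hx, LinearMap.zero_apply]
  exact ⟨a, by rw [hr0, add_zero]⟩

include D in
theorem exists_repr [FiniteDimensional K V] (hB : B.IsAlt) (f : Module.Dual K V) :
    ∃ x, (∀ t i, i < k t → B x (u t i) = f (u t i)) ∧
      (∀ t i, i < k t → B x (v t i) = f (v t i)) ∧ ∀ r ∈ R, B x r = f r := by
  obtain ⟨r, hr⟩ := surjective_of_isAlt (B := B.domRestrict₁₂ R R) (fun x ↦ hB x)
    (fun x hx ↦ Subtype.ext (D.nondegenerate x x.2 fun y hy ↦ LinearMap.congr_fun hx ⟨y, hy⟩))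
    (f.domRestrict R)
  refine ⟨r + chainRepr k u v f, fun t i hi ↦ ?_, fun t i hi ↦ ?_, fun s hs ↦ ?_⟩
  · rw [map_add, LinearMap.add_apply, D.snd.mem_u r r.2 t i hi, D.snd.apply_chainRepr_u hB f hi,
      zero_add]
  · rw [map_add, LinearMap.add_apply, D.snd.mem_v r r.2 t i hi.le, D.snd.apply_chainRepr_v f hi,
      zero_add]
  · rw [map_add, LinearMap.add_apply, D.snd.apply_chainRepr_of_mem hB f hs, add_zero]
    exact LinearMap.congr_fun hr ⟨s, hs⟩

end ChainDecomposition

end AlternatingForms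

section Extension

variable {K V W : Type*} [Field K] [AddCommGroup V] [Module K V] [AddCommGroup W] [Module K W]
  {ι κ : Type*} [DecidableEq ι] {F : V →ₗ[K] V →ₗ[K] K} {G : W →ₗ[K] W →ₗ[K] K} {c : ℕ}
  {k : ι → ℕ} {u v : ι → ℕ → W} {R : Submodule K W} {y z : ι → V} {Φ : W →ₗ[K] V} {ζ : κ → V}

/-- The vectors `y t` and `z t` lengthen the images under the isometry `Φ` of the chains `u t` and
`v t` by one step each, to a `ChainPairing` with the same shift `c`; see `ChainPairing.extend`. -/
structure ExtensionPairing (F : V →ₗ[K] V →ₗ[K] K) (G : W →ₗ[K] W →ₗ[K] K) (c : ℕ) (k : ι → ℕ)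
    (u v : ι → ℕ → W) (R : Submodule K W) (y z : ι → V) (Φ : W →ₗ[K] V) : Prop where
  map_map : ∀ b b', F (Φ b) (Φ b') = G b b'
  y_u : ∀ t s i, i < k s → F (y t) (Φ (u s i)) = 0
  y_v : ∀ t s j, j ≤ k s → F (y t) (Φ (v s j)) = if t = s ∧ j = k t + c then 1 else 0
  y_mem : ∀ t, ∀ r ∈ R, F (y t) (Φ r) = 0
  y_y : ∀ t s, F (y t) (y s) = 0
  y_z : ∀ t s, F (y t) (z s) = if t = s ∧ k s + 1 = k t + c then 1 else 0
  z_map : ∀ t b, F (z t) (Φ b) = 0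
  z_z : ∀ t s, F (z t) (z s) = 0

/-- The chains `u t`, prolonged by `y t` at the top; the new chains indexed by `κ` are empty. -/
def extendLeft (k : ι → ℕ) (u : ι → ℕ → W) (y : ι → V) (Φ : W →ₗ[K] V) : ι ⊕ κ → ℕ → V :=
  Sum.elim (fun t i ↦ if i < k t then Φ (u t i) else y t) 0

/-- The chains `v t`, prolonged by `z t` at the top; the new chains indexed by `κ` have the single
entry `ζ s`. -/
def extendRight (k : ι → ℕ) (v : ι → ℕ → W) (z : ι → V) (Φ : W →ₗ[K] V) (ζ : κ → V) :
    ι ⊕ κ → ℕ → V :=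
  Sum.elim (fun t i ↦ if i ≤ k t then Φ (v t i) else z t) fun s _ ↦ ζ s

/-- The lengths of the extended chains. -/
def extendLength (κ : Type*) (k : ι → ℕ) : ι ⊕ κ → ℕ :=
  Sum.elim (fun t ↦ k t + 1) 0

theorem apply_eq_zero_of_left (hF : F.IsAlt) {x : V} (hx : F x = 0) (x' : V) : F x' x = 0 :=
  hF.isRefl x x' (by rw [hx, LinearMap.zero_apply])

namespace ExtensionPairing

variable (E : ExtensionPairing F G c k u v R y z Φ)

include E in
theorem map_y_u (hF : F.IsAlt) {t s : ι} {i : ℕ} (hi : i < k t) : F (Φ (u t i)) (y s) = 0 :=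
  hF.isRefl _ _ (E.y_u s t i hi)

include E in
theorem map_z (hF : F.IsAlt) (b : W) (t : ι) : F (Φ b) (z t) = 0 :=
  hF.isRefl _ _ (E.z_map t b)

include E in
theorem extend_u_v [DecidableEq κ] (P : ChainPairing G c k u v R) (hF : F.IsAlt) (hc : c ≤ 1)
    (hζ : ∀ s, F (ζ s) = 0) (t s : ι ⊕ κ) (i j : ℕ) (hi : i < extendLength κ k t)
    (hj : j ≤ extendLength κ k s) :
    F (extendLeft k u y Φ t i) (extendRight k v z Φ ζ s j) =
      if t = s ∧ j = i + c then 1 else 0 := by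
  rcases t with t | t
  swap
  · simp [extendLength] at hi
  rcases s with s | s
  swap
  · simp [extendRight, apply_eq_zero_of_left hF (hζ s)]
  simp only [extendLength, extendLeft, extendRight, Sum.elim_inl, Sum.inl.injEq] at hi hj ⊢
  rcases (Nat.lt_succ_iff.1 hi).lt_or_eq with hi' | rfl <;>
    rcases hj.lt_or_eq with hj' | rfl
  · rw [if_pos hi', if_pos (Nat.lt_succ_iff.1 hj'), E.map_map,
      P.u_v t s i j hi' (Nat.lt_succ_iff.1 hj')]
  · rw [if_pos hi', if_neg (Nat.not_succ_le_self _), E.map_z hF, if_neg]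
    rintro ⟨rfl, h⟩
    omega
  · rw [if_neg (lt_irrefl _), if_pos (Nat.lt_succ_iff.1 hj'),
      E.y_v t s j (Nat.lt_succ_iff.1 hj')]
  · rw [if_neg (lt_irrefl _), if_neg (Nat.not_succ_le_self _), E.y_z]

end ExtensionPairing

theorem ChainPairing.extend [DecidableEq κ] (P : ChainPairing G c k u v R) (hF : F.IsAlt)
    (hc : c ≤ 1) (E : ExtensionPairing F G c k u v R y z Φ) (hζ : ∀ s, F (ζ s) = 0) :
    ChainPairing F c (extendLength κ k) (extendLeft k u y Φ) (extendRight k v z Φ ζ)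
      (R.map Φ) where
  u_v := E.extend_u_v P hF hc hζ
  u_u := by
    rintro (t | t) (s | s) i j _ _ <;> simp only [extendLeft, Sum.elim_inl, Sum.elim_inr,
      Pi.zero_apply, map_zero, LinearMap.zero_apply]
    split_ifs with h1 h2 h2
    · rw [E.map_map, P.u_u t s i j h1 h2]
    · exact E.map_y_u hF h1
    · exact E.y_u t s j h2
    · exact E.y_y t s
  v_v := by
    rintro (t | t) (s | s) i j _ _ <;> simp only [extendRight, Sum.elim_inl, Sum.elim_inr,
      hζ, apply_eq_zero_of_left hF (hζ _), LinearMap.zero_apply]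
    split_ifs with h1 h2 h2
    · rw [E.map_map, P.v_v t s i j h1 h2]
    · exact E.map_z hF _ s
    · exact E.z_map t _
    · exact E.z_z t s
  mem_u := by
    rintro _ ⟨r, hr, rfl⟩ (t | t) i _ <;> simp only [extendLeft, Sum.elim_inl, Sum.elim_inr,
      Pi.zero_apply, map_zero]
    split_ifs with h
    · rw [E.map_map, P.mem_u r hr t i h]
    · exact hF.isRefl _ _ (E.y_mem t r hr)
  mem_v := by
    rintro _ ⟨r, hr, rfl⟩ (t | t) i _ <;> simp only [extendRight, Sum.elim_inl, Sum.elim_inr,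
      apply_eq_zero_of_left hF (hζ _)]
    split_ifs with h
    · rw [E.map_map, P.mem_v r hr t i h]
    · exact E.map_z hF r t

end Extension

section Core

variable {K V : Type*} [Field K] [AddCommGroup V] [Module K V] {A B : V →ₗ[K] V →ₗ[K] K}
  {W : Submodule K V}

/-- Every vector of the kernel of `B` is the beginning of an infinite Kronecker chain of the pencil
`A - λB`. -/
def HasChains (A B : V →ₗ[K] V →ₗ[K] K) : Prop :=
  ∀ z, B z = 0 → ∃ v : ℕ → V, v 0 = z ∧ ∀ i, B (v (i + 1)) = A (v i)

theorem apply_chain_eq_zero (hA : A.IsAlt) (hB : B.IsAlt) {w : ℕ → V}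
    (hw : ∀ i, B (w (i + 1)) = A (w i)) (i : ℕ) {z : V} (hz : B z = 0) : A z (w i) = 0 := by
  rw [← hA.neg, ← hw, apply_eq_zero_of_left hB hz, neg_zero]

theorem HasChains.isotropic (hA : A.IsAlt) (hB : B.IsAlt) (hC : HasChains A B) {x x' : V}
    (hx : B x = 0) (hx' : B x' = 0) : A x x' = 0 := by
  obtain ⟨w, rfl, hw⟩ := hC x' hx'
  exact apply_chain_eq_zero hA hB hw 0 hx

/-- `W` is a complement of the kernel of `B` inside the orthogonal of that kernel under `A`. -/
structure IsCore (A B : V →ₗ[K] V →ₗ[K] K) (W : Submodule K V) : Prop where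
  eq_zero : ∀ x ∈ W, B x = 0 → x = 0
  orth : ∀ x ∈ W, ∀ z, B z = 0 → A z x = 0
  exists_mem : ∀ x, (∀ z, B z = 0 → A z x = 0) → ∃ b ∈ W, B x = B b

theorem HasChains.exists_isCore (hA : A.IsAlt) (hB : B.IsAlt) (hC : HasChains A B) :
    ∃ W : Submodule K V, IsCore A B W := by
  obtain ⟨Q, hQ⟩ := Submodule.exists_isCompl (LinearMap.ker B)
  have hmem (x : V) : x ∈ ((LinearMap.ker B).map A).dualCoannihilator ↔
      ∀ z, B z = 0 → A z x = 0 := by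
    simp [Submodule.mem_dualCoannihilator]
  refine ⟨Q ⊓ ((LinearMap.ker B).map A).dualCoannihilator,
    fun x hx h ↦ Submodule.disjoint_def.1 hQ.disjoint x h hx.1, fun x hx ↦ (hmem x).1 hx.2,
    fun x hx ↦ ?_⟩
  obtain ⟨z, hz, q, hq, rfl⟩ := Submodule.mem_sup.1
    (hQ.codisjoint.eq_top ▸ Submodule.mem_top : x ∈ LinearMap.ker B ⊔ Q)
  refine ⟨q, ⟨hq, (hmem q).2 fun z' hz' ↦ ?_⟩, by rw [map_add, LinearMap.mem_ker.1 hz, zero_add]⟩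
  have h := hx z' hz'
  rwa [map_add, hC.isotropic hA hB hz' hz, zero_add] at h

namespace IsCore

variable (hW : IsCore A B W)

include hW in
theorem exists_repr [FiniteDimensional K V] (hB : B.IsAlt) {b : V}
    (hb : ∀ x ∈ W, B b x = 0) : ∃ z, B z = 0 ∧ A z = B b := by
  refine exists_mem_eq_of_dualCoannihilator A (LinearMap.ker B) (B b) fun x hx ↦ ?_
  obtain ⟨c, hc, hxc⟩ := hW.exists_mem x hx
  rw [← hB.neg, hxc, hB.neg, hb c hc]

include hW in
theorem hasChains [FiniteDimensional K V] (hA : A.IsAlt) (hB : B.IsAlt) (hC : HasChains A B) :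
    HasChains (A.domRestrict₁₂ W W) (B.domRestrict₁₂ W W) := by
  intro z hz
  obtain ⟨w, hw, hwz⟩ := hW.exists_repr hB (b := z) fun x hx ↦ LinearMap.congr_fun hz ⟨x, hx⟩
  obtain ⟨c, rfl, hc⟩ := hC w hw
  choose b hb hbc using fun i ↦ hW.exists_mem (c i) fun z hz ↦ apply_chain_eq_zero hA hB hc i hz
  refine ⟨fun i ↦ ⟨b (i + 1), hb _⟩, Subtype.ext (sub_eq_zero.1 ?_), fun i ↦ ?_⟩
  · refine hW.eq_zero _ (W.sub_mem (hb _) z.2) ?_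
    rw [map_sub, ← hbc, hc, hwz, sub_self]
  · ext x
    have h := hW.orth x x.2 (c (i + 1) - b (i + 1)) (by rw [map_sub, ← hbc, sub_self])
    rw [map_sub, LinearMap.sub_apply, sub_eq_zero] at h
    simp only [LinearMap.domRestrict₁₂_apply]
    rw [← hbc, hc, h]

variable {Φ : W →ₗ[K] V}

include hW in
theorem apply_lift_of_ker (hA : A.IsAlt) (hB : B.IsAlt) (hC : HasChains A B)
    (hΦ : ∀ b, B (Φ b) = B b) {x : V} (hx : B x = 0) (b : W) : A x (Φ b) = 0 := by
  have h := hC.isotropic hA hB hx (x' := Φ b - b) (by rw [map_sub, hΦ, sub_self])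
  rwa [map_sub, hW.orth b b.2 x hx, sub_zero] at h

include hW in
theorem apply_lift_lift (hA : A.IsAlt) (hB : B.IsAlt) (hC : HasChains A B)
    (hΦ : ∀ b, B (Φ b) = B b) (b b' : W) : A (Φ b) (Φ b') = A b b' := by
  have hker (b : W) : B (Φ b - b) = 0 := by rw [map_sub, hΦ, sub_self]
  have hleft := hW.apply_lift_of_ker hA hB hC hΦ (hker b) b'
  have hright := hA.isRefl _ _ (hW.orth b b.2 _ (hker b'))
  rw [map_sub, LinearMap.sub_apply, sub_eq_zero] at hleft
  rw [map_sub, sub_eq_zero] at hright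
  rw [hleft, hright]

end IsCore

end Core

section CoreExtension

variable {K V : Type*} [Field K] [AddCommGroup V] [Module K V] {A B : V →ₗ[K] V →ₗ[K] K}
  {W : Submodule K V} {ι : Type*} [Fintype ι] [DecidableEq ι] {k : ι → ℕ} {u v : ι → ℕ → W}
  {R : Submodule K W} {y z : ι → V} {Φ : W →ₗ[K] V}

/-- The data which extend a chain decomposition of the core `W` to one of the whole space: `Φ` is
a lift of `W` modulo the kernel of `B`, and `z t` is the Kronecker successor of `v t (k t)`. -/
structure CoreExtension (A B : V →ₗ[K] V →ₗ[K] K) (W : Submodule K V) (k : ι → ℕ)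
    (u v : ι → ℕ → W) (R : Submodule K W) (y z : ι → V) (Φ : W →ₗ[K] V) : Prop where
  fst : ExtensionPairing A (A.domRestrict₁₂ W W) 1 k u v R y z Φ
  snd : ExtensionPairing B (B.domRestrict₁₂ W W) 0 k u v R y z Φ
  fst_z : ∀ t, A (z t) = B (v t (k t))
  snd_z : ∀ t, B (z t) = 0
  snd_map : ∀ b, B (Φ b) = B b

variable (hW : IsCore A B W)
  (D : ChainDecomposition (A.domRestrict₁₂ W W) (B.domRestrict₁₂ W W) k u v R)

namespace IsCore

include D in
theorem snd_top (hB : B.IsAlt) (t : ι) (b : W) : B (v t (k t)) b = 0 :=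
  LinearMap.congr_fun (D.snd_top (fun x ↦ hB x) t) b

include hW D in
theorem linearIndependent_snd_top :
    LinearIndependent K fun t ↦ B (v t (k t)) :=
  D.linearIndependent_top.map' (B.comp W.subtype)
    (LinearMap.ker_eq_bot'.2 fun b hb ↦ Subtype.ext (hW.eq_zero b b.2 hb))

include hW D in
theorem exists_extensionPairing [FiniteDimensional K V] [NeZero (2 : K)] (hB : B.IsAlt)
    (hz : ∀ t, B (z t) = 0) :
    ∃ y, ExtensionPairing B (B.domRestrict₁₂ W W) 0 k u v R y z W.subtype := by
  have htop (t : ι) (b : W) : B b (v t (k t)) = 0 := hB.isRefl _ _ (snd_top D hB t b)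
  obtain ⟨y, hy⟩ := exists_biorthogonal (hW.linearIndependent_snd_top D).neg
  choose x hxu hxv hxR using fun t ↦ D.exists_repr (fun x ↦ hB x) ((B (y t)).domRestrict W)
  have hyx (t s : ι) : B (y t - x t) (v s (k s)) = if t = s then 1 else 0 := by
    rw [map_sub, LinearMap.sub_apply, htop, sub_zero, ← hB.neg]
    exact hy s t
  obtain ⟨e, he⟩ := exists_isotropic_add hB (fun t ↦ y t - x t) (fun t ↦ (v t (k t) : V)) hyx
    fun t s ↦ snd_top D hB t _
  set y' : ι → V := fun t ↦ y t - x t + ∑ r, e t r • (v r (k r) : V) with hy'_def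
  have hy' (t : ι) (b : W) : B (y' t) b = B (y t) b - B (x t) b := by
    simp [hy'_def, snd_top D hB]
  refine ⟨y', fun b b' ↦ rfl, fun t s i hi ↦ (hy' t _).trans (sub_eq_zero.2 (hxu t s i hi).symm),
    fun t s j hj ↦ ?_, fun t r hr ↦ (hy' t r).trans (sub_eq_zero.2 (hxR t r hr).symm), he,
    fun t s ↦ ?_, fun t b ↦ by rw [hz, LinearMap.zero_apply],
    fun t s ↦ by rw [hz, LinearMap.zero_apply]⟩
  · refine (hy' t _).trans ?_
    rcases hj.lt_or_eq with hj | rfl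
    · rw [if_neg (by rintro ⟨rfl, h⟩; omega)]
      exact sub_eq_zero.2 (hxv t s j hj).symm
    · rw [← LinearMap.sub_apply, ← map_sub, hyx]
      exact if_congr ⟨fun h ↦ ⟨h, by rw [h, add_zero]⟩, And.left⟩ rfl rfl
  · rw [apply_eq_zero_of_left hB (hz s), if_neg]
    rintro ⟨rfl, h⟩
    omega

end IsCore

omit [Fintype ι] in
theorem exists_lift [Finite ι] (W : Submodule K V) (hz : ∀ t, B (z t) = 0)
    (hyz : ∀ t s, A (y t) (z s) = if t = s then 1 else 0) :
    ∃ Φ : W →ₗ[K] V, (∀ b, B (Φ b) = B b) ∧ ∀ t b, A (y t) (Φ b) = 0 := by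
  have := Fintype.ofFinite ι
  refine ⟨W.subtype - ∑ s, ((A (y s)).domRestrict W).smulRight (z s), fun b ↦ ?_, fun t b ↦ ?_⟩
  · simp [LinearMap.sum_apply, hz]
  · simp [LinearMap.sum_apply, hyz]

omit [Fintype ι] in
theorem ExtensionPairing.of_subtype {c : ℕ} {y' : ι → V} (hB : B.IsAlt)
    (E : ExtensionPairing B (B.domRestrict₁₂ W W) c k u v R y z W.subtype)
    (hy : ∀ t, B (y' t) = B (y t)) (hΦ : ∀ b, B (Φ b) = B b) :
    ExtensionPairing B (B.domRestrict₁₂ W W) c k u v R y' z Φ := by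
  have hBΦ (x : V) (b : W) : B x (Φ b) = B x b := by rw [← hB.neg, hΦ, hB.neg]
  refine ⟨fun b b' ↦ ?_, fun t s i hi ↦ ?_, fun t s j hj ↦ ?_, fun t r hr ↦ ?_, fun t s ↦ ?_,
    fun t s ↦ ?_, fun t b ↦ ?_, E.z_z⟩
  · rw [hΦ, hBΦ]
    rfl
  · rw [hBΦ, hy]
    exact E.y_u t s i hi
  · rw [hBΦ, hy]
    exact E.y_v t s j hj
  · rw [hBΦ, hy]
    exact E.y_mem t r hr
  · rw [hy, ← hB.neg, hy, hB.neg]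
    exact E.y_y t s
  · rw [hy]
    exact E.y_z t s
  · rw [hBΦ]
    exact E.z_map t b

include hW D in
theorem exists_coreExtension [FiniteDimensional K V] [NeZero (2 : K)] (hA : A.IsAlt)
    (hB : B.IsAlt) (hC : HasChains A B) : ∃ y z Φ, CoreExtension A B W k u v R y z Φ := by
  choose z hz hAz using fun t ↦ hW.exists_repr hB fun x hx ↦ IsCore.snd_top D hB t ⟨x, hx⟩
  obtain ⟨y, E⟩ := hW.exists_extensionPairing D hB hz
  have hyz (t s : ι) : A (y t) (z s) = if t = s then 1 else 0 := by
    rw [← hA.neg, hAz, hB.neg]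
    refine (E.y_v t s _ le_rfl).trans (if_congr ⟨And.left, fun h ↦ ?_⟩ rfl rfl)
    exact ⟨h, by rw [h, add_zero]⟩
  have hzz (t s : ι) : A (z t) (z s) = 0 := hC.isotropic hA hB (hz t) (hz s)
  obtain ⟨e, he⟩ := exists_isotropic_add hA y z hyz hzz
  set y' : ι → V := fun t ↦ y t + ∑ r, e t r • z r with hy'_def
  have hBy (t : ι) : B (y' t) = B (y t) := by simp [hy'_def, hz]
  have hyz' (t s : ι) : A (y' t) (z s) = if t = s then 1 else 0 := by simp [hy'_def, hyz, hzz]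
  obtain ⟨Φ, hBΦ, hyΦ⟩ := exists_lift W hz hyz'
  refine ⟨y', z, Φ, ⟨hW.apply_lift_lift hA hB hC hBΦ, fun t s i _ ↦ hyΦ t _, fun t s j hj ↦ ?_,
    fun t r _ ↦ hyΦ t r, he, fun t s ↦ ?_, fun t ↦ hW.apply_lift_of_ker hA hB hC hBΦ (hz t),
    hzz⟩, E.of_subtype hB hBy hBΦ, hAz, hz, hBΦ⟩
  · rw [hyΦ, if_neg]
    rintro ⟨rfl, h⟩
    omega
  · rw [hyz']
    exact if_congr ⟨fun h ↦ ⟨h, by rw [h]⟩, And.left⟩ rfl rfl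

/-- The map assembling `V` from the new left vectors `y t`, the lifted core, the new right vectors
`z t` and the common kernel of both forms. -/
def assemble (A B : V →ₗ[K] V →ₗ[K] K) (y z : ι → V) (Φ : W →ₗ[K] V) :
    (ι → K) × W × (ι → K) × ↥(LinearMap.ker A ⊓ LinearMap.ker B) →ₗ[K] V :=
  (Fintype.linearCombination K y).coprod (Φ.coprod
    ((Fintype.linearCombination K z).coprod (Submodule.subtype _)))

omit [DecidableEq ι] in
theorem assemble_apply (a c : ι → K) (b : W) (d : ↥(LinearMap.ker A ⊓ LinearMap.ker B)) :
    assemble A B y z Φ (a, b, c, d) =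
      ∑ t, a t • y t + (Φ b + (∑ t, c t • z t + (d : V))) := rfl

namespace CoreExtension

variable (X : CoreExtension A B W k u v R y z Φ)

omit [Fintype ι] in
include X in
theorem snd_y_top (hB : B.IsAlt) (t s : ι) : B (y t) (v s (k s)) = if t = s then 1 else 0 := by
  rw [← hB.neg, ← X.snd_map, hB.neg, X.snd.y_v t s _ le_rfl]
  exact if_congr ⟨And.left, fun h ↦ ⟨h, by rw [h, add_zero]⟩⟩ rfl rfl

include hW D X in
theorem exists_sub_sum_mem (hA : A.IsAlt) (hB : B.IsAlt) (hC : HasChains A B) {x : V}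
    (hx : B x = 0) : ∃ c : ι → K, x - ∑ t, c t • z t ∈ LinearMap.ker A ⊓ LinearMap.ker B := by
  obtain ⟨w, rfl, hw⟩ := hC x hx
  obtain ⟨b, hb, hwb⟩ := hW.exists_mem (w 1) fun z hz ↦ apply_chain_eq_zero hA hB hw 1 hz
  have hker : B.domRestrict₁₂ W W ⟨b, hb⟩ = 0 := LinearMap.ext fun x ↦ by
    change B b x = 0
    rw [← hwb, hw]
    exact hW.orth x x.2 _ hx
  obtain ⟨c, hc⟩ := D.exists_eq_sum_top (fun x ↦ hB x) hker
  have hc' : b = ∑ t, c t • (v t (k t) : V) := by simpa using congrArg Subtype.val hc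
  refine ⟨c, ?_, by simp [hx, X.snd_z]⟩
  rw [SetLike.mem_coe, LinearMap.mem_ker, map_sub, ← hw, hwb, hc']
  simp [X.fst_z]

include hW D X in
theorem surjective_assemble (hA : A.IsAlt) (hB : B.IsAlt) (hC : HasChains A B) :
    Function.Surjective (assemble A B y z Φ) := by
  intro x
  set a : ι → K := fun t ↦ B x (v t (k t)) with ha
  set x' := x - ∑ t, a t • y t with hx'
  have htop (s : ι) : A (z s) x' = 0 := by
    rw [X.fst_z, ← hB.neg]
    simp [hx', ha, X.snd_y_top hB]
  obtain ⟨b, hb, hxb⟩ := hW.exists_mem x' fun w hw ↦ by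
    obtain ⟨c, hc, -⟩ := X.exists_sub_sum_mem hW D hA hB hC hw
    rw [SetLike.mem_coe, LinearMap.mem_ker, map_sub, sub_eq_zero] at hc
    simp [hc, LinearMap.sum_apply, htop]
  obtain ⟨c, hc⟩ := X.exists_sub_sum_mem hW D hA hB hC (x := x' - Φ ⟨b, hb⟩) (by
    rw [map_sub, X.snd_map, hxb, sub_self])
  refine ⟨(a, ⟨b, hb⟩, c, ⟨_, hc⟩), ?_⟩
  rw [assemble_apply]
  simp only [hx']
  abel

include hW D X in
theorem injective_assemble (hB : B.IsAlt) : Function.Injective (assemble A B y z Φ) := by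
  refine LinearMap.ker_eq_bot.1 (LinearMap.ker_eq_bot'.2 ?_)
  rintro ⟨a, b, c, d⟩ h
  rw [assemble_apply] at h
  have hrest : B (Φ b + (∑ t, c t • z t + (d : V))) = B b := by
    simp [X.snd_z, X.snd_map, LinearMap.mem_ker.1 d.2.2]
  obtain rfl : a = 0 := funext fun s ↦ by
    have hs := LinearMap.congr_fun (congrArg B h) (v s (k s))
    have hbs : B b (v s (k s)) = 0 := hB.isRefl _ _ (IsCore.snd_top D hB s b)
    rw [map_add, hrest] at hs
    simpa [hbs, X.snd_y_top hB] using hs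
  simp only [Pi.zero_apply, zero_smul, Finset.sum_const_zero, zero_add] at h
  obtain rfl : b = 0 := Subtype.ext (hW.eq_zero b b.2 (by rw [← hrest, h, map_zero]))
  rw [map_zero, zero_add] at h
  have hz := Fintype.linearIndependent_iff.1 (hW.linearIndependent_snd_top D) c (by
    simpa [X.fst_z, LinearMap.mem_ker.1 d.2.1] using congrArg A h)
  obtain rfl : c = 0 := funext hz
  obtain rfl : d = 0 := Subtype.ext (by simpa using h)
  rfl

include hW D X in
theorem finrank_eq [FiniteDimensional K V] (hA : A.IsAlt) (hB : B.IsAlt) (hC : HasChains A B) :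
    Module.finrank K V = ∑ t, (2 * (k t + 1) + 1) +
      Module.finrank K ↥(LinearMap.ker A ⊓ LinearMap.ker B) + Module.finrank K (R.map Φ) := by
  have hΦ : Function.Injective Φ := LinearMap.ker_eq_bot.1 <| LinearMap.ker_eq_bot'.2 fun b hb ↦
    Subtype.ext (hW.eq_zero b b.2 (by rw [← X.snd_map, hb, map_zero]))
  rw [← (LinearEquiv.ofBijective _ ⟨X.injective_assemble hW D hB,
      X.surjective_assemble hW D hA hB hC⟩).finrank_eq,
    ← (Submodule.equivMapOfInjective Φ hΦ R).finrank_eq]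
  simp only [Module.finrank_prod, D.finrank_eq, Module.finrank_fintype_fun_eq_card, mul_add,
    Finset.sum_add_distrib, Finset.sum_const, Finset.card_univ, smul_eq_mul]
  ring

variable {κ : Type*} (ζ : Module.Basis κ K ↥(LinearMap.ker A ⊓ LinearMap.ker B))

include hW D X in
theorem linearIndependent_top [Finite κ] (hB : B.IsAlt) :
    LinearIndependent K (Sum.elim z fun s ↦ (ζ s : V)) := by
  have := Fintype.ofFinite κ
  rw [Fintype.linearIndependent_iff]
  intro c hc
  have h := X.injective_assemble hW D hB
    (a₁ := (0, 0, fun t ↦ c (Sum.inl t), ∑ s, c (Sum.inr s) • ζ s)) (a₂ := 0) (by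
      rw [map_zero, ← hc, assemble_apply, Fintype.sum_sum_type]
      simp)
  simp only [Prod.mk_eq_zero, true_and] at h
  rintro (t | s)
  · exact congrFun h.1 t
  · exact Fintype.linearIndependent_iff.1 ζ.linearIndependent _ h.2 s

include hW D X in
theorem extend [Fintype κ] [DecidableEq κ] [FiniteDimensional K V] (hA : A.IsAlt) (hB : B.IsAlt)
    (hC : HasChains A B) :
    ChainDecomposition A B (extendLength κ k) (extendLeft k u y Φ)
      (extendRight k v z Φ fun s ↦ (ζ s : V)) (R.map Φ) where
  fst := D.fst.extend hA le_rfl X.fst fun s ↦ (ζ s).2.1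
  snd := D.snd.extend hB zero_le_one X.snd fun s ↦ (ζ s).2.2
  nondegenerate := by
    rintro _ ⟨r, hr, rfl⟩ h
    rw [D.nondegenerate r hr fun s hs ↦ ?_, map_zero]
    rw [← X.snd.map_map]
    exact h (Φ s) (Submodule.mem_map_of_mem hs)
  linearIndependent_top := by
    convert X.linearIndependent_top hW D ζ hB using 1
    funext t
    rcases t with t | t <;> simp [extendRight, extendLength]
  eq_top Q hu hv hR := by
    have hz (t : ι) : z t ∈ Q := by
      simpa [extendRight] using hv (Sum.inl t) (k t + 1) le_rfl
    have hy (t : ι) : y t ∈ Q := by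
      simpa [extendLeft] using hu (Sum.inl t) (k t) (Nat.lt_succ_self _)
    have hΦ : Q.comap Φ = ⊤ := D.eq_top _
      (fun t i hi ↦ by simpa [extendLeft, hi] using hu (Sum.inl t) i (Nat.lt_succ_of_lt hi))
      (fun t i hi ↦ by simpa [extendRight, hi] using hv (Sum.inl t) i (Nat.le_succ_of_le hi))
      (Submodule.map_le_iff_le_comap.1 hR)
    refine Submodule.eq_top_iff'.2 fun x ↦ ?_
    obtain ⟨⟨a, b, c, d⟩, rfl⟩ := X.surjective_assemble hW D hA hB hC x
    have hd : (d : V) ∈ Q := by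
      rw [← ζ.sum_repr d, Submodule.coe_sum]
      exact Q.sum_mem fun s _ ↦ Q.smul_mem _ (hv (Sum.inr s) 0 le_rfl)
    exact Q.add_mem (Q.sum_mem fun t _ ↦ Q.smul_mem _ (hy t)) <|
      Q.add_mem (Submodule.eq_top_iff'.1 hΦ b) <|
        Q.add_mem (Q.sum_mem fun t _ ↦ Q.smul_mem _ (hz t)) hd
  finrank_eq := by
    rw [X.finrank_eq hW D hA hB hC, Module.finrank_eq_card_basis ζ]
    simp [extendLength, Fintype.sum_sum_type]

end CoreExtension

end CoreExtension

theorem chainDecomposition_of_nondegenerate {K V : Type*} [Field K] [AddCommGroup V] [Module K V]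
    (A B : V →ₗ[K] V →ₗ[K] K) (hB : ∀ x, B x = 0 → x = 0) :
    ChainDecomposition A B (Empty.elim : Empty → ℕ) Empty.elim Empty.elim ⊤ where
  fst := by constructor <;> simp
  snd := by constructor <;> simp
  nondegenerate r _ hr := hB r (LinearMap.ext fun s ↦ hr s trivial)
  linearIndependent_top := linearIndependent_empty_type
  eq_top _ _ _ h := top_le_iff.1 h
  finrank_eq := by simp

theorem exists_chainDecomposition {K : Type*} [Field K] [NeZero (2 : K)] {V : Type*}
    [AddCommGroup V] [Module K V] [FiniteDimensional K V] {A B : V →ₗ[K] V →ₗ[K] K}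
    (hA : A.IsAlt) (hB : B.IsAlt) (hC : HasChains A B) :
    ∃ (ι : Type) (_ : Fintype ι) (_ : DecidableEq ι) (k : ι → ℕ) (u v : ι → ℕ → V)
      (R : Submodule K V), ChainDecomposition A B k u v R := by
  induction hn : Module.finrank K V using Nat.strong_induction_on generalizing V with
  | _ n ih =>
    by_cases hker : ∀ x, B x = 0 → x = 0
    · exact ⟨Empty, inferInstance, inferInstance, _, _, _, _,
        chainDecomposition_of_nondegenerate A B hker⟩
    · push Not at hker
      obtain ⟨x, hx, hx0⟩ := hker
      obtain ⟨W, hW⟩ := hC.exists_isCore hA hB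
      have hWtop : W ≠ ⊤ := fun h ↦ hx0 (hW.eq_zero x (h ▸ Submodule.mem_top) hx)
      obtain ⟨ι, _, _, k, u, v, R, D⟩ := ih _ (hn ▸ Submodule.finrank_lt hWtop) (V := W)
        (fun x ↦ hA x) (fun x ↦ hB x) (hW.hasChains hA hB hC) rfl
      obtain ⟨y, z, Φ, X⟩ := exists_coreExtension hW D hA hB hC
      exact ⟨_, inferInstance, inferInstance, _, _, _, _,
        X.extend hW D (Module.finBasis K _) hA hB hC⟩

/-! ### Gram matrices -/

section HyperbolicPairing

variable {K V α β γ : Type*} [Field K] [AddCommGroup V] [Module K V] {F : V →ₗ[K] V →ₗ[K] K}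
  {M : Matrix α β K} {p : α → V} {q : β → V}

/-- The families `p` and `q` are isotropic for `F`, and their pairing has the matrix `M`. -/
structure HyperbolicPairing (F : V →ₗ[K] V →ₗ[K] K) (M : Matrix α β K) (p : α → V) (q : β → V) :
    Prop where
  left_right : ∀ i j, F (p i) (q j) = M i j
  left_left : ∀ i j, F (p i) (p j) = 0
  right_right : ∀ i j, F (q i) (q j) = 0

namespace HyperbolicPairing

variable (h : HyperbolicPairing F M p q)

include h in
theorem right_left (hF : F.IsAlt) (i : β) (j : α) : F (q i) (p j) = -M j i := by
  rw [← hF.neg, h.left_right]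

include h in
theorem gram_sumElim (hF : F.IsAlt) {r : γ → V} (hp : ∀ j i, F (r j) (p i) = 0)
    (hq : ∀ j i, F (r j) (q i) = 0) :
    (Matrix.of fun i j ↦ F (Sum.elim (Sum.elim p q) r i) (Sum.elim (Sum.elim p q) r j)) =
      fromBlocks (fromBlocks 0 M (-Mᵀ) 0) 0 0 (Matrix.of fun i j ↦ F (r i) (r j)) := by
  have hpr : ∀ i j, F (p i) (r j) = 0 := fun i j ↦ by rw [← hF.neg, hp, neg_zero]
  have hqr : ∀ i j, F (q i) (r j) = 0 := fun i j ↦ by rw [← hF.neg, hq, neg_zero]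
  ext i j
  rcases i with (i | i) | i <;> rcases j with (j | j) | j <;>
    simp [h.left_right, h.right_left hF, h.left_left, h.right_right, hp, hq, hpr, hqr]

end HyperbolicPairing

namespace HyperbolicPairing

variable [Finite α] [DecidableEq α] {q : α → V} (h : HyperbolicPairing F 1 p q)

omit [Finite α] in
include h in
theorem eq_zero_of_sum_apply_eq_zero [Fintype α] (hF : F.IsAlt) {c : α ⊕ α → K}
    (hc : ∀ j, F (∑ i, c i • Sum.elim p q i) (Sum.elim p q j) = 0) : c = 0 := by
  funext i
  rcases i with i | i
  · simpa [h.left_right, h.right_right, Matrix.one_apply] using hc (.inr i)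
  · simpa [h.left_left, h.right_left hF, Matrix.one_apply] using hc (.inl i)

include h in
theorem linearIndependent (hF : F.IsAlt) : LinearIndependent K (Sum.elim p q) := by
  have := Fintype.ofFinite α
  exact Fintype.linearIndependent_iff.2 fun c hc ↦ congrFun <|
    h.eq_zero_of_sum_apply_eq_zero hF (c := c) (by simp [hc])

include h in
theorem disjoint_orthogonal (hF : F.IsAlt) :
    Disjoint (Submodule.span K (Set.range (Sum.elim p q)))
      (LinearMap.BilinForm.orthogonal F (Submodule.span K (Set.range (Sum.elim p q)))) := by
  have := Fintype.ofFinite α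
  rw [Submodule.disjoint_def]
  intro x hx hx'
  obtain ⟨c, rfl⟩ := (Submodule.mem_span_range_iff_exists_fun K).1 hx
  have hc : c = 0 := h.eq_zero_of_sum_apply_eq_zero hF fun j ↦
    hF.isRefl _ _ (hx' _ (Submodule.subset_span ⟨j, rfl⟩))
  simp [hc]

end HyperbolicPairing

end HyperbolicPairing

/-! ### Jordan chains of a nondegenerate pair of alternating forms -/

section JordanChains

variable {K V : Type*} [Field K] [AddCommGroup V] [Module K V] {A B : V →ₗ[K] V →ₗ[K] K}
  {N : Module.End K V}

theorem linearIndependent_pow_apply {e : ℕ} {x : V} (hx : (N ^ e) x = 0)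
    (hx' : (N ^ (e - 1)) x ≠ 0) : LinearIndependent K fun t : Fin e ↦ (N ^ (t : ℕ)) x := by
  refine Fintype.linearIndependent_iff.2 fun c h t ↦ ?_
  suffices ∀ m (hm : m < e), c ⟨m, hm⟩ = 0 from this t t.2
  intro m
  induction m using Nat.strong_induction_on with
  | _ m ih =>
    intro hm
    have := congrArg (N ^ (e - 1 - m)) h
    rw [map_sum, map_zero, Finset.sum_eq_single ⟨m, hm⟩, map_smul, ← Module.End.mul_apply,
      ← pow_add, show e - 1 - m + m = e - 1 by omega] at this
    · exact (smul_eq_zero.1 this).resolve_right hx'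
    · intro t _ ht
      rw [map_smul, ← Module.End.mul_apply, ← pow_add]
      rcases lt_or_gt_of_ne (fun h ↦ ht (Fin.ext h) : (t : ℕ) ≠ m) with h | h
      · rw [ih t h t.2, zero_smul]
      · rw [show e - 1 - m + t = (t - m - 1) + e by omega, pow_add, Module.End.mul_apply, hx,
          map_zero, smul_zero]
    · simp

theorem exists_end_of_nondegenerate [FiniteDimensional K V] (A : V →ₗ[K] V →ₗ[K] K)
    (hB : B.IsAlt) (hB0 : ∀ x, B x = 0 → x = 0) :
    ∃ T : Module.End K V, ∀ x y, A x y = B (T x) y := by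
  have hinj : Function.Injective B := LinearMap.ker_eq_bot.1 (LinearMap.ker_eq_bot'.2 hB0)
  let φ := LinearEquiv.ofBijective B ⟨hinj, surjective_of_isAlt hB hB0⟩
  exact ⟨φ.symm ∘ₗ A, fun x y ↦ (LinearMap.congr_fun (φ.apply_symm_apply (A x)) y).symm⟩

theorem isSelfAdjoint_of_apply_eq (hA : A.IsAlt) (hB : B.IsAlt) {μ : K}
    (hN : ∀ x y, A x y = B (N x) y + μ * B x y) : B.IsSelfAdjoint N := fun x y ↦ by
  have h1 := hN x y
  have h2 := hN y x
  rw [← hA.neg, h2, ← hB.neg y (N x), ← hB.neg x y] at h1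
  rw [← hB.neg y (N x), ← hB.neg (N y) x]
  linear_combination -h1

theorem isSelfAdjoint_pow (hN : B.IsSelfAdjoint N) (m : ℕ) : B.IsSelfAdjoint ⇑(N ^ m) := by
  induction m with
  | zero => exact fun x y ↦ rfl
  | succ m ih =>
    have h := LinearMap.IsAdjointPair.mul hN ih
    rw [← pow_succ, ← pow_succ'] at h
    exact h

theorem apply_pow_pow_self [NeZero (2 : K)] (hB : B.IsAlt) (hN : B.IsSelfAdjoint N) (x : V)
    (i j : ℕ) : B ((N ^ i) x) ((N ^ j) x) = 0 := by
  rw [← isSelfAdjoint_pow hN j, ← Module.End.mul_apply, ← pow_add]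
  have h := isSelfAdjoint_pow hN (j + i) x x
  refine (mul_eq_zero.1 (?_ : (2 : K) * _ = 0)).resolve_left (NeZero.ne (2 : K))
  linear_combination h - hB.neg ((N ^ (j + i)) x) x

theorem exists_mem_ker_pow_apply_eq (hN : B.IsSelfAdjoint N) {k : ℕ}
    (hk : IsCompl (LinearMap.ker (N ^ k)) (LinearMap.range (N ^ k))) (z : V) :
    ∃ y, (N ^ k) y = 0 ∧ ∀ x, (N ^ k) x = 0 → B x y = B x z := by
  obtain ⟨y, hy, _, ⟨r, rfl⟩, rfl⟩ := Submodule.mem_sup.1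
    (hk.sup_eq_top ▸ Submodule.mem_top : z ∈ LinearMap.ker (N ^ k) ⊔ _)
  exact ⟨y, hy, fun x hx ↦ by
    rw [map_add, ← isSelfAdjoint_pow hN, hx, map_zero, LinearMap.zero_apply, add_zero]⟩

/-- The vectors `x` and `y` generate dual Jordan chains of length `e`, for the eigenvalue zero, of
an endomorphism `N` which is self-adjoint for `B`. -/
structure DualChainTops (B : V →ₗ[K] V →ₗ[K] K) (N : Module.End K V) (e : ℕ) (x y : V) : Prop where
  left : (N ^ e) x = 0
  right : (N ^ e) y = 0
  apply : ∀ m, B ((N ^ m) x) y = if m + 1 = e then 1 else 0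

theorem exists_dualChainTops [FiniteDimensional K V] (hB0 : ∀ x, B x = 0 → x = 0)
    (hN : B.IsSelfAdjoint N) {x₀ : V} (hx₀ : x₀ ≠ 0) (hNx₀ : N x₀ = 0) :
    ∃ e x y, 0 < e ∧ DualChainTops B N e x y := by
  obtain ⟨k, hk, hk0⟩ := (N.eventually_isCompl_ker_pow_range_pow.and
    (Filter.eventually_ge_atTop 1)).exists
  have hex : ∃ e, ∀ x, (N ^ k) x = 0 → (N ^ e) x = 0 := ⟨k, fun _ ↦ id⟩
  classical
  set e := Nat.find hex
  have he : ∀ x, (N ^ k) x = 0 → (N ^ e) x = 0 := Nat.find_spec hex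
  have he0 : 0 < e := by
    refine Nat.pos_of_ne_zero fun h ↦ hx₀ ?_
    have hkx₀ : (N ^ k) x₀ = 0 := by
      rw [← Nat.sub_add_cancel hk0, pow_succ, Module.End.mul_apply, hNx₀, map_zero]
    simpa [h] using he x₀ hkx₀
  obtain ⟨x, hxk, hx⟩ : ∃ x, (N ^ k) x = 0 ∧ (N ^ (e - 1)) x ≠ 0 := by
    simpa using Nat.find_min hex (m := e - 1) (Nat.sub_lt he0 one_pos)
  have hli : LinearIndependent K fun t : Fin e ↦ B ((N ^ (t : ℕ)) x) :=
    (linearIndependent_pow_apply (he x hxk) hx).map' B (LinearMap.ker_eq_bot'.2 hB0)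
  obtain ⟨z, hz⟩ := exists_biorthogonal hli
  obtain ⟨y, hyk, hy⟩ := exists_mem_ker_pow_apply_eq hN hk (z ⟨e - 1, by omega⟩)
  refine ⟨e, x, y, he0, he x hxk, he y hyk, fun m ↦ ?_⟩
  rcases lt_or_ge m e with hm | hm
  · rw [hy, hz ⟨m, hm⟩]
    · exact if_congr (by rw [Fin.ext_iff]; dsimp only; omega) rfl rfl
    · rw [← Module.End.mul_apply, ← pow_add, add_comm, pow_add, Module.End.mul_apply, hxk, map_zero]
  · rw [if_neg (by omega), ← Nat.sub_add_cancel hm, pow_add, Module.End.mul_apply, he x hxk,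
      map_zero, map_zero, LinearMap.zero_apply]

theorem apply_pow_eq_zero (hself : B.IsSelfAdjoint N) {μ : K}
    (hN : ∀ x y, A x y = B (N x) y + μ * B x y) {e : ℕ} {x w : V} (hx : (N ^ e) x = 0)
    (hw : ∀ i < e, B w ((N ^ i) x) = 0) (m : ℕ) : A w ((N ^ m) x) = 0 := by
  have hB : ∀ m, B w ((N ^ m) x) = 0 := fun m ↦ by
    rcases lt_or_ge m e with hm | hm
    · exact hw m hm
    · rw [← Nat.sub_add_cancel hm, pow_add, Module.End.mul_apply, hx, map_zero, map_zero]
  rw [hN, hself, ← Module.End.mul_apply, ← pow_succ', hB, hB, mul_zero, add_zero]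

end JordanChains

section JordanBlocks

variable {V : Type*} [AddCommGroup V] [Module ℂ V] {A B : V →ₗ[ℂ] V →ₗ[ℂ] ℂ}

/-- The families `p` and `q` realise the block `b` of the pair `(A, B)` of alternating forms. -/
structure BlockPairing (A B : V →ₗ[ℂ] V →ₗ[ℂ] ℂ) (b : CanonBlock) (p : Fin b.row → V)
    (q : Fin b.col → V) : Prop where
  fst : HyperbolicPairing A b.pen.1 p q
  snd : HyperbolicPairing B b.pen.2 p q

theorem CanonBlock.pen_fst_apply (b : CanonBlock) (i : Fin b.row) (j : Fin b.col) :
    b.pen.1 i j =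
      (if (j : ℕ) = i + 1 then 1 else 0) + b.eigenvalue * if (j : ℕ) = i then 1 else 0 := by
  simp [CanonBlock.pen, Pen.mobius, shiftPen, superdiag]

theorem CanonBlock.pen_snd_apply (b : CanonBlock) (i : Fin b.row) (j : Fin b.col) :
    b.pen.2 i j = if (j : ℕ) = i then 1 else 0 := by
  simp [CanonBlock.pen, Pen.mobius, shiftPen, superdiag]

theorem DualChainTops.blockPairing {N : Module.End ℂ V} {μ : ℂ} {e : ℕ} {x y : V}
    (h : DualChainTops B N e x y) (hA : A.IsAlt) (hB : B.IsAlt)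
    (hN : ∀ x y, A x y = B (N x) y + μ * B x y) :
    BlockPairing A B (.H μ e) (fun i : Fin e ↦ (N ^ (i : ℕ)) x)
      (fun j : Fin e ↦ (N ^ (e - 1 - j)) y) := by
  have hself := isSelfAdjoint_of_apply_eq hA hB hN
  have hBself := apply_pow_pow_self hB hself
  have hAself : ∀ x i j, A ((N ^ i) x) ((N ^ j) x) = 0 := fun x i j ↦ by
    rw [hN, ← Module.End.mul_apply, ← pow_succ', hBself, hBself, mul_zero, add_zero]
  have hBxy : ∀ (i : ℕ) (j : Fin e), B ((N ^ i) x) ((N ^ (e - 1 - j)) y) =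
      if (j : ℕ) = i then 1 else 0 := fun i j ↦ by
    rw [← isSelfAdjoint_pow hself, ← Module.End.mul_apply, ← pow_add, h.apply]
    exact if_congr (by omega) rfl rfl
  have hAxy : ∀ (i : ℕ) (j : Fin e), A ((N ^ i) x) ((N ^ (e - 1 - j)) y) =
      (if (j : ℕ) = i + 1 then 1 else 0) + μ * if (j : ℕ) = i then 1 else 0 := fun i j ↦ by
    rw [hN, ← Module.End.mul_apply, ← pow_succ', hBxy, hBxy]
  exact {
    fst.left_right := fun i j ↦ (hAxy _ _).trans (CanonBlock.pen_fst_apply _ i j).symm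
    fst.left_left := fun _ _ ↦ hAself _ _ _
    fst.right_right := fun _ _ ↦ hAself _ _ _
    snd.left_right := fun i j ↦ (hBxy _ _).trans (CanonBlock.pen_snd_apply _ i j).symm
    snd.left_left := fun _ _ ↦ hBself _ _ _
    snd.right_right := fun _ _ ↦ hBself _ _ _ }

/-- An isotropic pair `p`, `q` realising `b` such that whatever is orthogonal to it for `B` is also
orthogonal to it for `A`. -/
structure SplitBlock (A B : V →ₗ[ℂ] V →ₗ[ℂ] ℂ) (b : CanonBlock) (p : Fin b.row → V)
    (q : Fin b.col → V) : Prop extends BlockPairing A B b p q where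
  apply_eq_zero : ∀ w, (∀ i, B w (p i) = 0) → (∀ j, B w (q j) = 0) →
    (∀ i, A w (p i) = 0) ∧ ∀ j, A w (q j) = 0

theorem exists_splitBlock [FiniteDimensional ℂ V] [Nontrivial V] (hA : A.IsAlt) (hB : B.IsAlt)
    (hB0 : ∀ x, B x = 0 → x = 0) :
    ∃ (μ : ℂ) (e : ℕ) (p q : Fin e → V), 0 < e ∧ SplitBlock A B (.H μ e) p q := by
  obtain ⟨T, hT⟩ := exists_end_of_nondegenerate A hB hB0
  obtain ⟨μ, hμ⟩ := Module.End.exists_eigenvalue T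
  obtain ⟨x₀, hx₀⟩ := hμ.exists_hasEigenvector
  set N : Module.End ℂ V := T - algebraMap ℂ (Module.End ℂ V) μ
  have hN : ∀ x y, A x y = B (N x) y + μ * B x y := fun x y ↦ by rw [hT]; simp [N]
  have hself := isSelfAdjoint_of_apply_eq hA hB hN
  obtain ⟨e, x, y, he, h⟩ := exists_dualChainTops hB0 hself hx₀.2
    (by simp [N, hx₀.apply_eq_smul])
  refine ⟨μ, e, _, _, he, h.blockPairing hA hB hN, fun w hp hq ↦ ⟨fun i ↦ ?_, fun j ↦ ?_⟩⟩
  · exact apply_pow_eq_zero hself hN h.left (fun i hi ↦ hp ⟨i, hi⟩) _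
  · refine apply_pow_eq_zero hself hN h.right (fun i hi ↦ ?_) _
    have hlt : e - 1 - i < e := by omega
    simpa [show e - 1 - (e - 1 - i) = i by omega] using hq ⟨e - 1 - i, hlt⟩

end JordanBlocks

section Gram

variable {V : Type*} [AddCommGroup V] [Module ℂ V] {A B : V →ₗ[ℂ] V →ₗ[ℂ] ℂ}
  {l : List CanonBlock}

/-- The Gram matrices of the family `x` for `A` and `B` form the canonical pencil with the blocks
`l`. -/
structure IsCanonGram (A B : V →ₗ[ℂ] V →ₗ[ℂ] ℂ) (l : List CanonBlock) (x : CanonIdx l → V) :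
    Prop where
  fst : (Matrix.of fun i j ↦ A (x i) (x j)) = (canon l).1
  snd : (Matrix.of fun i j ↦ B (x i) (x j)) = (canon l).2

theorem BlockPairing.isCanonGram_cons {b : CanonBlock} {p : Fin b.row → V} {q : Fin b.col → V}
    (h : BlockPairing A B b p q) (hA : A.IsAlt) (hB : B.IsAlt) {x : CanonIdx l → V}
    (hx : IsCanonGram A B l x) (hAp : ∀ j i, A (x j) (p i) = 0) (hAq : ∀ j i, A (x j) (q i) = 0)
    (hBp : ∀ j i, B (x j) (p i) = 0) (hBq : ∀ j i, B (x j) (q i) = 0) :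
    IsCanonGram A B (b :: l) (Sum.elim (Sum.elim p q) x) where
  fst := (h.fst.gram_sumElim hA hAp hAq).trans (by rw [hx.fst]; rfl)
  snd := (h.snd.gram_sumElim hB hBp hBq).trans (by rw [hx.snd]; rfl)

theorem le_span_coe_of_span_eq_top {K V α : Type*} [Ring K] [AddCommGroup V] [Module K V]
    {R : Submodule K V} {x : α → R} (h : Submodule.span K (Set.range x) = ⊤) :
    R ≤ Submodule.span K (Set.range fun j ↦ (x j : V)) := by
  have := congrArg (Submodule.map R.subtype) h
  rw [Submodule.map_span, Submodule.map_subtype_top, ← Set.range_comp] at this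
  exact this.ge

theorem apply_eq_zero_of_mem_orthogonal {K V α : Type*} [Field K] [AddCommGroup V] [Module K V]
    {B : V →ₗ[K] V →ₗ[K] K} (hB : B.IsAlt) {x : α → V} {w : V}
    (hw : w ∈ LinearMap.BilinForm.orthogonal B (Submodule.span K (Set.range x))) (i : α) :
    B w (x i) = 0 :=
  hB.isRefl _ _ (hw _ (Submodule.subset_span ⟨i, rfl⟩))

theorem domRestrict_orthogonal_nondegenerate {K V : Type*} [Field K] [AddCommGroup V] [Module K V]
    {B : V →ₗ[K] V →ₗ[K] K} (hB : B.IsAlt) (hB0 : ∀ x, B x = 0 → x = 0) {S W : Submodule K V}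
    (hW : W = LinearMap.BilinForm.orthogonal B S) (h : IsCompl S W) (w : W)
    (hw : B.domRestrict₁₂ W W w = 0) : w = 0 := by
  refine Subtype.ext (hB0 w (LinearMap.ext fun v ↦ ?_))
  obtain ⟨s, hs, w', hw', rfl⟩ := Submodule.mem_sup.1
    (h.sup_eq_top.ge (Submodule.mem_top : v ∈ ⊤))
  have hws : B w s = 0 := hB.isRefl _ _ ((hW.le w.2) s hs)
  have hww' : B w w' = 0 := LinearMap.congr_fun hw ⟨w', hw'⟩
  rw [map_add, hws, hww', add_zero, LinearMap.zero_apply]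

theorem BlockPairing.snd_one {μ : ℂ} {e : ℕ} {p q : Fin e → V}
    (h : BlockPairing A B (.H μ e) p q) : HyperbolicPairing B 1 p q where
  left_right i j := (h.snd.left_right i j).trans <|
    (CanonBlock.pen_snd_apply (.H μ e) i j).trans <| by
      simp [Matrix.one_apply, Fin.ext_iff, eq_comm]
  left_left := h.snd.left_left
  right_right := h.snd.right_right

theorem exists_isCanonGram_of_nondegenerate {V : Type*} [AddCommGroup V] [Module ℂ V]
    [FiniteDimensional ℂ V] {A B : V →ₗ[ℂ] V →ₗ[ℂ] ℂ} (hA : A.IsAlt) (hB : B.IsAlt)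
    (hB0 : ∀ x, B x = 0 → x = 0) :
    ∃ (E : Multiset (ℂ × ℕ)) (l : List CanonBlock) (x : CanonIdx l → V),
      (l : Multiset CanonBlock) = SkewType.blocks ⟨0, E⟩ ∧
      2 * jordanSize E = Module.finrank ℂ V ∧ IsCanonGram A B l x ∧
      Submodule.span ℂ (Set.range x) = ⊤ := by
  induction hn : Module.finrank ℂ V using Nat.strong_induction_on generalizing V with
  | _ n ih =>
    rcases subsingleton_or_nontrivial V with hV | hV
    · refine ⟨0, [], Empty.elim, by simp [SkewType.blocks], ?_, ⟨?_, ?_⟩, Subsingleton.elim _ _⟩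
      · rw [← hn, Module.finrank_zero_of_subsingleton]; rfl
      all_goals ext i; exact i.elim
    obtain ⟨μ, e, p, q, he, h⟩ := exists_splitBlock hA hB hB0
    have hpq : HyperbolicPairing B 1 p q := h.snd_one
    set S := Submodule.span ℂ (Set.range (Sum.elim p q))
    set W := LinearMap.BilinForm.orthogonal B S
    have hcompl : IsCompl S W :=
      (LinearMap.BilinForm.isCompl_orthogonal_iff_disjoint hB.isRefl).2 (hpq.disjoint_orthogonal hB)
    have hBW : ∀ w ∈ W, (∀ i, B w (p i) = 0) ∧ ∀ j, B w (q j) = 0 := fun w hw ↦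
      ⟨fun i ↦ apply_eq_zero_of_mem_orthogonal hB hw (.inl i),
        fun j ↦ apply_eq_zero_of_mem_orthogonal hB hw (.inr j)⟩
    have hdim : 2 * e + Module.finrank ℂ W = n := by
      rw [← hn, ← Submodule.finrank_add_eq_of_isCompl hcompl,
        finrank_span_eq_card (hpq.linearIndependent hB)]
      simp [two_mul]
    obtain ⟨E, l, x, hl, hE, hx, hspan⟩ := ih (Module.finrank ℂ W) (by omega)
      (A := A.domRestrict₁₂ W W) (B := B.domRestrict₁₂ W W) (fun x ↦ hA x) (fun x ↦ hB x)
      (domRestrict_orthogonal_nondegenerate hB hB0 rfl hcompl) rfl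
    have hAW := fun j ↦ h.apply_eq_zero (x j) (hBW _ (x j).2).1 (hBW _ (x j).2).2
    refine ⟨(μ, e) ::ₘ E, .H μ e :: l, Sum.elim (Sum.elim p q) fun j ↦ x j, ?_, ?_, ?_, ?_⟩
    · rw [← Multiset.cons_coe, hl]; simp [SkewType.blocks]
    · simp only [jordanSize, Multiset.map_cons, Multiset.sum_cons] at hE ⊢; omega
    · exact h.isCanonGram_cons hA hB ⟨hx.fst, hx.snd⟩ (fun j ↦ (hAW j).1) (fun j ↦ (hAW j).2)
        (fun j ↦ (hBW _ (x j).2).1) (fun j ↦ (hBW _ (x j).2).2)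
    · refine top_le_iff.1 (hcompl.sup_eq_top.ge.trans (sup_le (Submodule.span_mono ?_)
        ((le_span_coe_of_span_eq_top hspan).trans (Submodule.span_mono ?_))))
      · rintro _ ⟨i, rfl⟩; exact ⟨Sum.inl i, rfl⟩
      · rintro _ ⟨j, rfl⟩; exact ⟨Sum.inr j, rfl⟩

section Chains

variable {ι : Type*} {k : ι → ℕ} {u v : ι → ℕ → V} {R : Submodule ℂ V}

/-- The chains with indices in `L`, followed by the family `x`. -/
def chainFamily (k : ι → ℕ) (u v : ι → ℕ → V) (x : CanonIdx l → V) :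
    ∀ L : List ι, CanonIdx (L.map (fun t ↦ CanonBlock.M (k t)) ++ l) → V
  | [] => x
  | t :: L => Sum.elim (Sum.elim (fun i : Fin (k t) ↦ u t i) fun j : Fin (k t + 1) ↦ v t j)
      (chainFamily k u v x L)

omit [AddCommGroup V] [Module ℂ V] in
theorem forall_chainFamily {Q : V → Prop} (x : CanonIdx l → V) (L : List ι) :
    (∀ j, Q (chainFamily k u v x L j)) ↔
      (∀ t ∈ L, (∀ i < k t, Q (u t i)) ∧ ∀ i ≤ k t, Q (v t i)) ∧ ∀ j, Q (x j) := by
  induction L with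
  | nil => simp; rfl
  | cons t L ih =>
    rw [List.forall_mem_cons, and_assoc, ← ih]
    exact Sum.forall.trans (and_congr_left' (Sum.forall.trans (and_congr Fin.forall_iff
      (Fin.forall_iff.trans (forall_congr' fun _ ↦
        ⟨fun h hk ↦ h (Nat.lt_succ_iff.2 hk), fun h hk ↦ h (Nat.lt_succ_iff.1 hk)⟩)))))

variable [Fintype ι] [DecidableEq ι] (D : ChainDecomposition A B k u v R)

include D in
theorem ChainDecomposition.blockPairing (t : ι) :
    BlockPairing A B (.M (k t)) (fun i : Fin (k t) ↦ u t i) (fun j : Fin (k t + 1) ↦ v t j) where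
  fst.left_right i j := (D.fst.u_v t t i j i.2 (Nat.lt_succ_iff.1 j.2)).trans <|
    (show _ = _ by simp [CanonBlock.eigenvalue]).trans
      (CanonBlock.pen_fst_apply (.M (k t)) i j).symm
  fst.left_left i j := D.fst.u_u t t i j i.2 j.2
  fst.right_right i j := D.fst.v_v t t i j (Nat.lt_succ_iff.1 i.2) (Nat.lt_succ_iff.1 j.2)
  snd.left_right i j := (D.snd.u_v t t i j i.2 (Nat.lt_succ_iff.1 j.2)).trans <|
    (show _ = _ by simp).trans (CanonBlock.pen_snd_apply (.M (k t)) i j).symm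
  snd.left_left i j := D.snd.u_u t t i j i.2 j.2
  snd.right_right i j := D.snd.v_v t t i j (Nat.lt_succ_iff.1 i.2) (Nat.lt_succ_iff.1 j.2)

omit [Fintype ι] in
theorem ChainPairing.apply_chainFamily {F : V →ₗ[ℂ] V →ₗ[ℂ] ℂ} {c : ℕ}
    (P : ChainPairing F c k u v R) (hF : F.IsAlt) {x : CanonIdx l → V} (hx : ∀ j, x j ∈ R)
    {t : ι} {L : List ι} (ht : t ∉ L) :
    (∀ j, ∀ i < k t, F (chainFamily k u v x L j) (u t i) = 0) ∧
      ∀ j, ∀ i ≤ k t, F (chainFamily k u v x L j) (v t i) = 0 := by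
  have hne : ∀ {s}, s ∈ L → s ≠ t := fun hs h ↦ ht (h ▸ hs)
  constructor
  · refine (forall_chainFamily (Q := fun w ↦ ∀ i < k t, F w (u t i) = 0) x L).2
      ⟨fun s hs ↦ ⟨fun i' hi' i hi ↦ P.u_u s t i' i hi' hi,
      fun i' hi' i hi ↦ ?_⟩, fun j i hi ↦ P.mem_u _ (hx j) t i hi⟩
    rw [P.v_u hF hi' hi, if_neg fun h ↦ hne hs h.1.symm]
  · refine (forall_chainFamily (Q := fun w ↦ ∀ i ≤ k t, F w (v t i) = 0) x L).2
      ⟨fun s hs ↦ ⟨fun i' hi' i hi ↦ ?_,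
      fun i' hi' i hi ↦ P.v_v s t i' i hi' hi⟩, fun j i hi ↦ P.mem_v _ (hx j) t i hi⟩
    rw [P.u_v s t i' i hi' hi, if_neg fun h ↦ hne hs h.1]

include D in
theorem ChainDecomposition.isCanonGram_chainFamily (hA : A.IsAlt) (hB : B.IsAlt)
    {x : CanonIdx l → V} (hxR : ∀ j, x j ∈ R) (hx : IsCanonGram A B l x) {L : List ι}
    (hL : L.Nodup) : IsCanonGram A B _ (chainFamily k u v x L) := by
  induction L with
  | nil => exact hx
  | cons t L ih =>
    obtain ⟨htL, hL⟩ := List.nodup_cons.1 hL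
    have hAt := D.fst.apply_chainFamily hA hxR htL
    have hBt := D.snd.apply_chainFamily hB hxR htL
    exact (D.blockPairing t).isCanonGram_cons hA hB (ih hL) (fun j i ↦ hAt.1 j i i.2)
      (fun j i ↦ hAt.2 j i (Nat.lt_succ_iff.1 i.2)) (fun j i ↦ hBt.1 j i i.2)
      (fun j i ↦ hBt.2 j i (Nat.lt_succ_iff.1 i.2))

include D in
theorem ChainDecomposition.exists_isCanonGram [FiniteDimensional ℂ V] (hA : A.IsAlt)
    (hB : B.IsAlt) : ∃ (T : SkewType ℂ) (l : List CanonBlock) (x : CanonIdx l → V),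
      (l : Multiset CanonBlock) = T.blocks ∧ T.size = Module.finrank ℂ V ∧ IsCanonGram A B l x ∧
      Submodule.span ℂ (Set.range x) = ⊤ := by
  obtain ⟨E, l, x, hl, hE, hx, hspan⟩ := exists_isCanonGram_of_nondegenerate
    (A := A.domRestrict₁₂ R R) (B := B.domRestrict₁₂ R R) (fun x ↦ hA x) (fun x ↦ hB x)
    fun r hr ↦ Subtype.ext (D.nondegenerate r r.2 fun s hs ↦ LinearMap.congr_fun hr ⟨s, hs⟩)
  set y := chainFamily k u v (fun j ↦ (x j : V)) Finset.univ.toList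
  have hy : (∀ t ∈ Finset.univ.toList, (∀ i < k t, u t i ∈ Submodule.span ℂ (Set.range y)) ∧
      ∀ i ≤ k t, v t i ∈ Submodule.span ℂ (Set.range y)) ∧
      ∀ j, (x j : V) ∈ Submodule.span ℂ (Set.range y) :=
    (forall_chainFamily _ _).1 fun j ↦ Submodule.subset_span ⟨j, rfl⟩
  refine ⟨⟨Finset.univ.val.map k, E⟩, _, y, ?_, ?_, D.isCanonGram_chainFamily hA hB
    (fun j ↦ (x j).2) ⟨hx.fst, hx.snd⟩ (Finset.nodup_toList _), D.eq_top _
      (fun t ↦ (hy.1 t (by simp)).1) (fun t ↦ (hy.1 t (by simp)).2)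
      ((le_span_coe_of_span_eq_top hspan).trans (Submodule.span_le.2 ?_))⟩
  · rw [← Multiset.coe_add, hl, ← Multiset.map_coe, Finset.coe_toList]
    simp [SkewType.blocks, Multiset.map_map]
  · rw [D.finrank_eq, ← hE, Finset.sum_add_distrib, ← Finset.mul_sum]
    simp [SkewType.size]
  · rintro _ ⟨j, rfl⟩
    exact hy.2 j

end Chains

end Gram

/-! ### Existence of the canonical form -/

theorem exists_mul_mul_eq_self {K m n : Type*} [Field K] [Fintype m] [Fintype n]
    (B : Matrix m n K) : ∃ L : Matrix n m K, B * L * B = B := by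
  classical
  obtain ⟨g, hg⟩ := B.mulVecLin.rangeRestrict.exists_rightInverse_of_surjective
    B.mulVecLin.range_rangeRestrict
  obtain ⟨f, hf⟩ := LinearMap.exists_extend g
  refine ⟨LinearMap.toMatrix' f, Matrix.toLin'.injective (LinearMap.ext fun y ↦ ?_)⟩
  have hfy : f (B *ᵥ y) = g ⟨B *ᵥ y, y, rfl⟩ := LinearMap.congr_fun hf ⟨B *ᵥ y, y, rfl⟩
  have hgy : B *ᵥ g ⟨B *ᵥ y, y, rfl⟩ = B *ᵥ y :=
    congrArg Subtype.val (LinearMap.congr_fun hg ⟨B *ᵥ y, y, rfl⟩)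
  simp [hfy, hgy]

theorem mulVec_eq_zero_of_rank_le {K l m n : Type*} [Field K] [Fintype m] [Fintype n]
    {C : Matrix l m K} {M : Matrix m n K} (h : M.rank ≤ (C * M).rank) {w : n → K}
    (hw : (C * M) *ᵥ w = 0) : M *ᵥ w = 0 := by
  have hle : LinearMap.ker M.mulVecLin ≤ LinearMap.ker (C * M).mulVecLin := by
    rw [Matrix.mulVecLin_mul]
    exact LinearMap.ker_le_ker_comp _ _
  have hM := LinearMap.finrank_range_add_finrank_ker M.mulVecLin
  have hCM := LinearMap.finrank_range_add_finrank_ker (C * M).mulVecLin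
  have hker : LinearMap.ker M.mulVecLin = LinearMap.ker (C * M).mulVecLin :=
    Submodule.eq_of_le_of_finrank_le hle (by unfold Matrix.rank at h; omega)
  exact hker.ge (show w ∈ LinearMap.ker (C * M).mulVecLin from hw)

section Chains

variable {K ι : Type*} [Fintype ι] [DecidableEq ι]

-- Up to the factor `s`, the vector is `(B + sA)w` for `w = adj(1 + sLA)z`: since `B L` does not
-- lower the rank of `B + sA`, it is injective on its range, and `B L (B + sA) w` is a multiple of
-- `B z = 0`.
theorem mulVec_adjugate_mulVec_eq_zero [Field K] {A B L : Matrix ι ι K} {s : K}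
    (hL : B * L * B = B) (hs : s ≠ 0) (hdet : (1 + s • (L * A)).det ≠ 0)
    (h : (B + s • A).rank ≤ B.rank) {z : ι → K} (hz : B *ᵥ z = 0) :
    (A - B * L * A) *ᵥ (adjugate (1 + s • (L * A)) *ᵥ z) = 0 := by
  set w := adjugate (1 + s • (L * A)) *ᵥ z
  have hM : B * L * (B + s • A) = B * (1 + s • (L * A)) := by
    simp only [Matrix.mul_add, hL, Matrix.mul_one, Matrix.mul_smul, Matrix.mul_assoc]
  have hBLw : (B * L * (B + s • A)) *ᵥ w = 0 := by
    rw [hM, ← mulVec_mulVec, mulVec_mulVec _ (1 + s • (L * A)), mul_adjugate, smul_mulVec,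
      one_mulVec, mulVec_smul, hz, smul_zero]
  have hw : (B + s • A) *ᵥ w = 0 := mulVec_eq_zero_of_rank_le (by
    rwa [hM, rank_mul_eq_left_of_isUnit_det _ _ (isUnit_iff_ne_zero.2 hdet)]) hBLw
  have hdiff : (B + s • A) - B * L * (B + s • A) = s • (A - B * L * A) := by
    rw [Matrix.mul_add, hL, Matrix.mul_smul, smul_sub]
    abel
  rw [← smul_eq_zero_iff_right hs, ← smul_mulVec, ← hdiff, sub_mulVec, hw, hBLw, sub_zero]

variable [NontriviallyNormedField K] {D g : Matrix ι ι K} {z : ι → K}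

theorem mulVec_eq_zero_of_eventually
    (h : ∀ᶠ s : K in 𝓝[≠] 0, g *ᵥ (adjugate (1 + s • D) *ᵥ z) = 0) : g *ᵥ z = 0 := by
  have hc : Continuous fun s : K ↦ g *ᵥ (adjugate (1 + s • D) *ᵥ z) := by fun_prop
  have hlim := (hc.tendsto 0).mono_left (nhdsWithin_le_nhds (s := {0}ᶜ))
  simpa using tendsto_nhds_unique hlim (tendsto_const_nhds.congr' (h.mono fun s hs ↦ hs.symm))

theorem mulVec_pow_mulVec_eq_zero_of_eventually
    (h : ∀ᶠ s : K in 𝓝[≠] 0, g *ᵥ (adjugate (1 + s • D) *ᵥ z) = 0) (i : ℕ) :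
    g *ᵥ (D ^ i *ᵥ z) = 0 := by
  induction i generalizing z with
  | zero => simpa using mulVec_eq_zero_of_eventually h
  | succ i ih =>
    rw [pow_succ, ← mulVec_mulVec]
    refine ih ?_
    filter_upwards [h, self_mem_nhdsWithin] with s hs hs0
    -- `adj(1 + sD) (1 + sD) z` is a multiple of `z`.
    have hadj := congrArg (fun M ↦ g *ᵥ (M *ᵥ z)) (adjugate_mul (1 + s • D))
    simp only [Matrix.mul_add, Matrix.mul_one, Matrix.mul_smul, add_mulVec, smul_mulVec,
      mulVec_add, mulVec_smul, hs, mulVec_eq_zero_of_eventually h, one_mulVec, smul_zero,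
      zero_add] at hadj
    rw [mulVec_mulVec _ _ D]
    exact (smul_eq_zero.1 hadj).resolve_left hs0

omit [DecidableEq ι] in
theorem exists_chain_of_rank_le {A B : Matrix ι ι K} (h : ∀ s : K, (B + s • A).rank ≤ B.rank)
    (hz : B *ᵥ z = 0) : ∃ v : ℕ → ι → K, v 0 = z ∧ ∀ i, B *ᵥ v (i + 1) = A *ᵥ v i := by
  classical
  obtain ⟨L, hL⟩ := exists_mul_mul_eq_self B
  have hdet : ∀ᶠ s : K in 𝓝[≠] 0, (1 + s • (L * A)).det ≠ 0 := by
    have hc : Continuous fun s : K ↦ (1 + s • (L * A)).det := by fun_prop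
    exact nhdsWithin_le_nhds (hc.continuousAt.eventually_ne (by simp))
  have hg (i : ℕ) : (A - B * L * A) *ᵥ ((L * A) ^ i *ᵥ z) = 0 := by
    refine mulVec_pow_mulVec_eq_zero_of_eventually ?_ i
    filter_upwards [hdet, self_mem_nhdsWithin] with s hs hs0
    exact mulVec_adjugate_mulVec_eq_zero hL hs0 hs (h s) hz
  refine ⟨fun i ↦ (L * A) ^ i *ᵥ z, by simp, fun i ↦ ?_⟩
  have hAi := sub_eq_zero.1 ((sub_mulVec ..).symm.trans (hg i))
  simp only [hAi, pow_succ', mulVec_mulVec, ← Matrix.mul_assoc]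

theorem toBilin'_apply_eq_iff {K ι : Type*} [CommSemiring K] [Fintype ι] [DecidableEq ι]
    {A B : Matrix ι ι K} {x y : ι → K} :
    Matrix.toBilin' A x = Matrix.toBilin' B y ↔ Aᵀ *ᵥ x = Bᵀ *ᵥ y := by
  rw [mulVec_transpose, mulVec_transpose]
  refine ⟨fun h ↦ dotProduct_eq _ _ fun w ↦ ?_, fun h ↦ LinearMap.ext fun w ↦ ?_⟩
  · simpa only [Matrix.toBilin'_apply', dotProduct_mulVec] using LinearMap.congr_fun h w
  · simp only [Matrix.toBilin'_apply', dotProduct_mulVec, h]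

theorem hasChains_toBilin' {A B : Matrix ι ι K} (h : ∀ s : K, (B + s • A).rank ≤ B.rank) :
    HasChains (Matrix.toBilin' A) (Matrix.toBilin' B) := by
  intro z hz
  obtain ⟨v, hv0, hv⟩ := exists_chain_of_rank_le (A := Aᵀ) (B := Bᵀ) (z := z)
    (fun s ↦ by
      rw [← transpose_smul, ← transpose_add, rank_transpose, rank_transpose]
      exact h s)
    (by
      rw [← map_zero (Matrix.toBilin' B), toBilin'_apply_eq_iff] at hz
      simpa using hz)
  exact ⟨v, hv0, fun i ↦ toBilin'_apply_eq_iff.2 (hv i)⟩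

theorem isAlt_toBilin' {K : Type*} [Field K] [NeZero (2 : K)] {M : Matrix ι ι K}
    (hM : Mᵀ = -M) : (Matrix.toBilin' M).IsAlt := by
  intro x
  have hneg : x ⬝ᵥ M *ᵥ x = -(x ⬝ᵥ M *ᵥ x) := by
    nth_rw 1 [dotProduct_mulVec, ← mulVec_transpose, hM, neg_mulVec, neg_dotProduct,
      dotProduct_comm]
  rw [Matrix.toBilin'_apply']
  exact (mul_eq_zero.1 ((two_mul _).trans (eq_neg_iff_add_eq_zero.1 hneg))).resolve_left
    (NeZero.ne 2)

end Chains

section CanonicalForm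

variable {ι : Type*} [Fintype ι] [DecidableEq ι] {P : Pen ι ι}

theorem degC_canon_of_isCanonGram {l : List CanonBlock} {x : CanonIdx l → ι → ℂ}
    (hx : IsCanonGram (Matrix.toBilin' P.1) (Matrix.toBilin' P.2) l x)
    (hspan : Submodule.span ℂ (Set.range x) = ⊤) : DegC P (canon l) ∧ DegC (canon l) P := by
  set S : Matrix ι (CanonIdx l) ℂ := (Matrix.of x)ᵀ
  have hS : P.transform Sᵀ S = canon l := by
    have hgram (M : Matrix ι ι ℂ) :
        Sᵀ * M * S = Matrix.of fun i j ↦ Matrix.toBilin' M (x i) (x j) := by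
      ext i j
      rw [Matrix.mul_assoc, Matrix.of_apply, Matrix.toBilin'_apply']
      rfl
    exact Prod.ext ((hgram _).trans hx.fst) ((hgram _).trans hx.snd)
  have hsurj : Function.Surjective S.mulVec :=
    LinearMap.range_eq_top.1 ((Matrix.range_mulVecLin S).trans hspan)
  obtain ⟨T, hT⟩ := Matrix.mulVec_surjective_iff_exists_right_inverse.1 hsurj
  refine ⟨hS ▸ degC_transform P S, ?_⟩
  have hP := degC_transform (canon l) T
  rwa [← hS, Pen.transform_transform, ← transpose_mul, hT, transpose_one,
    Pen.transform_one_one, hS] at hP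

omit [DecidableEq ι] in
theorem exists_degC_pen (hA : P.1ᵀ = -P.1) (hB : P.2ᵀ = -P.2)
    (h : ∀ s : ℂ, (P.2 + s • P.1).rank ≤ P.2.rank) :
    ∃ T : SkewType ℂ, T.size = Fintype.card ι ∧ DegC P T.pen ∧ DegC T.pen P := by
  classical
  have hA := isAlt_toBilin' hA
  have hB := isAlt_toBilin' hB
  obtain ⟨_, _, _, _, _, _, _, D⟩ :=
    exists_chainDecomposition hA hB (hasChains_toBilin' h)
  obtain ⟨T, l, x, hl, hsize, hx, hspan⟩ := D.exists_isCanonGram hA hB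
  obtain ⟨hPl, hlP⟩ := degC_canon_of_isCanonGram hx hspan
  have hperm : l.Perm T.blocks.toList := by rw [← Multiset.coe_eq_coe, hl, Multiset.coe_toList]
  exact ⟨T, hsize.trans (Module.finrank_fintype_fun_eq_card ℂ),
    hPl.trans (degC_canon_of_perm hperm), (degC_canon_of_perm hperm.symm).trans hlP⟩

end CanonicalForm

/-! ### The normal rank as a generic rank -/

open Polynomial

section Minors

variable {K m n : Type*} [Field K] [Finite m] [Fintype n]

theorem exists_linearIndependent_rows (M : Matrix m n K) :
    ∃ f : Fin M.rank → m, LinearIndependent K fun i ↦ M (f i) := by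
  have := Fintype.ofFinite m
  obtain ⟨κ, a, ha, hspan, hli⟩ := exists_linearIndependent' K M.row
  have : Fintype κ := @Fintype.ofFinite κ (Finite.of_injective a ha)
  have hcard : Fintype.card κ = M.rank := by
    rw [Matrix.rank_eq_finrank_span_row, ← finrank_span_eq_card hli, hspan]
  let e := (Fintype.equivFinOfCardEq hcard).symm
  exact ⟨a ∘ e, hli.comp e e.injective⟩

theorem exists_det_submatrix_ne_zero (M : Matrix m n K) :
    ∃ (f : Fin M.rank → m) (g : Fin M.rank → n), (M.submatrix f g).det ≠ 0 := by
  have := Fintype.ofFinite m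
  obtain ⟨f, hf⟩ := exists_linearIndependent_rows M
  have hf : LinearIndependent K (M.submatrix f id).row := hf
  obtain ⟨g, hg⟩ := exists_linearIndependent_rows (M.submatrix f id)ᵀ
  have hrank : (M.submatrix f id)ᵀ.rank = M.rank := by
    rw [rank_transpose, hf.rank_matrix, Fintype.card_fin]
  refine ⟨f, g ∘ Fin.cast hrank.symm, ?_⟩
  have hli : LinearIndependent K (M.submatrix f (g ∘ Fin.cast hrank.symm))ᵀ.row :=
    hg.comp _ (Fin.cast_injective _)
  rw [← det_transpose, ← isUnit_iff_ne_zero, ← isUnit_iff_isUnit_det]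
  exact linearIndependent_rows_iff_isUnit.1 hli

omit [Finite m] in
theorem card_le_rank_of_det_submatrix_ne_zero {κ : Type*} [Fintype κ] [DecidableEq κ]
    {M : Matrix m n K} {f : κ → m} {g : κ → n} (h : (M.submatrix f g).det ≠ 0) :
    Fintype.card κ ≤ M.rank := by
  have hu : IsUnit (M.submatrix f g) := (isUnit_iff_isUnit_det _).2 h.isUnit
  exact (rank_of_isUnit _ hu).ge.trans (rank_submatrix_le M f g)

theorem det_submatrix_map {R S κ m n : Type*} [CommRing R] [CommRing S] [Fintype κ]
    [DecidableEq κ] (φ : R →+* S) (M : Matrix m n R) (f : κ → m) (g : κ → n) :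
    ((M.map φ).submatrix f g).det = φ (M.submatrix f g).det := by
  rw [submatrix_map, ← RingHom.mapMatrix_apply, ← RingHom.map_det]

theorem rank_map_le_rank_map_of_injective {R L : Type*} [CommRing R] [Field L] (M : Matrix m n R)
    (φ : R →+* K) {ψ : R →+* L} (hψ : Function.Injective ψ) :
    (M.map φ).rank ≤ (M.map ψ).rank := by
  obtain ⟨f, g, h⟩ := exists_det_submatrix_ne_zero (M.map φ)
  have hψdet : ((M.map ψ).submatrix f g).det ≠ 0 := by
    rw [det_submatrix_map] at h ⊢
    exact (map_ne_zero_iff ψ hψ).2 (ne_zero_of_map h)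
  simpa only [Fintype.card_fin] using card_le_rank_of_det_submatrix_ne_zero hψdet

theorem eventually_rank_map_eval_eq {L : Type*} [Field L] (M : Matrix m n K[X]) {ψ : K[X] →+* L}
    (hψ : Function.Injective ψ) :
    ∀ᶠ c in cofinite, (M.map (evalRingHom c)).rank = (M.map ψ).rank := by
  obtain ⟨f, g, h⟩ := exists_det_submatrix_ne_zero (M.map ψ)
  rw [det_submatrix_map] at h
  filter_upwards [(finite_setOfPred_isRoot (ne_zero_of_map h)).compl_mem_cofinite] with c hc
  refine (rank_map_le_rank_map_of_injective M _ hψ).antisymm ?_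
  have hdet : ((M.map (evalRingHom c)).submatrix f g).det ≠ 0 := by
    rw [det_submatrix_map]
    exact hc
  simpa only [Fintype.card_fin] using card_le_rank_of_det_submatrix_ne_zero hdet

end Minors

section NormalRank

variable {m n : ℕ} (P : Pencil m n)

/-- The pencil `A - λ B` as a matrix over the polynomial ring `ℂ[λ]`. -/
def polyMatrix : Matrix (Fin m) (Fin n) ℂ[X] :=
  Matrix.of fun i j ↦ C (P.1 i j) - X * C (P.2 i j)

theorem polyMatrix_map_algebraMap :
    (polyMatrix P).map (algebraMap ℂ[X] (RatFunc ℂ)) = toRatFuncMatrix P := by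
  ext i j
  simp [toRatFuncMatrix, polyMatrix, -X_mul_C]

theorem polyMatrix_map_eval (c : ℂ) : (polyMatrix P).map (evalRingHom c) = P.1 - c • P.2 := by
  ext i j
  simp [polyMatrix, -X_mul_C]

theorem rank_sub_smul_le_nrk (c : ℂ) : (P.1 - c • P.2).rank ≤ nrk P := by
  rw [← polyMatrix_map_eval, nrk, ← polyMatrix_map_algebraMap]
  exact rank_map_le_rank_map_of_injective _ _ (RatFunc.algebraMap_injective ℂ)

theorem eventually_rank_sub_smul_eq_nrk : ∀ᶠ c : ℂ in cofinite, (P.1 - c • P.2).rank = nrk P := by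
  simp only [← polyMatrix_map_eval, nrk, ← polyMatrix_map_algebraMap]
  exact eventually_rank_map_eval_eq _ (RatFunc.algebraMap_injective ℂ)

theorem nrk_eq_of_congruent {P Q : Pencil n n} (h : Pencil.Congruent P Q) : nrk P = nrk Q := by
  obtain ⟨S, hS, hP, hQ⟩ := h
  obtain ⟨c, hPc, hQc⟩ :=
    ((eventually_rank_sub_smul_eq_nrk P).and (eventually_rank_sub_smul_eq_nrk Q)).exists
  have hS := (isUnit_iff_isUnit_det S).1 hS
  have htransform : Q.1 - c • Q.2 = Sᵀ * (P.1 - c • P.2) * S := by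
    simp [← hP, ← hQ, Matrix.mul_sub, Matrix.sub_mul]
  rw [← hPc, ← hQc, htransform, rank_mul_eq_left_of_isUnit_det _ _ hS,
    rank_mul_eq_right_of_isUnit_det _ _ (isUnit_det_transpose S hS)]

end NormalRank

theorem Pen.chainRank_one_one {m n : Type*} [Fintype n] (X : Pen m n) :
    X.chainRank 1 1 = X.1.rank := by
  let e₁ : (n → ℂ) ≃ₗ[ℂ] Matrix n (Fin 1) ℂ :=
    LinearEquiv.piCongrRight fun _ ↦ (LinearEquiv.funUnique (Fin 1) ℂ ℂ).symm
  let e₂ : (m → ℂ) ≃ₗ[ℂ] Matrix m (Fin 1) ℂ :=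
    LinearEquiv.piCongrRight fun _ ↦ (LinearEquiv.funUnique (Fin 1) ℂ ℂ).symm
  have hshift : (shiftPen 1 1).1 = 0 := by
    ext i j
    simp [shiftPen, superdiag]
  have hcomp : X.chainMap 1 1 ∘ₗ e₁.toLinearMap = e₂.toLinearMap ∘ₗ X.1.mulVecLin := by
    refine LinearMap.ext fun v ↦ ?_
    simp only [LinearMap.comp_apply, Pen.chainMap_apply, hshift, shiftPen_self_snd,
      Matrix.mul_zero, Matrix.mul_one, sub_zero]
    rfl
  rw [Pen.chainRank, Matrix.rank, ← LinearEquiv.finrank_map_eq e₂, ← LinearMap.range_comp, ← hcomp,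
    LinearMap.range_comp_of_range_eq_top _ e₁.range]

/-! ### Orbit closures and canonical types -/

theorem eventually_isUnit_add_smul_one {K ι : Type*} [NontriviallyNormedField K] [Fintype ι]
    [DecidableEq ι] (S : Matrix ι ι K) : ∀ᶠ ε : K in 𝓝[≠] 0, IsUnit (S + ε • 1) := by
  have hfin := finite_setOfPred_isRoot (-S).charpoly_monic.ne_zero
  filter_upwards [nhdsNE_le_cofinite 0 hfin.compl_mem_cofinite] with ε hε
  rw [isUnit_iff_isUnit_det, isUnit_iff_ne_zero]
  intro hdet
  refine hε (show eval ε _ = 0 from ?_)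
  rw [eval_charpoly, ← hdet, sub_neg_eq_add, add_comm, scalar_apply, smul_one_eq_diagonal]

section Orbits

variable {n : ℕ} {P Q : Pencil n n}

theorem transform_mem_closure_orbC (P : Pencil n n) (S : Matrix (Fin n) (Fin n) ℂ) :
    Pen.transform Sᵀ S P ∈ closure (Pencil.orbC P) := by
  have hcont : Continuous fun ε : ℂ ↦ Pen.transform (S + ε • 1)ᵀ (S + ε • 1) P := by
    unfold Pen.transform
    fun_prop
  have hlim := (hcont.tendsto 0).mono_left (nhdsWithin_le_nhds (s := {0}ᶜ))
  rw [zero_smul, add_zero] at hlim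
  refine mem_closure_of_tendsto hlim ?_
  filter_upwards [eventually_isUnit_add_smul_one S] with ε hε
  exact ⟨_, hε, rfl, rfl⟩

theorem degC_iff_orbC_subset_closure : DegC P Q ↔ Pencil.orbC Q ⊆ closure (Pencil.orbC P) := by
  constructor
  · rintro h R ⟨S, -, h₁, h₂⟩
    have hR : Pen.transform Sᵀ S Q = R := Prod.ext h₁ h₂
    refine closure_minimal ?_ isClosed_closure (hR ▸ h.trans (degC_transform Q S))
    rintro _ ⟨S, rfl⟩
    exact transform_mem_closure_orbC P S
  · intro h
    have hQ : Q ∈ Pencil.orbC Q := ⟨1, isUnit_one, by simp, by simp⟩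
    refine closure_mono ?_ (h hQ)
    rintro _ ⟨S, -, h₁, h₂⟩
    exact ⟨S, Prod.ext h₁ h₂⟩

end Orbits

section CanonicalTypes

variable {n : ℕ} {c : ℂ} {P P₁ P₂ : Pencil n n} {T T₁ T₂ : SkewType ℂ}

/-- The pencil `B - λ (A - c B)`, in which the eigenvalue `c` of `A - λ B` has been moved to `∞`. -/
def invertAt (c : ℂ) {m n : Type*} (X : Pen m n) : Pen m n := X.mobius 0 1 1 (-c)

theorem invertAt_eq {m n : Type*} (X : Pen m n) : invertAt c X = (X.2, X.1 - c • X.2) := by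
  simp [invertAt, Pen.mobius, sub_eq_add_neg]

theorem mobius_invertAt {m n : Type*} (X : Pen m n) : (invertAt c X).mobius c 1 1 0 = X := by
  simp [invertAt, Pen.mobius_mobius, Pen.mobius_one_zero_zero_one]

theorem invertAt_mobius {m n : Type*} (X : Pen m n) : invertAt c (X.mobius c 1 1 0) = X := by
  simp [invertAt, Pen.mobius_mobius, Pen.mobius_one_zero_zero_one]

/-- `T` is the type of the canonical form of `invertAt c P`. Since the canonical pencils have no
infinite eigenvalues, this requires that `c` be not an eigenvalue of `P`. -/
structure HasTypeAt (c : ℂ) (P : Pencil n n) (T : SkewType ℂ) : Prop where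
  size_eq : T.size = n
  degC_pen : DegC (invertAt c P) T.pen
  pen_degC : DegC T.pen (invertAt c P)

theorem HasTypeAt.degC_iff (h₁ : HasTypeAt c P₁ T₁) (h₂ : HasTypeAt c P₂ T₂) :
    DegC P₁ P₂ ↔ DegC T₁.pen T₂.pen := by
  refine ⟨fun h ↦ h₁.pen_degC.trans ((h.mobius 0 1 1 (-c)).trans h₂.degC_pen), fun h ↦ ?_⟩
  have hP := (h₁.degC_pen.trans (h.trans h₂.pen_degC)).mobius c 1 1 0
  rwa [mobius_invertAt, mobius_invertAt] at hP

theorem HasTypeAt.chainDim_mobius (h : HasTypeAt c P T) (ν : ℂ) (s : ℕ) :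
    ((invertAt c P).mobius 1 (-ν) 0 1).chainDim s s =
      T.ind.card * s + 2 * jordanSum T.jor ν s := by
  have hcard : Fintype.card (CanonIdx T.blocks.toList) = Fintype.card (Fin n) := by
    rw [T.card_canonIdx_blocks, h.size_eq, Fintype.card_fin]
  rw [← chainDim_pen_mobius]
  exact ((h.degC_pen.degE.mobius _ _ _ _).chainDim_le hcard.symm s s).antisymm
    ((h.pen_degC.degE.mobius _ _ _ _).chainDim_le hcard s s)

theorem HasTypeAt.rank_add_card_ind (h : HasTypeAt c P T) {ν : ℂ} (hν : ν ≠ 0)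
    (hT : ∀ x ∈ T.jor, x.1 ≠ ν) : (P.1 - (c + ν⁻¹) • P.2).rank + T.ind.card = n := by
  have hfst : ((invertAt c P).mobius 1 (-ν) 0 1).1 = -ν • (P.1 - (c + ν⁻¹) • P.2) := by
    rw [invertAt_eq]
    ext i j
    simp only [Pen.mobius, Matrix.add_apply, Matrix.smul_apply, Matrix.sub_apply, smul_eq_mul]
    field_simp
    ring
  have hjor : jordanSum T.jor ν 1 = 0 := by
    simp only [jordanSum, Multiset.sum_eq_zero_iff, Multiset.mem_map]
    rintro _ ⟨x, hx, rfl⟩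
    exact if_neg (hT x hx)
  have hchain := ((invertAt c P).mobius 1 (-ν) 0 1).chainRank_add_chainDim 1 1
  rw [Pen.chainRank_one_one, hfst, h.chainDim_mobius, hjor,
    rank_smul_of_mem_nonZeroDivisors _ (mem_nonZeroDivisors_of_ne_zero (neg_ne_zero.2 hν))]
    at hchain
  simpa using hchain

theorem HasTypeAt.nrk_add_card_ind (h : HasTypeAt c P T) : nrk P + T.ind.card = n := by
  have hinj : Function.Injective fun t : ℂ ↦ (t - c)⁻¹ := inv_injective.comp sub_left_injective
  have hfin := (T.jor.map Prod.fst).toFinset.finite_toSet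
  have hne : ∀ᶠ t : ℂ in cofinite, t ≠ c := (Set.finite_singleton c).compl_mem_cofinite
  have hjor : ∀ᶠ t : ℂ in cofinite, (t - c)⁻¹ ∉ (T.jor.map Prod.fst).toFinset :=
    hinj.tendsto_cofinite.eventually hfin.compl_mem_cofinite
  obtain ⟨t, ht, hc, hT⟩ := ((eventually_rank_sub_smul_eq_nrk P).and (hne.and hjor)).exists
  have hrank := h.rank_add_card_ind (inv_ne_zero (sub_ne_zero.2 hc)) fun x hx hxt ↦
    hT (by simpa using ⟨x.2, hxt ▸ hx⟩)
  rwa [inv_inv, add_sub_cancel, ht] at hrank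

theorem exists_hasTypeAt (hP : P.IsSkew) (hc : (P.1 - c • P.2).rank = nrk P) :
    ∃ T, HasTypeAt c P T := by
  obtain ⟨T, hsize, h, h'⟩ := exists_degC_pen (P := invertAt c P)
    (by rw [invertAt_eq]; exact hP.2)
    (by rw [invertAt_eq]; simp [hP.1, hP.2, sub_eq_add_neg, add_comm])
    (fun s ↦ by
      have hs : P.1 - c • P.2 + s • P.2 = P.1 - (c - s) • P.2 := by rw [sub_smul]; abel
      simpa only [invertAt_eq, hs, hc] using rank_sub_smul_le_nrk P (c - s))
  exact ⟨T, hsize.trans (Fintype.card_fin n), h, h'⟩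

theorem fromBlocks_transpose_eq_neg {p q r : Type*} {X : Matrix p q ℂ} {Y : Matrix r r ℂ}
    (hY : Yᵀ = -Y) :
    (fromBlocks (fromBlocks 0 X (-Xᵀ) 0) 0 0 Y)ᵀ = -fromBlocks (fromBlocks 0 X (-Xᵀ) 0) 0 0 Y := by
  simp [fromBlocks_transpose, fromBlocks_neg, hY]

theorem canon_transpose (l : List CanonBlock) :
    (canon l).1ᵀ = -(canon l).1 ∧ (canon l).2ᵀ = -(canon l).2 := by
  induction l with
  | nil => simp [canon]
  | cons b l ih =>
    exact ⟨fromBlocks_transpose_eq_neg ih.1, fromBlocks_transpose_eq_neg ih.2⟩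

theorem exists_isSkew_hasTypeAt (c : ℂ) (hT : T.size = n) :
    ∃ P : Pencil n n, P.IsSkew ∧ HasTypeAt c P T := by
  let e : Fin n ≃ CanonIdx T.blocks.toList :=
    Fintype.equivOfCardEq (by rw [T.card_canonIdx_blocks, hT, Fintype.card_fin])
  have hskew := canon_transpose T.blocks.toList
  have hfst : (T.pen.submatrix e e).1ᵀ = -(T.pen.submatrix e e).1 :=
    congrArg (Matrix.submatrix · e e) hskew.1
  have hsnd : (T.pen.submatrix e e).2ᵀ = -(T.pen.submatrix e e).2 :=
    congrArg (Matrix.submatrix · e e) hskew.2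
  refine ⟨(T.pen.submatrix e e).mobius c 1 1 0, ⟨?_, ?_⟩, hT, ?_, ?_⟩
  · simp [Pen.mobius, hfst, hsnd, add_comm]
  · simp [Pen.mobius, hfst]
  · rw [invertAt_mobius]
    simpa [Pen.submatrix] using degC_submatrix (T.pen.submatrix e e) e.symm
  · rw [invertAt_mobius]
    exact degC_submatrix _ _

theorem exists_hasTypeAt_pair (h₁ : P₁.IsSkew) (h₂ : P₂.IsSkew) :
    ∃ c T₁ T₂, HasTypeAt c P₁ T₁ ∧ HasTypeAt c P₂ T₂ := by
  obtain ⟨c, hc₁, hc₂⟩ := ((eventually_rank_sub_smul_eq_nrk P₁).and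
    (eventually_rank_sub_smul_eq_nrk P₂)).exists
  obtain ⟨T₁, hT₁⟩ := exists_hasTypeAt h₁ hc₁
  obtain ⟨T₂, hT₂⟩ := exists_hasTypeAt h₂ hc₂
  exact ⟨c, T₁, T₂, hT₁, hT₂⟩

theorem nrk_le_of_degC (h₁ : P₁.IsSkew) (h₂ : P₂.IsSkew) (h : DegC P₁ P₂) :
    nrk P₂ ≤ nrk P₁ := by
  obtain ⟨c, T₁, T₂, hT₁, hT₂⟩ := exists_hasTypeAt_pair h₁ h₂
  have hle := card_ind_le_of_degC ((hT₁.degC_iff hT₂).1 h) (hT₁.size_eq.trans hT₂.size_eq.symm)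
  have hn₁ := hT₁.nrk_add_card_ind
  have hn₂ := hT₂.nrk_add_card_ind
  omega

theorem exists_isSkew_between_of_nrk_lt (h₁ : P₁.IsSkew) (h₂ : P₂.IsSkew) (h : DegC P₁ P₂)
    (hlt : nrk P₂ < nrk P₁) :
    ∃ P : Pencil n n, P.IsSkew ∧ nrk P = nrk P₂ + 2 ∧ DegC P₁ P ∧ DegC P P₂ := by
  obtain ⟨c, T₁, T₂, hT₁, hT₂⟩ := exists_hasTypeAt_pair h₁ h₂
  have hn₁ := hT₁.nrk_add_card_ind
  have hn₂ := hT₂.nrk_add_card_ind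
  obtain ⟨T, hsize, hcard, h₁T, hT₂'⟩ := exists_degC_between ((hT₁.degC_iff hT₂).1 h)
    (hT₁.size_eq.trans hT₂.size_eq.symm) (by omega)
  obtain ⟨P, hP, hPT⟩ := exists_isSkew_hasTypeAt c (hsize.trans hT₂.size_eq)
  have hn := hPT.nrk_add_card_ind
  exact ⟨P, hP, by omega, (hT₁.degC_iff hPT).2 h₁T, (hPT.degC_iff hT₂).2 hT₂'⟩

end CanonicalTypes

end SkewPencil

open SkewPencil

/-- **Remark 3.3**: if `orbᶜ P1` covers `orbᶜ P2` for `n × n` skew-symmetric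
pencils, then `r_0(P2) - r_0(P1)` equals `0` or `2`, where `r_0(P) = n - nrk P`;
equivalently, `nrk P1 - nrk P2` equals `0` or `2`. -/
theorem nrk_drop_of_coversC {n : ℕ} (P1 P2 : Pencil n n)
    (h1 : Pencil.IsSkew P1) (h2 : Pencil.IsSkew P2)
    (hcov : Pencil.CoversC P1 P2) :
    ((n - nrk P2 = n - nrk P1) ∨ (n - nrk P2 = (n - nrk P1) + 2)) ∧
    ((nrk P1 = nrk P2) ∨ (nrk P1 = nrk P2 + 2)) := by
  obtain ⟨-, hsub, hbet⟩ := hcov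
  have hdeg := degC_iff_orbC_subset_closure.2 hsub
  have hle := nrk_le_of_degC h1 h2 hdeg
  have hwidth : nrk P1 ≤ n := Matrix.rank_le_width _
  suffices nrk P1 = nrk P2 ∨ nrk P1 = nrk P2 + 2 by omega
  refine hle.eq_or_lt.imp Eq.symm fun hlt ↦ ?_
  obtain ⟨P, hP, hrank, h1P, hP2⟩ := exists_isSkew_between_of_nrk_lt h1 h2 hdeg hlt
  have hcong : Pencil.Congruent P P1 := by
    by_contra hne
    refine hbet ⟨P, hP, hne, fun h ↦ ?_, degC_iff_orbC_subset_closure.1 h1P,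
      degC_iff_orbC_subset_closure.1 hP2⟩
    have := nrk_eq_of_congruent h
    omega
  rw [← nrk_eq_of_congruent hcong, hrank]
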